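/- Let Ω = ℤω₁ + ℤω₂ be a lattice in ℂ with Weierstrass functions ℘, ζ, quasi-periods η₁, η₂, invariants g₂, g₃, and field of endomorphisms k. The following two statements are equivalent. (A) [Split Semi-Elliptic Conjecture for Ω] For all integers s, n ≥ 0, all ℚ-linearly independent t₁, …, t_s ∈ ℂ and all k-linearly independent p₁, …, p_n ∈ ℂ ∖ Ω, the transcendence degree over ℚ of K = ℚ(t₁, …, t_s, e^{t₁}, …, e^{t_s}, g₂, g₃, p₁, …, p_n, ℘(p₁), …, ℘(p_n), ζ(p₁), …, ζ(p_n)) is at least s + 2n, unless 2πi ∈ ℚt₁ + ⋯ + ℚt_s and Ω ⊆ kp₁ + ⋯ + kp_n, in which case it is at least s + 2n − 1. (B) [Elliptico-Toric Conjecture for Ω] For all integers s, n ≥ 0, all complex numbers t₁, …, t_s and all p₁, …, p_n ∈ ℂ ∖ Ω, the transcendence degree over ℚ of K(ω₁, ω₂, η₁, η₂) is at least d_t + 4/[k:ℚ] + 2 d_p, where d_t is the dimension of the ℚ-vector subspace of ℂ/2πiℚ generated by the classes of t₁, …, t_s, and d_p is the dimension of the k-vector subspace of ℂ/(ℚω₁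 + ℚω₂) generated by the classes of p₁, …, p_n. -/

import Mathlib

/-!
Write `K` for the field in (A), `h = 2 / [k : ℚ]` for the dimension of `ℚω₁ + ℚω₂` over `k`, and
`F` for a subfield of `ℂ` that contains `g₂, g₃` and is algebraically closed in `ℂ`. Everything
rests on one fact: the points `z` for which `z, ζ(z), ℘(z)` lie in `F` (for a lattice point, `z` and
its quasi-period) form a group `GF L F` stable under the multipliers of the lattice (`GF.add`,
`GF.mul`). Hence, up to algebraic extension, `K` depends only on the span of the `tᵢ` over `ℚ` and
of the `pᵢ` over `k`, the latter up to division by integers.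

(A) implies (B) (`splitSemiElliptic_imp`): enlarge a basis of the `tᵢ` modulo `2πiℚ` by `2πi`, and a
basis of the `pᵢ` modulo `ℚω₁ + ℚω₂` by `h` half periods. Over `K(ω₁, ω₂, η₁, η₂)` all the new values
are algebraic, since `2πi` is given by the Legendre relation, and (A) yields
`(d_t + 1) + 2(d_p + h) - 1`.

(B) implies (A) (`ellipticoToric_imp`): let `r` be the dimension of the part of `ℚω₁ + ℚω₂` contained
in the `k`-span of the `pᵢ`, so that `d_p = n - r`. The periods and quasi-periods are generated, up to
algebraic closure, by `K` and `2(h - r)` elements, or one less if `2πi` is in the span of the `tᵢ` and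
`r < h` (`exists_extra`). This uses the Legendre relation (`legendre`) and, for complex
multiplication by `α` with conjugate `ᾱ`, the relation `η(αω) = ᾱ η(ω) + κω` with `κ` in `F`
(`cm_data`, `cm_kappa_mem`). Subtracting from the bound of (B) gives that of (A).

For integral multipliers, stability of `GF L F` comes from the addition and duplication formulas of
`ζ` and `℘` (`zeta_addition`, `wp_addition`, `zeta_dup`, `wp_dup`). For a complex multiplication `α`,
the function `ζ(αu) - ᾱ ζ(u) - κu` is elliptic, so, times a polynomial in `℘`, it is a polynomial in
`℘, ℘'` (`Ell.exists_poly`). The Laurent coefficients at the origin of all functions involved lie in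
`F`, so an `F`-linear retraction of `ℂ` onto `F`, applied to the coefficients of this identity,
produces one over `F` (`MF.apply_linear`, `cm_formula`). Transcendence degrees are handled as ranks
in the matroid of algebraic independence (`trdegGe_iff`).
-/

open Complex

noncomputable section

/-- The lattice `ℤω₁ + ℤω₂`, as a set of complex numbers. -/
def LatticePts (ω₁ ω₂ : ℂ) : Set ℂ := {z | ∃ m n : ℤ, z = m * ω₁ + n * ω₂}

/-- `ω₁, ω₂` are the basis of a lattice: they are `ℝ`-linearly independent. -/
def IsLatticeBasis (ω₁ ω₂ : ℂ) : Prop := LinearIndependent ℝ ![ω₁, ω₂]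

/-- The nonzero lattice points. -/
def LatticePts' (ω₁ ω₂ : ℂ) : Set ℂ := {w | w ∈ LatticePts ω₁ ω₂ ∧ w ≠ 0}

/-- The Weierstrass sigma function of the lattice `ℤω₁ + ℤω₂`:
`σ(z) = z ∏_{ω ∈ Ω∖{0}} (1 − z/ω) exp(z/ω + z²/(2ω²))`. -/
def wSigma (ω₁ ω₂ : ℂ) (z : ℂ) : ℂ :=
  z * ∏' w : LatticePts' ω₁ ω₂,
    (1 - z / (w : ℂ)) * Complex.exp (z / w + z ^ 2 / (2 * (w : ℂ) ^ 2))

/-- The Weierstrass zeta function `ζ = σ'/σ`. -/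
def wZeta (ω₁ ω₂ : ℂ) (z : ℂ) : ℂ := deriv (wSigma ω₁ ω₂) z / wSigma ω₁ ω₂ z

/-- The Weierstrass elliptic function `℘ = -ζ'`. -/
def wP (ω₁ ω₂ : ℂ) (z : ℂ) : ℂ := - deriv (wZeta ω₁ ω₂) z

/-- The invariant `g₂ = 60 Σ_{ω ∈ Ω∖{0}} ω⁻⁴` of the lattice. -/
def g2 (ω₁ ω₂ : ℂ) : ℂ := 60 * ∑' w : LatticePts' ω₁ ω₂, ((w : ℂ) ^ 4)⁻¹

/-- The invariant `g₃ = 140 Σ_{ω ∈ Ω∖{0}} ω⁻⁶` of the lattice. -/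
def g3 (ω₁ ω₂ : ℂ) : ℂ := 140 * ∑' w : LatticePts' ω₁ ω₂, ((w : ℂ) ^ 6)⁻¹

/-- The quasi-period `η(ω) = ζ(z + ω) − ζ(z)` (independent of `z`; we evaluate at the
point `(ω₁+ω₂)/3`, which is never a pole of `ζ`, nor is its translate by a lattice point). -/
def wEta (ω₁ ω₂ : ℂ) (ω : ℂ) : ℂ :=
  wZeta ω₁ ω₂ ((ω₁ + ω₂) / 3 + ω) - wZeta ω₁ ω₂ ((ω₁ + ω₂) / 3)

/-- The field of endomorphisms `k = {α ∈ ℂ : αΩ ⊆ Ω} ⊗_ℤ ℚ`, as a set of complex numbers: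
the `α ∈ ℂ` such that `mα` stabilizes the lattice for some nonzero integer `m`. -/
def endQ (ω₁ ω₂ : ℂ) : Set ℂ :=
  {α | ∃ m : ℤ, m ≠ 0 ∧ ∀ w ∈ LatticePts ω₁ ω₂, (m : ℂ) * α * w ∈ LatticePts ω₁ ω₂}

/-- The transcendence degree over `ℚ` of the subfield `ℚ(S)` of `ℂ` generated by `S` is
at least `d`: there are `d` algebraically independent elements in `ℚ(S)`. -/
def trdegGe (S : Set ℂ) (d : ℕ) : Prop :=
  ∃ x : Fin d → ℂ, (∀ i, x i ∈ IntermediateField.adjoin ℚ S) ∧ AlgebraicIndependent ℚ x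

/-- `p₁, …, p_n` are linearly independent over the field of endomorphisms `k`. -/
def kLinInd (ω₁ ω₂ : ℂ) {n : ℕ} (p : Fin n → ℂ) : Prop :=
  ∀ c : Fin n → ℂ, (∀ i, c i ∈ endQ ω₁ ω₂) → ∑ i, c i * p i = 0 → ∀ i, c i = 0

/-- The generators of the field
`K = ℚ(t₁, …, t_s, e^{t₁}, …, e^{t_s}, g₂, g₃, p₁, …, p_n, ℘(pᵢ), ζ(pᵢ))`. -/
def Kgens (ω₁ ω₂ : ℂ) {s n : ℕ} (t : Fin s → ℂ) (p : Fin n → ℂ) : Set ℂ :=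
  ({g2 ω₁ ω₂, g3 ω₁ ω₂} : Set ℂ) ∪
    Set.range t ∪ Set.range (fun ℓ => Complex.exp (t ℓ)) ∪
    Set.range p ∪ Set.range (fun i => wP ω₁ ω₂ (p i)) ∪
    Set.range (fun i => wZeta ω₁ ω₂ (p i))

/-- The exceptional case: `2πi ∈ ℚt₁ + ⋯ + ℚt_s` and `Ω ⊆ kp₁ + ⋯ + kp_n`. -/
def ExceptionalCase (ω₁ ω₂ : ℂ) {s n : ℕ} (t : Fin s → ℂ) (p : Fin n → ℂ) : Prop :=
  (2 * Real.pi * Complex.I : ℂ) ∈ Submodule.span ℚ (Set.range t) ∧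
    ∀ w ∈ LatticePts ω₁ ω₂,
      ∃ c : Fin n → ℂ, (∀ i, c i ∈ endQ ω₁ ω₂) ∧ w = ∑ i, c i * p i

/-- **The Split Semi-Elliptic Conjecture** for the lattice `ℤω₁ + ℤω₂`. -/
def SplitSemiEllipticConj (ω₁ ω₂ : ℂ) : Prop :=
  ∀ (s n : ℕ) (t : Fin s → ℂ) (p : Fin n → ℂ),
    LinearIndependent ℚ t → (∀ i, p i ∉ LatticePts ω₁ ω₂) → kLinInd ω₁ ω₂ p →
    (¬ExceptionalCase ω₁ ω₂ t p → trdegGe (Kgens ω₁ ω₂ t p) (s + 2 * n)) ∧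
    (ExceptionalCase ω₁ ω₂ t p → trdegGe (Kgens ω₁ ω₂ t p) (s + 2 * n - 1))

/-- The lattice `ℤω₁ + ℤω₂` has complex multiplication: `k ≠ ℚ`. -/
def IsCM (ω₁ ω₂ : ℂ) : Prop :=
  ∃ α ∈ endQ ω₁ ω₂, α ∉ Set.range ((↑) : ℚ → ℂ)

/-- The dimension of the `ℚ`-vector subspace of `ℂ/2πiℚ` generated by the classes of
`t₁, …, t_s` modulo `2πiℚ`. -/
def qdimMod {s : ℕ} (t : Fin s → ℂ) : ℕ :=
  Module.finrank ℚ (Submodule.span ℚ (Set.range (fun ℓ =>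
    (Submodule.Quotient.mk (t ℓ) :
      ℂ ⧸ Submodule.span ℚ ({(2 * Real.pi * Complex.I : ℂ)} : Set ℂ)))))

/-- `d` is the dimension of the `k`-vector subspace of `ℂ/(ℚω₁ + ℚω₂)` generated by the
classes of `p₁, …, p_n`: there is a family `q₁, …, q_d` lying in the `k`-span of the `pᵢ`
modulo `ℚω₁ + ℚω₂`, which is `k`-linearly independent modulo `ℚω₁ + ℚω₂`, and whose `k`-span
modulo `ℚω₁ + ℚω₂` contains every `pᵢ`. -/
def IskDimMod (ω₁ ω₂ : ℂ) {n : ℕ} (p : Fin n → ℂ) (d : ℕ) : Prop :=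
  ∃ q : Fin d → ℂ,
    (∀ j, ∃ c : Fin n → ℂ, (∀ i, c i ∈ endQ ω₁ ω₂) ∧ ∃ a b : ℚ,
      q j = (a : ℂ) * ω₁ + (b : ℂ) * ω₂ + ∑ i, c i * p i) ∧
    (∀ c : Fin d → ℂ, (∀ j, c j ∈ endQ ω₁ ω₂) → ∀ a b : ℚ,
      ∑ j, c j * q j = (a : ℂ) * ω₁ + (b : ℂ) * ω₂ → ∀ j, c j = 0) ∧
    (∀ i, ∃ c : Fin d → ℂ, (∀ j, c j ∈ endQ ω₁ ω₂) ∧ ∃ a b : ℚ,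
      p i = (a : ℂ) * ω₁ + (b : ℂ) * ω₂ + ∑ j, c j * q j)

/-- **The Elliptico-Toric Conjecture** for the lattice `ℤω₁ + ℤω₂`: the transcendence degree
of `K(ω₁, ω₂, η₁, η₂)` is at least `d_t + 4/[k:ℚ] + 2d_p`. -/
def EllipticoToricConj (ω₁ ω₂ : ℂ) : Prop :=
  ∀ (s n : ℕ) (t : Fin s → ℂ) (p : Fin n → ℂ), (∀ i, p i ∉ LatticePts ω₁ ω₂) →
    ∀ dp : ℕ, IskDimMod ω₁ ω₂ p dp →
      (IsCM ω₁ ω₂ →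
        trdegGe (Kgens ω₁ ω₂ t p ∪ {ω₁, ω₂, wEta ω₁ ω₂ ω₁, wEta ω₁ ω₂ ω₂})
          (qdimMod t + 2 + 2 * dp)) ∧
      (¬IsCM ω₁ ω₂ →
        trdegGe (Kgens ω₁ ω₂ t p ∪ {ω₁, ω₂, wEta ω₁ ω₂ ω₁, wEta ω₁ ω₂ ω₂})
          (qdimMod t + 4 + 2 * dp))

/-! ### The sigma function and the lattice sums of its logarithmic derivative -/

namespace SemiElliptic
open Filter Topology Set

variable (L : PeriodPair)

lemma latticePts_eq : LatticePts L.ω₁ L.ω₂ = (L.lattice : Set ℂ) := by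
  ext z
  simp only [LatticePts, mem_ofPred_eq, SetLike.mem_coe, PeriodPair.mem_lattice, eq_comm]

lemma mem_latticePts' {w : ℂ} : w ∈ LatticePts' L.ω₁ L.ω₂ ↔ w ∈ L.lattice ∧ w ≠ 0 := by
  simp [LatticePts', latticePts_eq]

lemma tsum_latticePts' (f : ℂ → ℂ) :
    ∑' w : LatticePts' L.ω₁ L.ω₂, f w = ∑' l : L.lattice, if (l : ℂ) = 0 then 0 else f l := by
  classical
  rw [tsum_subtype (LatticePts' L.ω₁ L.ω₂) f,
    show ∑' l : L.lattice, (if (l : ℂ) = 0 then 0 else f l)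
      = ∑' x, (L.lattice : Set ℂ).indicator (fun l => if l = 0 then 0 else f l) x from
      tsum_subtype (L.lattice : Set ℂ) (fun l => if l = 0 then 0 else f l)]
  congr 1; ext x
  by_cases h : x ∈ L.lattice <;> by_cases h0 : x = 0 <;> simp [indicator, mem_latticePts', h, h0]

lemma tprod_latticePts' (f : ℂ → ℂ) :
    ∏' w : LatticePts' L.ω₁ L.ω₂, f w = ∏' l : L.lattice, if (l : ℂ) = 0 then 1 else f l := by
  classical
  rw [tprod_subtype (LatticePts' L.ω₁ L.ω₂) f,
    show ∏' l : L.lattice, (if (l : ℂ) = 0 then 1 else f l)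
      = ∏' x, (L.lattice : Set ℂ).mulIndicator (fun l => if l = 0 then 1 else f l) x from
      tprod_subtype (L.lattice : Set ℂ) (fun l => if l = 0 then 1 else f l)]
  congr 1; ext x
  by_cases h : x ∈ L.lattice <;> by_cases h0 : x = 0 <;>
    simp [mulIndicator, mem_latticePts', h, h0]

lemma g2_eq : g2 L.ω₁ L.ω₂ = L.g₂ := by
  rw [g2, PeriodPair.g₂, PeriodPair.G, tsum_latticePts' L (fun w => (w ^ 4)⁻¹)]
  congr 2; ext l
  by_cases h : (l : ℂ) = 0 <;> simp [h]

lemma g3_eq : g3 L.ω₁ L.ω₂ = L.g₃ := by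
  rw [g3, PeriodPair.g₃, PeriodPair.G, tsum_latticePts' L (fun w => (w ^ 6)⁻¹)]
  congr 2; ext l
  by_cases h : (l : ℂ) = 0 <;> simp [h]

/-- The Weierstrass elementary factor of genus two satisfies `E(x) = 1 + O(x³)`. -/
lemma norm_elementaryFactor_sub_one_le {x : ℂ} (hx : ‖x‖ ≤ 1 / 2) :
    ‖(1 - x) * exp (x + x ^ 2 / 2) - 1‖ ≤ 2 * ‖x‖ ^ 3 := by
  have h1 : ‖-x‖ < 1 := by rw [norm_neg]; linarith
  have hne : 1 - x ≠ 0 := by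
    intro h
    have : x = 1 := by linear_combination -h
    rw [this] at hx; norm_num at hx
  have h2 := norm_log_sub_logTaylor_le 2 h1
  have h3 : logTaylor (2 + 1) (-x) = -x - x ^ 2 / 2 := by
    simp [logTaylor, Finset.sum_range_succ]; ring
  rw [h3, norm_neg] at h2
  set r := log (1 + -x) - (-x - x ^ 2 / 2) with hr
  have h4 : (1 - x) * exp (x + x ^ 2 / 2) = exp r := by
    rw [hr, show log (1 + -x) - (-x - x ^ 2 / 2) = log (1 - x) + (x + x ^ 2 / 2) by ring_nf,
      exp_add (log (1 - x)), exp_log hne]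
  have h5 : ‖r‖ ≤ ‖x‖ ^ 3 := by
    refine h2.trans ?_
    have : (1 - ‖x‖)⁻¹ ≤ 2 := by
      rw [inv_le_comm₀] <;> linarith
    have h0 := mul_le_mul_of_nonneg_left this (pow_nonneg (norm_nonneg x) 3)
    have h0' := pow_nonneg (norm_nonneg x) 3
    norm_num at h0 ⊢
    linarith
  have h6 : ‖r‖ ≤ 1 := h5.trans (by
    have := norm_nonneg x
    exact pow_le_one₀ this (by linarith))
  rw [h4]
  refine (norm_exp_sub_one_le h6).trans (by linarith)

/-- The factor of the sigma product at a lattice point, set to `1` at the origin. -/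
def sigmaFactor (l : L.lattice) (z : ℂ) : ℂ :=
  if (l : ℂ) = 0 then 1 else (1 - z / l) * exp (z / l + z ^ 2 / (2 * (l : ℂ) ^ 2))

/-- The entire function `σ(z)/z`. -/
def sigmaQuot (z : ℂ) : ℂ := ∏' l : L.lattice, sigmaFactor L l z

lemma wSigma_eq (z : ℂ) : wSigma L.ω₁ L.ω₂ z = z * sigmaQuot L z := by
  rw [wSigma, sigmaQuot,
    tprod_latticePts' L (fun w => (1 - z / w) * exp (z / w + z ^ 2 / (2 * w ^ 2)))]
  rfl

lemma summable_inv_cube : Summable fun l : L.lattice => ‖(l : ℂ)‖ ^ (-3 : ℝ) :=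
  ZLattice.summable_norm_rpow _ _ (by simp; norm_num)

lemma finite_norm_lt (r : ℝ) : ∀ᶠ l : L.lattice in cofinite, r ≤ ‖(l : ℂ)‖ := by
  rw [eventually_cofinite]
  refine (isCompact_iff_finite.mp (isCompact_closedBall (0 : L.lattice) r)).subset ?_
  intro l hl
  simp only [mem_ofPred_eq, not_le] at hl
  simpa using hl.le

lemma norm_sigmaFactor_sub_one_le {r : ℝ} (hr : 0 < r) {l : L.lattice} (hl : 2 * r ≤ ‖(l : ℂ)‖)
    {z : ℂ} (hz : ‖z‖ ≤ r) :
    ‖sigmaFactor L l z - 1‖ ≤ 2 * r ^ 3 * ‖(l : ℂ)‖ ^ (-3 : ℝ) := by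
  have hl0 : 0 < ‖(l : ℂ)‖ := by linarith
  have hl1 : (l : ℂ) ≠ 0 := norm_pos_iff.mp hl0
  rw [sigmaFactor, if_neg hl1,
    show z ^ 2 / (2 * (l : ℂ) ^ 2) = (z / l) ^ 2 / 2 by field_simp]
  refine (norm_elementaryFactor_sub_one_le ?_).trans ?_
  · rw [norm_div, div_le_iff₀ hl0]; linarith
  · rw [norm_div, div_pow, Real.rpow_neg hl0.le,
      show ‖(l : ℂ)‖ ^ (3 : ℝ) = ‖(l : ℂ)‖ ^ 3 from by norm_cast, ← div_eq_mul_inv, mul_div_assoc]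
    gcongr

lemma differentiable_sigmaFactor (l : L.lattice) : Differentiable ℂ (sigmaFactor L l) := by
  unfold sigmaFactor
  by_cases h : (l : ℂ) = 0
  · simp [h]
  · simp only [h, if_false]; fun_prop

lemma multipliable_sigmaFactor (r : ℝ) (hr : 0 < r) :
    MultipliableLocallyUniformlyOn (sigmaFactor L) (Metric.ball 0 r) := by
  have := Summable.multipliableLocallyUniformlyOn_one_add (K := Metric.ball (0 : ℂ) r)
    (f := fun l z => sigmaFactor L l z - 1) Metric.isOpen_ball
    ((summable_inv_cube L).mul_left (2 * r ^ 3))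
    (by
      filter_upwards [finite_norm_lt L (2 * r)] with l hl z hz
      exact norm_sigmaFactor_sub_one_le L hr hl (by simpa using (mem_ball_zero_iff.mp hz).le))
    (fun l => ((differentiable_sigmaFactor L l).continuous.sub continuous_const).continuousOn)
  simpa using! this

lemma summable_sigmaFactor (z : ℂ) : Summable fun l => ‖sigmaFactor L l z - 1‖ := by
  refine Summable.of_norm_bounded_eventually
    ((summable_inv_cube L).mul_left (2 * (‖z‖ + 1) ^ 3)) ?_
  filter_upwards [finite_norm_lt L (2 * (‖z‖ + 1))] with l hl
  simpa using norm_sigmaFactor_sub_one_le L (by positivity) hl (by linarith)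

lemma differentiable_sigmaQuot : Differentiable ℂ (sigmaQuot L) := by
  intro z
  have hz : z ∈ Metric.ball (0 : ℂ) (‖z‖ + 1) := by simp
  have h := (multipliable_sigmaFactor L (‖z‖ + 1) (by positivity)).hasProdLocallyUniformlyOn
  have h2 : DifferentiableOn ℂ (sigmaQuot L) (Metric.ball 0 (‖z‖ + 1)) := by
    refine h.differentiableOn (.of_forall fun s => ?_) Metric.isOpen_ball
    exact (Differentiable.fun_finsetProd
      fun i _ => differentiable_sigmaFactor L i).differentiableOn
  exact (h2 z hz).differentiableAt (Metric.isOpen_ball.mem_nhds hz)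

lemma sigmaFactor_ne_zero {z : ℂ} (hz : z ∉ L.lattice ∨ z = 0) (l : L.lattice) :
    sigmaFactor L l z ≠ 0 := by
  rw [sigmaFactor]
  split_ifs with h
  · exact one_ne_zero
  · refine mul_ne_zero ?_ (exp_ne_zero _)
    intro h2
    rw [sub_eq_zero, eq_div_iff h, one_mul] at h2
    rcases hz with hz | hz
    · exact hz (h2 ▸ l.2)
    · exact h (h2.trans hz)

lemma sigmaQuot_ne_zero {z : ℂ} (hz : z ∉ L.lattice ∨ z = 0) : sigmaQuot L z ≠ 0 := by
  have := tprod_one_add_ne_zero_of_summable (f := fun l => sigmaFactor L l z - 1)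
    (by simpa using sigmaFactor_ne_zero L hz) (summable_sigmaFactor L z)
  simpa [sigmaQuot] using this

lemma multipliable_sigmaFactor' (z : ℂ) : Multipliable fun l => sigmaFactor L l z := by
  have := multipliable_one_add_of_summable (summable_sigmaFactor L z)
  simpa using this

lemma sigmaQuot_eq_zero {z : ℂ} (hz : z ∈ L.lattice) (h0 : z ≠ 0) : sigmaQuot L z = 0 := by
  refine tprod_of_exists_eq_zero ⟨⟨z, hz⟩, ?_⟩
  simp [sigmaFactor, h0]

/-- The regular part `ζ(z) - 1/z` of the zeta function at the origin, as a lattice sum. -/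
def zetaReg (z : ℂ) : ℂ :=
  ∑' l : L.lattice, if (l : ℂ) = 0 then 0 else 1 / (z - l) + 1 / l + z / (l : ℂ) ^ 2

lemma zetaTerm_bound {r : ℝ} (hr : 0 < r) {z : ℂ} (hz : ‖z‖ ≤ r) {l : ℂ} (h : 2 * r ≤ ‖l‖) :
    ‖1 / (z - l) + 1 / l + z / l ^ 2‖ ≤ 2 * r ^ 2 * ‖l‖ ^ (-3 : ℝ) := by
  have hl0 : 0 < ‖l‖ := by linarith
  have hl1 : l ≠ 0 := norm_pos_iff.mp hl0
  have h2 : ‖l‖ / 2 ≤ ‖z - l‖ := by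
    have := norm_sub_norm_le l z
    rw [norm_sub_rev]; linarith
  have h3 : z - l ≠ 0 := norm_pos_iff.mp (by linarith)
  rw [show 1 / (z - l) + 1 / l + z / l ^ 2 = z ^ 2 / (l ^ 2 * (z - l)) by field_simp; ring]
  rw [norm_div, norm_mul, norm_pow, norm_pow, Real.rpow_neg hl0.le,
      show ‖(l : ℂ)‖ ^ (3 : ℝ) = ‖(l : ℂ)‖ ^ 3 from by norm_cast, ← div_eq_mul_inv,
      div_le_div_iff₀ (mul_pos (by positivity) (by linarith)) (by positivity)]
  calc ‖z‖ ^ 2 * ‖l‖ ^ 3 ≤ r ^ 2 * ‖l‖ ^ 3 := by gcongr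
    _ = 2 * r ^ 2 * (‖l‖ ^ 2 * (‖l‖ / 2)) := by ring
    _ ≤ _ := by gcongr

lemma hasSumLocallyUniformly_zetaReg : HasSumLocallyUniformly
    (fun (l : L.lattice) (z : ℂ) => if (l : ℂ) = 0 then 0 else
      1 / (z - l) + 1 / l + z / (l : ℂ) ^ 2) (zetaReg L) := by
  refine L.hasSumLocallyUniformly_aux (u := (2 * · ^ 2 * ‖·‖ ^ (-3 : ℝ))) _
    (fun _ _ ↦ (summable_inv_cube L).mul_left _) fun r hr ↦
    Filter.eventually_atTop.mpr ⟨2 * r, ?_⟩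
  rintro _ h s hs l rfl
  split_ifs
  · rw [norm_zero]; positivity
  · exact zetaTerm_bound hr hs.le h

lemma isOpen_compl_lattice' : IsOpen (((L.lattice : Set ℂ) \ {0})ᶜ) :=
  L.isOpen_compl_lattice_sdiff

lemma zetaTerm_differentiableOn (l : L.lattice) : DifferentiableOn ℂ
    (fun z : ℂ => if (l : ℂ) = 0 then 0 else 1 / (z - l) + 1 / l + z / (l : ℂ) ^ 2)
    (((L.lattice : Set ℂ) \ {0})ᶜ) := by
  by_cases h : (l : ℂ) = 0
  · simp [h]
  · simp only [h, if_false]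
    intro z hz
    have : z - l ≠ 0 := by
      intro h2
      rw [sub_eq_zero] at h2
      exact hz ⟨h2 ▸ l.2, by simpa [h2] using h⟩
    exact DifferentiableAt.differentiableWithinAt (by fun_prop (disch := assumption))

lemma differentiableOn_zetaReg : DifferentiableOn ℂ (zetaReg L) (((L.lattice : Set ℂ) \ {0})ᶜ) :=
  (hasSumLocallyUniformly_zetaReg L).hasSumLocallyUniformlyOn.differentiableOn
    (.of_forall fun s ↦ .fun_sum fun i _ ↦ zetaTerm_differentiableOn L i) (isOpen_compl_lattice' L)

lemma deriv_zetaReg {z : ℂ} (hz : z ∉ (L.lattice : Set ℂ) \ {0}) :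
    deriv (zetaReg L) z = - L.weierstrassPExcept 0 z := by
  have hU := isOpen_compl_lattice' L
  have h1 := (hasSumLocallyUniformly_zetaReg L).hasSumLocallyUniformlyOn (s := ((L.lattice : Set ℂ) \ {0})ᶜ)
  rw [hasSumLocallyUniformlyOn_iff_tendstoLocallyUniformlyOn] at h1
  have h2 := (h1.deriv (.of_forall fun s ↦ .fun_sum fun i _ ↦ zetaTerm_differentiableOn L i)
    hU).tendsto_at hz
  have h3 := (L.hasSum_weierstrassPExcept 0 z).neg
  refine tendsto_nhds_unique h2 (h3.congr fun s => ?_)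
  rw [Function.comp_apply, deriv_fun_sum]
  · refine Finset.sum_congr rfl fun l _ => ?_
    by_cases h : (l : ℂ) = 0
    · simp [h]
    · simp only [h, if_false]
      have hne : z - l ≠ 0 := by
        intro h2
        rw [sub_eq_zero] at h2
        exact hz ⟨h2 ▸ l.2, by simpa [h2] using h⟩
      have : HasDerivAt (fun z : ℂ => 1 / (z - l) + 1 / l + z / (l : ℂ) ^ 2)
          (-1 / (z - l) ^ 2 + 1 / (l : ℂ) ^ 2) z := by
        have a1 := (((hasDerivAt_id z).sub_const (l : ℂ)).inv hne)
        have a2 := (hasDerivAt_id z).div_const ((l : ℂ) ^ 2)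
        have := (a1.add_const (1 / (l : ℂ))).add a2
        simpa using! this
      rw [this.deriv]; ring
  · intro l _
    exact ((zetaTerm_differentiableOn L l) z hz).differentiableAt (hU.mem_nhds hz)

lemma zetaReg_neg (z : ℂ) : zetaReg L (-z) = - zetaReg L z := by
  rw [zetaReg, zetaReg, ← (Equiv.neg L.lattice).tsum_eq, ← tsum_neg]
  congr 1; ext l
  by_cases h : (l : ℂ) = 0
  · simp [h]
  · have e : -z - -(l : ℂ) = -(z - l) := by ring
    simp only [Equiv.neg_apply, NegMemClass.coe_neg, e, neg_eq_zero, h, if_false, div_neg,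
      neg_div, neg_sq]
    ring

@[simp] lemma zetaReg_zero : zetaReg L 0 = 0 := by
  have := zetaReg_neg L 0
  rw [neg_zero] at this
  linear_combination this / 2

/-- Logarithmic differentiation of the sigma product. -/
lemma logDeriv_sigmaQuot {z : ℂ} (hz : z ∉ L.lattice ∨ z = 0) :
    logDeriv (sigmaQuot L) z = zetaReg L z := by
  have hz' : z ∈ Metric.ball (0 : ℂ) (‖z‖ + 1) := by simp
  have key : ∀ l : L.lattice, logDeriv (sigmaFactor L l) z =
      if (l : ℂ) = 0 then 0 else 1 / (z - l) + 1 / l + z / (l : ℂ) ^ 2 := by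
    intro l
    by_cases h : (l : ℂ) = 0
    · have : sigmaFactor L l = fun _ => 1 := by ext; simp [sigmaFactor, h]
      rw [this]; simp [h, logDeriv]
    · have : sigmaFactor L l = fun z => (1 - z / l) * exp (z / l + z ^ 2 / (2 * (l : ℂ) ^ 2)) := by
        ext; simp [sigmaFactor, h]
      have hne := sigmaFactor_ne_zero L hz l
      rw [this] at hne
      have hne1 : 1 - z / (l : ℂ) ≠ 0 := left_ne_zero_of_mul hne
      have hne2 : (l : ℂ) - z ≠ 0 := by
        intro h3; apply hne1; rw [← sub_eq_zero.mp h3, div_self h, sub_self]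
      have hne3 : z - (l : ℂ) ≠ 0 := by
        intro h3; apply hne2; linear_combination -h3
      rw [this, if_neg h, logDeriv_apply]
      have d1 : HasDerivAt (fun z : ℂ => 1 - z / (l : ℂ)) (-(1 / (l : ℂ))) z := by
        simpa using! ((hasDerivAt_id z).div_const (l : ℂ)).const_sub 1
      have d2 : HasDerivAt (fun z : ℂ => z / l + z ^ 2 / (2 * (l : ℂ) ^ 2))
          (1 / (l : ℂ) + (2 * z) / (2 * (l : ℂ) ^ 2)) z := by
        simpa using! ((hasDerivAt_id z).div_const (l : ℂ)).add
          (((hasDerivAt_id z).pow 2).div_const (2 * (l : ℂ) ^ 2))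
      rw [(d1.fun_mul d2.cexp).deriv]
      have := exp_ne_zero (z / l + z ^ 2 / (2 * (l : ℂ) ^ 2))
      field_simp
      ring
  have h := logDeriv_tprod_eq_tsum (s := Metric.ball (0 : ℂ) (‖z‖ + 1)) Metric.isOpen_ball hz'
    (f := sigmaFactor L) (sigmaFactor_ne_zero L hz)
    (fun l => (differentiable_sigmaFactor L l).differentiableOn)
    (by
      simp only [key]
      exact (hasSumLocallyUniformly_zetaReg L).hasSum.summable)
    (multipliable_sigmaFactor L _ (by positivity)) (sigmaQuot_ne_zero L hz)
  simp only [key] at h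
  exact h

lemma wSigma_fun_eq : wSigma L.ω₁ L.ω₂ = fun z => z * sigmaQuot L z := funext (wSigma_eq L)

lemma differentiable_wSigma : Differentiable ℂ (wSigma L.ω₁ L.ω₂) := by
  rw [wSigma_fun_eq]
  exact differentiable_id.mul (differentiable_sigmaQuot L)

lemma wSigma_ne_zero {z : ℂ} (hz : z ∉ L.lattice) : wSigma L.ω₁ L.ω₂ z ≠ 0 := by
  rw [wSigma_eq]
  refine mul_ne_zero ?_ (sigmaQuot_ne_zero L (.inl hz))
  rintro rfl; exact hz (zero_mem _)

lemma wSigma_eq_zero {z : ℂ} (hz : z ∈ L.lattice) : wSigma L.ω₁ L.ω₂ z = 0 := by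
  rw [wSigma_eq]
  by_cases h : z = 0
  · simp [h]
  · simp [sigmaQuot_eq_zero L hz h]

lemma wZeta_eq {z : ℂ} (hz : z ∉ L.lattice) :
    wZeta L.ω₁ L.ω₂ z = 1 / z + zetaReg L z := by
  have h0 : z ≠ 0 := by rintro rfl; exact hz (zero_mem _)
  have hq := sigmaQuot_ne_zero L (.inl hz)
  have h1 := logDeriv_sigmaQuot L (.inl hz)
  rw [logDeriv_apply] at h1
  rw [wZeta, wSigma_fun_eq]
  have := (hasDerivAt_id z).mul ((differentiable_sigmaQuot L) z).hasDerivAt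
  rw [show (fun z => z * sigmaQuot L z) = (id * sigmaQuot L) from rfl, this.deriv, ← h1]
  simp
  field_simp

end SemiElliptic

/-! ### The zeta function and the quasi-periods -/

namespace SemiElliptic
open Filter Topology Set
open scoped PeriodPair

variable (L : PeriodPair)

/-- The function `wZeta` for the lattice of a period pair. -/
def zeta (z : ℂ) : ℂ := wZeta L.ω₁ L.ω₂ z

/-- The quasi-periods of the lattice of a period pair. -/
def eta (w : ℂ) : ℂ := wEta L.ω₁ L.ω₂ w

lemma zeta_eq {z : ℂ} (hz : z ∉ L.lattice) : zeta L z = 1 / z + zetaReg L z := wZeta_eq L hz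

lemma isOpen_compl_lattice : IsOpen ((L.lattice : Set ℂ)ᶜ) := L.isClosed_lattice.isOpen_compl

lemma compl_mem_nhds {z : ℂ} (hz : z ∉ L.lattice) : (L.lattice : Set ℂ)ᶜ ∈ 𝓝 z :=
  (isOpen_compl_lattice L).mem_nhds hz

lemma countable_lattice : (L.lattice : Set ℂ).Countable := by
  have : (L.lattice : Set ℂ) = range (fun p : ℤ × ℤ => (p.1 : ℂ) * L.ω₁ + p.2 * L.ω₂) := by
    ext z; simp [PeriodPair.mem_lattice]
  rw [this]; exact countable_range _

lemma isPreconnected_compl_countable {S : Set ℂ} (hS : S.Countable) : IsPreconnected Sᶜ :=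
  (hS.isPathConnected_compl_of_one_lt_rank
    (by rw [Complex.rank_real_complex]; norm_num)).isConnected.isPreconnected

lemma notMem_near_zero : ∀ᶠ z in 𝓝[≠] (0 : ℂ), z ∉ L.lattice := by
  have := L.compl_lattice_sdiff_singleton_mem_nhds 0
  filter_upwards [mem_nhdsWithin_of_mem_nhds this, self_mem_nhdsWithin] with z hz h0 hm
  exact hz ⟨hm, h0⟩

lemma notMem_near (w : ℂ) : ∀ᶠ z in 𝓝[≠] w, z ∉ L.lattice := by
  have := L.compl_lattice_sdiff_singleton_mem_nhds w
  filter_upwards [mem_nhdsWithin_of_mem_nhds this, self_mem_nhdsWithin] with z hz h0 hm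
  exact hz ⟨hm, h0⟩

lemma ne_zero_of_notMem {z : ℂ} (hz : z ∉ L.lattice) : z ≠ 0 := by
  rintro rfl; exact hz (zero_mem _)

lemma differentiableAt_zetaReg {z : ℂ} (hz : z ∉ (L.lattice : Set ℂ) \ {0}) :
    DifferentiableAt ℂ (zetaReg L) z :=
  (differentiableOn_zetaReg L z hz).differentiableAt ((isOpen_compl_lattice' L).mem_nhds hz)

lemma analyticAt_zetaReg {z : ℂ} (hz : z ∉ (L.lattice : Set ℂ) \ {0}) :
    AnalyticAt ℂ (zetaReg L) z :=
  (differentiableOn_zetaReg L).analyticAt ((isOpen_compl_lattice' L).mem_nhds hz)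

lemma hasDerivAt_zeta {z : ℂ} (hz : z ∉ L.lattice) : HasDerivAt (zeta L) (-℘[L] z) z := by
  have h0 := ne_zero_of_notMem L hz
  have hz' : z ∉ (L.lattice : Set ℂ) \ {0} := fun h => hz h.1
  have h1 : HasDerivAt (fun z => z⁻¹ + zetaReg L z)
      (-1 / z ^ 2 + deriv (zetaReg L) z) z := by
    have := (hasDerivAt_id z).inv h0
    simpa using! this.add (differentiableAt_zetaReg L hz').hasDerivAt
  rw [deriv_zetaReg L hz'] at h1
  have h2 := L.weierstrassPExcept_add 0 z
  simp only [ZeroMemClass.coe_zero, sub_zero] at h2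
  have h3 : -℘[L] z = -1 / z ^ 2 + -L.weierstrassPExcept 0 z := by
    rw [← h2]; simp; ring
  rw [h3]
  refine h1.congr_of_eventuallyEq ?_
  filter_upwards [compl_mem_nhds L hz] with w hw
  rw [zeta_eq L hw, one_div]

lemma analyticAt_zeta {z : ℂ} (hz : z ∉ L.lattice) : AnalyticAt ℂ (zeta L) z := by
  have : DifferentiableOn ℂ (zeta L) (L.lattice : Set ℂ)ᶜ := fun w hw =>
    (hasDerivAt_zeta L hw).differentiableAt.differentiableWithinAt
  exact this.analyticAt (compl_mem_nhds L hz)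

lemma wP_eq {z : ℂ} (hz : z ∉ L.lattice) : wP L.ω₁ L.ω₂ z = ℘[L] z := by
  have := (hasDerivAt_zeta L hz).deriv
  rw [wP, show wZeta L.ω₁ L.ω₂ = zeta L from rfl, this, neg_neg]

lemma zeta_neg {z : ℂ} (hz : z ∉ L.lattice) : zeta L (-z) = - zeta L z := by
  rw [zeta_eq L hz, zeta_eq L (by simpa using hz), zetaReg_neg, div_neg]; ring

lemma third_notMem : (L.ω₁ + L.ω₂) / 3 ∉ L.lattice := by
  have h := L.mul_ω₁_add_mul_ω₂_mem_lattice (α := 1 / 3) (β := 1 / 3)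
  intro h2
  have h3 := (h.mp (by
    convert h2 using 1; push_cast; ring)).1
  norm_num at h3

lemma eta_def (w : ℂ) : eta L w = zeta L ((L.ω₁ + L.ω₂) / 3 + w) - zeta L ((L.ω₁ + L.ω₂) / 3) := rfl

lemma add_notMem {z w : ℂ} (hz : z ∉ L.lattice) (hw : w ∈ L.lattice) : z + w ∉ L.lattice := by
  rwa [add_mem_cancel_right hw]

/-- On a connected open set, a function with zero derivative is constant. -/
lemma eq_of_deriv_zero {U : Set ℂ} (hU : IsOpen U) (hc : IsPreconnected U) {f : ℂ → ℂ}
    (hf : ∀ z ∈ U, HasDerivAt f 0 z) {x y : ℂ} (hx : x ∈ U) (hy : y ∈ U) : f x = f y := by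
  refine hU.is_const_of_deriv_eq_zero hc (fun z hz =>
    (hf z hz).differentiableAt.differentiableWithinAt) (fun z hz => (hf z hz).deriv) hx hy

lemma isPreconnected_compl_lattice : IsPreconnected (L.lattice : Set ℂ)ᶜ :=
  isPreconnected_compl_countable (countable_lattice L)

lemma zeta_add {z w : ℂ} (hz : z ∉ L.lattice) (hw : w ∈ L.lattice) :
    zeta L (z + w) = zeta L z + eta L w := by
  have h := eq_of_deriv_zero (isOpen_compl_lattice L) (isPreconnected_compl_lattice L)
    (f := fun z => zeta L (z + w) - zeta L z) (fun u hu => by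
      have hu' := add_notMem L hu hw
      have h1 := (hasDerivAt_zeta L hu').comp_add_const u w
      have h2 := h1.sub (hasDerivAt_zeta L hu)
      have h3 := L.weierstrassP_add_coe u ⟨w, hw⟩
      simp only at h3
      rw [h3] at h2
      simpa using! h2) hz (third_notMem L)
  rw [eta_def]; linear_combination h

lemma eta_add {v w : ℂ} (hv : v ∈ L.lattice) (hw : w ∈ L.lattice) :
    eta L (v + w) = eta L v + eta L w := by
  have h0 := third_notMem L
  have h1 := zeta_add L h0 (add_mem hv hw)
  rw [← add_assoc, zeta_add L (add_notMem L h0 hv) hw, zeta_add L h0 hv] at h1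
  linear_combination -h1

/-- The quasi-periods form a homomorphism on the lattice. -/
def etaHom : L.lattice →+ ℂ where
  toFun w := eta L w
  map_zero' := by simp [eta_def]
  map_add' v w := eta_add L v.2 w.2

@[simp] lemma eta_zero : eta L 0 = 0 := by simp [eta_def]

lemma eta_int_mul (m : ℤ) {w : ℂ} (hw : w ∈ L.lattice) : eta L (m * w) = m * eta L w := by
  have := map_zsmul (etaHom L) m ⟨w, hw⟩
  simpa [etaHom] using! this

lemma int_mul_mem (m : ℤ) {w : ℂ} (hw : w ∈ L.lattice) : (m : ℂ) * w ∈ L.lattice := by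
  simpa using L.lattice.smul_mem m hw

lemma eta_neg {w : ℂ} (hw : w ∈ L.lattice) : eta L (-w) = - eta L w := by
  simpa using eta_int_mul L (-1) hw

lemma eta_sub {v w : ℂ} (hv : v ∈ L.lattice) (hw : w ∈ L.lattice) :
    eta L (v - w) = eta L v - eta L w := by
  rw [sub_eq_add_neg, eta_add L hv (neg_mem hw), eta_neg L hw, sub_eq_add_neg]

lemma eta_comb (m n : ℤ) : eta L (m * L.ω₁ + n * L.ω₂) = m * eta L L.ω₁ + n * eta L L.ω₂ := by
  rw [eta_add L (int_mul_mem L m L.ω₁_mem_lattice) (int_mul_mem L n L.ω₂_mem_lattice),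
    eta_int_mul L m L.ω₁_mem_lattice, eta_int_mul L n L.ω₂_mem_lattice]

/-- Evaluating quasi-periodicity at the half period. -/
lemma two_mul_zeta_half {w : ℂ} (hw : w ∈ L.lattice) (h : w / 2 ∉ L.lattice) :
    eta L w = 2 * zeta L (w / 2) := by
  have h1 := zeta_add L (z := -(w / 2)) (by simpa using h) hw
  rw [zeta_neg L h, show -(w / 2) + w = w / 2 by ring] at h1
  linear_combination -h1

lemma omega1_ne_zero : L.ω₁ ≠ 0 := by
  have := L.indep.ne_zero 0
  simpa using this

lemma omega2_ne_zero : L.ω₂ ≠ 0 := by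
  have := L.indep.ne_zero 1
  simpa using this

end SemiElliptic

/-! ### The Legendre relation -/

namespace SemiElliptic
open Filter Topology Set
open scoped PeriodPair

variable (L : PeriodPair)

/-- The Weierstrass sigma function of the lattice of a period pair. -/
def sigma (z : ℂ) : ℂ := wSigma L.ω₁ L.ω₂ z

lemma differentiable_sigma : Differentiable ℂ (sigma L) := differentiable_wSigma L

lemma sigma_ne_zero {z : ℂ} (hz : z ∉ L.lattice) : sigma L z ≠ 0 := wSigma_ne_zero L hz

lemma sigma_eq_zero {z : ℂ} (hz : z ∈ L.lattice) : sigma L z = 0 := wSigma_eq_zero L hz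

lemma hasDerivAt_sigma {z : ℂ} (hz : z ∉ L.lattice) :
    HasDerivAt (sigma L) (zeta L z * sigma L z) z := by
  have h := (differentiable_sigma L z).hasDerivAt
  have h2 : zeta L z = deriv (sigma L) z / sigma L z := rfl
  rwa [h2, div_mul_cancel₀ _ (sigma_ne_zero L hz)]

lemma sigma_add {w : ℂ} (hw : w ∈ L.lattice) :
    ∃ C : ℂ, C ≠ 0 ∧ ∀ z, sigma L (z + w) = C * exp (eta L w * z) * sigma L z := by
  have h3 := third_notMem L
  set z₀ := (L.ω₁ + L.ω₂) / 3
  let f : ℂ → ℂ := fun z => sigma L (z + w) / (exp (eta L w * z) * sigma L z)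
  have key : ∀ z ∈ (L.lattice : Set ℂ)ᶜ, HasDerivAt f 0 z := by
    intro z hz
    have hzw := add_notMem L hz hw
    have d1 := (hasDerivAt_sigma L hzw).comp_add_const z w
    have d2 := (((hasDerivAt_id z).const_mul (eta L w)).cexp).fun_mul (hasDerivAt_sigma L hz)
    have hne : exp (eta L w * id z) * sigma L z ≠ 0 := mul_ne_zero (exp_ne_zero _) (sigma_ne_zero L hz)
    have d3 := d1.fun_div d2 hne
    refine d3.congr_deriv ?_
    rw [zeta_add L hz hw]
    simp only [id]
    ring
  refine ⟨f z₀, div_ne_zero (sigma_ne_zero L (add_notMem L h3 hw))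
    (mul_ne_zero (exp_ne_zero _) (sigma_ne_zero L h3)), fun z => ?_⟩
  by_cases hz : z ∈ L.lattice
  · rw [sigma_eq_zero L hz, sigma_eq_zero L (add_mem hz hw), mul_zero]
  · rw [eq_of_deriv_zero (isOpen_compl_lattice L) (isPreconnected_compl_lattice L) key h3 hz]
    have := sigma_ne_zero L hz
    have := exp_ne_zero (eta L w * z)
    simp only [f]
    field_simp

lemma periodic_of_gens {α : Type*} {f : ℂ → α} (h1 : ∀ z, f (z + L.ω₁) = f z)
    (h2 : ∀ z, f (z + L.ω₂) = f z) {w : ℂ} (hw : w ∈ L.lattice) (z : ℂ) : f (z + w) = f z := by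
  obtain ⟨m, n, rfl⟩ := L.mem_lattice.mp hw
  have p1 : Function.Periodic f L.ω₁ := h1
  have p2 : Function.Periodic f L.ω₂ := h2
  rw [← add_assoc, p2.int_mul n, p1.int_mul m]

/-- The zeta function is not congruent to a linear function modulo elliptic functions: otherwise
`σ` times the exponential of a quadratic polynomial would be entire and bounded. -/
lemma legendre_ne : L.ω₂ * eta L L.ω₁ - L.ω₁ * eta L L.ω₂ ≠ 0 := by
  intro h
  have h1 := omega1_ne_zero L
  obtain ⟨A, hA1, hA2⟩ : ∃ A, eta L L.ω₁ = A * L.ω₁ ∧ eta L L.ω₂ = A * L.ω₂ := by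
    refine ⟨eta L L.ω₁ / L.ω₁, by field_simp, ?_⟩
    field_simp
    linear_combination -h
  have step : ∀ w ∈ L.lattice, eta L w = A * w → ∃ c : ℂ, c ≠ 0 ∧
      ∀ z, sigma L (z + w) * exp (-(A * (z + w) ^ 2 / 2)) =
        c * (sigma L z * exp (-(A * z ^ 2 / 2))) := by
    intro w hw he
    obtain ⟨C, hC, hs⟩ := sigma_add L hw
    refine ⟨C * exp (-(A * w ^ 2 / 2)), mul_ne_zero hC (exp_ne_zero _), fun z => ?_⟩
    rw [hs, he, show -(A * (z + w) ^ 2 / 2) = -(A * w * z) + -(A * w ^ 2 / 2) + -(A * z ^ 2 / 2) by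
      ring, exp_add, exp_add, exp_neg (A * w * z)]
    have := exp_ne_zero (A * w * z)
    field_simp
  obtain ⟨c₁, hc₁, hs₁⟩ := step _ L.ω₁_mem_lattice hA1
  obtain ⟨c₂, hc₂, hs₂⟩ := step _ L.ω₂_mem_lattice hA2
  -- a linear exponent that makes both multipliers unimodular
  obtain ⟨b, hb₁, hb₂⟩ : ∃ b : ℂ, (b * L.ω₁).re = -Real.log ‖c₁‖ ∧
      (b * L.ω₂).re = -Real.log ‖c₂‖ := by
    let φ : ℂ →ₗ[ℝ] ℝ := L.basis.constr ℝ ![-Real.log ‖c₁‖, -Real.log ‖c₂‖]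
    have hφ : ∀ z : ℂ, ((⟨φ 1, -φ I⟩ : ℂ) * z).re = φ z := by
      intro z
      have : z = z.re • (1 : ℂ) + z.im • I := by simp
      conv_rhs => rw [this, map_add, map_smul, map_smul]
      simp [mul_comm]
    refine ⟨⟨φ 1, -φ I⟩, ?_, ?_⟩
    · rw [hφ, ← L.basis_zero, Module.Basis.constr_basis]; rfl
    · rw [hφ, ← L.basis_one, Module.Basis.constr_basis]; rfl
  let G : ℂ → ℂ := fun z => sigma L z * exp (-(A * z ^ 2 / 2)) * exp (b * z)
  have hG : Differentiable ℂ G := by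
    have := differentiable_sigma L
    fun_prop
  have per : ∀ (w c : ℂ), c ≠ 0 → (b * w).re = -Real.log ‖c‖ → (∀ z, sigma L (z + w) *
      exp (-(A * (z + w) ^ 2 / 2)) = c * (sigma L z * exp (-(A * z ^ 2 / 2)))) →
      ∀ z, ‖G (z + w)‖ = ‖G z‖ := by
    intro w c hc hb hs z
    have e1 : ‖exp (b * (z + w))‖ = ‖exp (b * z)‖ * ‖c‖⁻¹ := by
      rw [mul_add, exp_add, norm_mul, Complex.norm_exp (b * w), hb, Real.exp_neg,
        Real.exp_log (norm_pos_iff.mpr hc)]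
    have : ‖c‖ ≠ 0 := norm_ne_zero_iff.mpr hc
    simp only [G]
    rw [norm_mul, hs, e1, norm_mul, norm_mul (_ * _) (exp (b * z))]
    field_simp
  have hbd : Bornology.IsBounded (range G) := by
    have hc := IsZLattice.isCompact_range_of_periodic L.lattice (fun z => ‖G z‖)
      hG.continuous.norm (fun z w hw => periodic_of_gens (f := fun z => ‖G z‖) L (per _ _ hc₁ hb₁ hs₁)
        (per _ _ hc₂ hb₂ hs₂) hw z)
    obtain ⟨M, hM⟩ := hc.isBounded.bddAbove
    refine isBounded_iff_forall_norm_le.mpr ⟨M, ?_⟩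
    rintro _ ⟨z, rfl⟩
    exact hM ⟨z, rfl⟩
  have h0 := hG.apply_eq_apply_of_bounded hbd ((L.ω₁ + L.ω₂) / 3) 0
  have h3 := sigma_ne_zero L (third_notMem L)
  simp only [G, sigma_eq_zero L (zero_mem _), zero_mul] at h0
  exact mul_ne_zero (mul_ne_zero h3 (exp_ne_zero _)) (exp_ne_zero _) h0

/-- The Legendre relation up to a nonzero integer factor, obtained by translating `σ` by both
periods; for questions of transcendence degree the factor is irrelevant. -/
lemma legendre : ∃ n : ℤ, n ≠ 0 ∧
    L.ω₂ * eta L L.ω₁ - L.ω₁ * eta L L.ω₂ = n * (2 * Real.pi * I) := by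
  obtain ⟨c₁, hc₁, hs₁⟩ := sigma_add L L.ω₁_mem_lattice
  obtain ⟨c₂, hc₂, hs₂⟩ := sigma_add L L.ω₂_mem_lattice
  have h3 := sigma_ne_zero L (third_notMem L)
  set z := (L.ω₁ + L.ω₂) / 3
  have e1 := hs₁ (z + L.ω₂)
  have e2 := hs₂ (z + L.ω₁)
  rw [hs₂] at e1
  rw [hs₁] at e2
  rw [add_right_comm, e2] at e1
  have e3 : exp (eta L L.ω₁ * L.ω₂) = exp (eta L L.ω₂ * L.ω₁) := by
    have p1 := exp_ne_zero (eta L L.ω₁ * z)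
    have p2 := exp_ne_zero (eta L L.ω₂ * z)
    rw [mul_add, mul_add, exp_add, exp_add] at e1
    have : c₁ * c₂ * exp (eta L L.ω₁ * z) * exp (eta L L.ω₂ * z) * sigma L z ≠ 0 := by
      simp [hc₁, hc₂, h3]
    apply mul_left_cancel₀ this
    linear_combination -e1
  obtain ⟨n, hn⟩ := exp_eq_exp_iff_exists_int.mp e3
  refine ⟨n, ?_, by linear_combination hn⟩
  rintro rfl
  apply legendre_ne L
  push_cast at hn
  linear_combination hn

end SemiElliptic

/-! ### Elliptic functions with poles at the lattice points -/

namespace SemiElliptic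
open Filter Topology Set
open scoped PeriodPair

variable (L : PeriodPair)

/-- Two functions agree as germs on every punctured neighbourhood, i.e. off a discrete set. -/
def GermEq (f g : ℂ → ℂ) : Prop := ∀ z, f =ᶠ[𝓝[≠] z] g

/-- `f` is an elliptic function, specified off a discrete set, whose only possible poles are the
lattice points, with order at most `M`. The function is required to be analytic only up to its
values on a discrete set, so that no condition is put on junk values at removable singularities. -/
structure Ell (f : ℂ → ℂ) (M : ℕ) : Prop where
  per : ∀ w ∈ L.lattice, ∀ z, ∀ᶠ u in 𝓝[≠] z, f (u + w) = f u
  reg : ∀ z ∉ L.lattice, ∃ ψ, AnalyticAt ℂ ψ z ∧ f =ᶠ[𝓝[≠] z] ψ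
  pole : ∃ φ, AnalyticAt ℂ φ 0 ∧ ∀ᶠ u in 𝓝[≠] 0, u ^ M * f u = φ u

lemma wp_add {w : ℂ} (hw : w ∈ L.lattice) (z : ℂ) : ℘[L] (z + w) = ℘[L] z :=
  L.weierstrassP_add_coe z ⟨w, hw⟩

lemma wp'_add {w : ℂ} (hw : w ∈ L.lattice) (z : ℂ) : ℘'[L] (z + w) = ℘'[L] z :=
  L.derivWeierstrassP_add_coe z ⟨w, hw⟩

lemma analyticAt_wp {z : ℂ} (hz : z ∉ L.lattice) : AnalyticAt ℂ ℘[L] z :=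
  L.analyticOnNhd_weierstrassP z hz

lemma analyticAt_wp' {z : ℂ} (hz : z ∉ L.lattice) : AnalyticAt ℂ ℘'[L] z :=
  L.analyticOnNhd_derivWeierstrassP z hz

lemma hasDerivAt_wp {z : ℂ} (hz : z ∉ L.lattice) : HasDerivAt ℘[L] (℘'[L] z) z := by
  rw [← L.deriv_weierstrassP]
  exact (analyticAt_wp L hz).differentiableAt.hasDerivAt

lemma wp_eq_except {z : ℂ} : ℘[L] z = L.weierstrassPExcept 0 z + 1 / z ^ 2 := by
  have := L.weierstrassPExcept_add 0 z
  simp only [ZeroMemClass.coe_zero, sub_zero] at this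
  rw [← this]; simp

lemma wp'_eq_except {z : ℂ} : ℘'[L] z = L.derivWeierstrassPExcept 0 z - 2 / z ^ 3 := by
  have := L.derivWeierstrassPExcept_def 0 z
  simp only [ZeroMemClass.coe_zero, sub_zero] at this
  rw [this]; ring

variable {L} {f g : ℂ → ℂ} {M N : ℕ}

namespace Ell

lemma congr (hf : Ell L f M) (h : GermEq f g) : Ell L g M := by
  refine ⟨fun w hw z => ?_, fun z hz => ?_, ?_⟩
  · have h1 : ∀ᶠ u in 𝓝[≠] z, f (u + w) = g (u + w) := by
      have ht : Tendsto (fun u => u + w) (𝓝[≠] z) (𝓝[≠] (z + w)) := by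
        refine tendsto_nhdsWithin_of_tendsto_nhds_of_eventually_within _
          (Continuous.tendsto' (by fun_prop) _ _ rfl |>.mono_left nhdsWithin_le_nhds) ?_
        filter_upwards [self_mem_nhdsWithin] with u hu
        simpa using hu
      exact ht.eventually (h (z + w))
    filter_upwards [hf.per w hw z, h1, h z] with u h2 h3 h4
    rw [← h3, h2, h4]
  · obtain ⟨ψ, h1, h2⟩ := hf.reg z hz
    exact ⟨ψ, h1, (h z).symm.trans h2⟩
  · obtain ⟨φ, h1, h2⟩ := hf.pole
    refine ⟨φ, h1, ?_⟩
    filter_upwards [h 0, h2] with u h3 h4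
    rw [← h3, h4]

lemma add (hf : Ell L f M) (hg : Ell L g M) : Ell L (fun u => f u + g u) M := by
  refine ⟨fun w hw z => ?_, fun z hz => ?_, ?_⟩
  · filter_upwards [hf.per w hw z, hg.per w hw z] with u h1 h2
    rw [h1, h2]
  · obtain ⟨ψ, h1, h2⟩ := hf.reg z hz
    obtain ⟨χ, h3, h4⟩ := hg.reg z hz
    exact ⟨fun u => ψ u + χ u, h1.fun_add h3, h2.add h4⟩
  · obtain ⟨φ, h1, h2⟩ := hf.pole
    obtain ⟨χ, h3, h4⟩ := hg.pole
    refine ⟨fun u => φ u + χ u, h1.fun_add h3, ?_⟩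
    filter_upwards [h2, h4] with u h5 h6
    rw [← h5, ← h6]; ring

lemma mul (hf : Ell L f M) (hg : Ell L g N) : Ell L (fun u => f u * g u) (M + N) := by
  refine ⟨fun w hw z => ?_, fun z hz => ?_, ?_⟩
  · filter_upwards [hf.per w hw z, hg.per w hw z] with u h1 h2
    rw [h1, h2]
  · obtain ⟨ψ, h1, h2⟩ := hf.reg z hz
    obtain ⟨χ, h3, h4⟩ := hg.reg z hz
    exact ⟨fun u => ψ u * χ u, h1.fun_mul h3, h2.mul h4⟩
  · obtain ⟨φ, h1, h2⟩ := hf.pole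
    obtain ⟨χ, h3, h4⟩ := hg.pole
    refine ⟨fun u => φ u * χ u, h1.fun_mul h3, ?_⟩
    filter_upwards [h2, h4] with u h5 h6
    rw [← h5, ← h6]; ring

lemma const (c : ℂ) : Ell L (fun _ => c) 0 :=
  ⟨fun _ _ _ => .of_forall fun _ => rfl, fun _ _ => ⟨fun _ => c, analyticAt_const, .refl _ _⟩,
    ⟨fun _ => c, analyticAt_const, .of_forall fun _ => by simp⟩⟩

lemma mono (hf : Ell L f M) (h : M ≤ N) : Ell L f N := by
  refine ⟨hf.per, hf.reg, ?_⟩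
  obtain ⟨φ, h1, h2⟩ := hf.pole
  refine ⟨fun u => u ^ (N - M) * φ u, by fun_prop, ?_⟩
  filter_upwards [h2] with u h3
  rw [← h3, ← mul_assoc, ← pow_add, Nat.sub_add_cancel h]

variable (L) in
lemma wp : Ell L ℘[L] 2 := by
  refine ⟨fun w hw z => .of_forall fun u => wp_add L hw u,
    fun z hz => ⟨_, analyticAt_wp L hz, .refl _ _⟩,
    ⟨fun u => u ^ 2 * L.weierstrassPExcept 0 u + 1, by fun_prop, ?_⟩⟩
  filter_upwards [self_mem_nhdsWithin] with u hu
  have hu : u ≠ 0 := hu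
  rw [wp_eq_except]; field_simp

variable (L) in
lemma wp' : Ell L ℘'[L] 3 := by
  refine ⟨fun w hw z => .of_forall fun u => wp'_add L hw u,
    fun z hz => ⟨_, analyticAt_wp' L hz, .refl _ _⟩,
    ⟨fun u => u ^ 3 * L.derivWeierstrassPExcept 0 u - 2, by fun_prop, ?_⟩⟩
  filter_upwards [self_mem_nhdsWithin] with u hu
  have hu : u ≠ 0 := hu
  rw [wp'_eq_except]; field_simp

variable (L) in
lemma wp_pow (i : ℕ) : Ell L (fun u => ℘[L] u ^ i) (2 * i) := by
  induction i with
  | zero => simpa using const 1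
  | succ n ih => simpa [pow_succ, mul_add] using ih.mul (wp L)

lemma const_mul (c : ℂ) (hf : Ell L f M) : Ell L (fun u => c * f u) M := by
  simpa using (const c).mul hf

/-- If the leading Laurent coefficient vanishes, then the pole order drops. -/
lemma lower (hf : Ell L f (M + 1))
    (h : Tendsto (fun u => u ^ (M + 1) * f u) (𝓝[≠] 0) (𝓝 0)) : Ell L f M := by
  refine ⟨hf.per, hf.reg, ?_⟩
  obtain ⟨φ, h1, h2⟩ := hf.pole
  have h3 : φ 0 = 0 := tendsto_nhds_unique
    (h1.continuousAt.tendsto.mono_left nhdsWithin_le_nhds) (h.congr' h2)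
  obtain ⟨p, hp⟩ := h1
  refine ⟨dslope φ 0, ⟨_, hp.has_fpower_series_dslope_fslope⟩, ?_⟩
  filter_upwards [h2, self_mem_nhdsWithin] with u hu hu0
  have hu0 : u ≠ 0 := hu0
  rw [dslope_of_ne _ hu0, slope_def_field, h3, ← hu, sub_zero, sub_zero, eq_div_iff hu0]
  ring

end Ell

/-- A function with removable singularities everywhere is an entire function, up to values on a
discrete set. -/
lemma exists_entire (h : ∀ z, ∃ ψ, AnalyticAt ℂ ψ z ∧ f =ᶠ[𝓝[≠] z] ψ) :
    ∃ G : ℂ → ℂ, Differentiable ℂ G ∧ GermEq f G := by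
  choose ψ hψ hf using h
  have hlim : ∀ z, Tendsto f (𝓝[≠] z) (𝓝 (ψ z z)) := fun z =>
    ((hψ z).continuousAt.tendsto.mono_left nhdsWithin_le_nhds).congr' (hf z).symm
  have key : ∀ z, (fun u => ψ u u) =ᶠ[𝓝 z] ψ z := by
    intro z
    have h1 := (hf z)
    rw [EventuallyEq, eventually_nhdsWithin_iff] at h1
    have h2 := (hψ z).eventually_analyticAt
    filter_upwards [eventually_eventually_nhds.mpr h1, h2] with u hu hu2
    by_cases huz : u = z
    · rw [huz]
    · have h3 : f =ᶠ[𝓝[≠] u] ψ z := by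
        rw [EventuallyEq, eventually_nhdsWithin_iff]
        have : ∀ᶠ x in 𝓝 u, x ≠ z := isOpen_ne.mem_nhds huz
        filter_upwards [hu, this] with x hx hxz _
        exact hx hxz
      exact tendsto_nhds_unique (hlim u)
        ((hu2.continuousAt.tendsto.mono_left nhdsWithin_le_nhds).congr' h3.symm)
  refine ⟨fun u => ψ u u, fun z => ((hψ z).congr (key z).symm).differentiableAt, fun z => ?_⟩
  exact (hf z).trans ((key z).symm.filter_mono nhdsWithin_le_nhds)

lemma eq_of_germ {x : ℂ} (hf : ContinuousAt f x) (hg : ContinuousAt g x) (h : f =ᶠ[𝓝[≠] x] g) :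
    f x = g x :=
  tendsto_nhds_unique ((hf.tendsto.mono_left nhdsWithin_le_nhds).congr' h)
    (hg.tendsto.mono_left nhdsWithin_le_nhds)

lemma tendsto_add_right (z w : ℂ) : Tendsto (fun u => u + w) (𝓝[≠] z) (𝓝[≠] (z + w)) := by
  refine tendsto_nhdsWithin_of_tendsto_nhds_of_eventually_within _
    (Continuous.tendsto' (by fun_prop) _ _ rfl |>.mono_left nhdsWithin_le_nhds) ?_
  filter_upwards [self_mem_nhdsWithin] with u hu
  simpa using hu

/-- An entire function periodic with respect to the lattice is constant. -/
lemma entire_periodic_const {G : ℂ → ℂ} (hG : Differentiable ℂ G)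
    (hp : ∀ w ∈ L.lattice, ∀ z, G (z + w) = G z) (z : ℂ) : G z = G 0 :=
  hG.apply_eq_apply_of_bounded (IsZLattice.isCompact_range_of_periodic L.lattice _
    hG.continuous fun z w hw ↦ hp w hw z).isBounded z 0

/-- Removability at the lattice points, for a function translated by constants. -/
lemma reg_of_zero (hper : ∀ w ∈ L.lattice, ∃ c : ℂ, ∀ z, ∀ᶠ u in 𝓝[≠] z, f (u + w) = f u + c)
    (h0 : ∃ φ, AnalyticAt ℂ φ 0 ∧ f =ᶠ[𝓝[≠] 0] φ) {w : ℂ} (hw : w ∈ L.lattice) :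
    ∃ ψ, AnalyticAt ℂ ψ w ∧ f =ᶠ[𝓝[≠] w] ψ := by
  obtain ⟨φ, h1, h2⟩ := h0
  obtain ⟨c, hc⟩ := hper (-w) (neg_mem hw)
  refine ⟨fun u => φ (u + -w) - c, ?_, ?_⟩
  · refine AnalyticAt.fun_sub ?_ analyticAt_const
    refine AnalyticAt.fun_comp (g := φ) (f := fun u => u + -w) ?_ (by fun_prop)
    simpa using h1
  · have := tendsto_add_right w (-w)
    rw [add_neg_cancel] at this
    filter_upwards [this.eventually h2, hc w] with u h3 h4
    rw [← h3, h4]; ring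

lemma Ell.const_of_zero (hf : Ell L f 0) : ∃ c, GermEq f fun _ => c := by
  have h0 : ∃ φ, AnalyticAt ℂ φ 0 ∧ f =ᶠ[𝓝[≠] 0] φ := by
    obtain ⟨φ, h1, h2⟩ := hf.pole
    exact ⟨φ, h1, h2.mono fun u hu => by simpa using hu⟩
  obtain ⟨G, hG, hfG⟩ := exists_entire (f := f) (fun z => by
    by_cases hz : z ∈ L.lattice
    · exact reg_of_zero (fun w hw => ⟨0, by simpa using hf.per w hw⟩) h0 hz
    · exact hf.reg z hz)
  refine ⟨G 0, fun z => (hfG z).trans ?_⟩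
  refine .of_forall fun u => entire_periodic_const (L := L) hG (fun w hw z => ?_) u
  have hGc := hG.continuous
  refine eq_of_germ (f := fun z => G (z + w)) (Continuous.continuousAt (by fun_prop))
    hGc.continuousAt ?_
  filter_upwards [(tendsto_add_right z w).eventually (hfG (z + w)), hfG z, hf.per w hw z]
    with u h1 h2 h3
  rw [← h1, ← h2, h3]

/-- There is no elliptic function with a single simple pole. -/
lemma Ell.const_of_one (hf : Ell L f 1) : ∃ c, GermEq f fun _ => c := by
  obtain ⟨φ, h1, h2⟩ := hf.pole
  have h2' : ∀ᶠ u in 𝓝[≠] (0 : ℂ), u ^ (0 + 1) * f u = φ u := by simpa using h2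
  suffices hc : φ 0 = 0 by
    refine (lower (M := 0) hf ?_).const_of_zero
    have h4 := (h1.continuousAt.tendsto.mono_left (nhdsWithin_le_nhds (s := {0}ᶜ))).congr'
      (h2'.mono fun u h => h.symm)
    rwa [hc] at h4
  set c := φ 0
  -- subtracting `c ζ` leaves an entire function with additive periods
  have hp : ∀ w ∈ L.lattice, ∀ z, ∀ᶠ u in 𝓝[≠] z,
      f (u + w) - c * zeta L (u + w) = f u - c * zeta L u + -(c * eta L w) := by
    intro w hw z
    filter_upwards [hf.per w hw z, notMem_near L z] with u h3 h4
    rw [h3, zeta_add L h4 hw]; ring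
  have h0 : ∃ χ, AnalyticAt ℂ χ 0 ∧ (fun u => f u - c * zeta L u) =ᶠ[𝓝[≠] 0] χ := by
    obtain ⟨p, hp⟩ := h1
    refine ⟨fun u => dslope φ 0 u - c * zetaReg L u, AnalyticAt.fun_sub
      ⟨_, hp.has_fpower_series_dslope_fslope⟩ (AnalyticAt.fun_mul analyticAt_const
        (analyticAt_zetaReg L (by simp))), ?_⟩
    filter_upwards [h2', self_mem_nhdsWithin, notMem_near_zero L] with u hu hu0 hu1
    have hu0 : u ≠ 0 := hu0
    rw [dslope_of_ne _ hu0, slope_def_field, zeta_eq L hu1, ← hu, sub_zero]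
    field_simp
    ring
  obtain ⟨G, hG, hfG⟩ := exists_entire (f := fun u => f u - c * zeta L u) (fun z => by
    by_cases hz : z ∈ L.lattice
    · exact reg_of_zero (fun w hw => ⟨_, hp w hw⟩) h0 hz
    · obtain ⟨ψ, h3, h4⟩ := hf.reg z hz
      exact ⟨fun u => ψ u - c * zeta L u, h3.fun_sub (analyticAt_const.fun_mul (analyticAt_zeta L hz)),
        by filter_upwards [h4] with u hu; rw [hu]⟩)
  have hGp : ∀ w ∈ L.lattice, ∀ z, G (z + w) = G z + -(c * eta L w) := by
    intro w hw z
    have hGc := hG.continuous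
    refine eq_of_germ (f := fun z => G (z + w)) (g := fun z => G z + -(c * eta L w))
      (Continuous.continuousAt (by fun_prop)) (Continuous.continuousAt (by fun_prop)) ?_
    filter_upwards [(tendsto_add_right z w).eventually (hfG (z + w)), hfG z, hp w hw z]
      with u h1 h2 h3
    rw [← h1, ← h2, h3]
  have hG' : ∀ z, deriv G z = deriv G 0 := by
    refine entire_periodic_const (L := L) ?_ (fun w hw z => ?_)
    · exact fun z => (hG.analyticAt z).deriv.differentiableAt
    · have : (fun z => G (z + w)) = fun z => G z + -(c * eta L w) := funext (hGp w hw)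
      rw [← deriv_comp_add_const, this, deriv_add_const]
  set a := deriv G 0
  have hlin : ∀ w, G w = G 0 + a * w := by
    intro w
    have := eq_of_deriv_zero (f := fun z => G z - a * z) isOpen_univ isPreconnected_univ
      (fun z _ => by
        have h3 := (hG z).hasDerivAt
        rw [hG' z] at h3
        simpa using! h3.sub ((hasDerivAt_id z).const_mul a)) (mem_univ w) (mem_univ 0)
    linear_combination this
  have e : ∀ w ∈ L.lattice, a * w = -(c * eta L w) := by
    intro w hw
    have h3 := hGp w hw 0
    rw [zero_add, hlin] at h3
    linear_combination h3
  by_contra hc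
  apply legendre_ne L
  have e1 := e _ L.ω₁_mem_lattice
  have e2 := e _ L.ω₂_mem_lattice
  apply mul_left_cancel₀ hc
  linear_combination L.ω₂ * e1 - L.ω₁ * e2

lemma tendsto_wp : Tendsto (fun u => u ^ 2 * ℘[L] u) (𝓝[≠] 0) (𝓝 1) := by
  have : AnalyticAt ℂ (fun u => u ^ 2 * L.weierstrassPExcept 0 u + 1) 0 := by fun_prop
  have h := this.continuousAt.tendsto.mono_left (nhdsWithin_le_nhds (s := {0}ᶜ))
  simp only [ne_eq, OfNat.ofNat_ne_zero, not_false_eq_true, zero_pow, zero_mul, zero_add] at h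
  refine h.congr' ?_
  filter_upwards [self_mem_nhdsWithin] with u hu
  have hu : u ≠ 0 := hu
  rw [wp_eq_except]; field_simp

lemma tendsto_wp' : Tendsto (fun u => u ^ 3 * ℘'[L] u) (𝓝[≠] 0) (𝓝 (-2)) := by
  have : AnalyticAt ℂ (fun u => u ^ 3 * L.derivWeierstrassPExcept 0 u - 2) 0 := by fun_prop
  have h := this.continuousAt.tendsto.mono_left (nhdsWithin_le_nhds (s := {0}ᶜ))
  simp only [ne_eq, OfNat.ofNat_ne_zero, not_false_eq_true, zero_pow, zero_mul, zero_sub] at h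
  refine h.congr' ?_
  filter_upwards [self_mem_nhdsWithin] with u hu
  have hu : u ≠ 0 := hu
  rw [wp'_eq_except]; field_simp

lemma Ell.tendsto_pole (hf : Ell L f M) : ∃ c, Tendsto (fun u => u ^ M * f u) (𝓝[≠] 0) (𝓝 c) := by
  obtain ⟨φ, h1, h2⟩ := hf.pole
  exact ⟨φ 0, (h1.continuousAt.tendsto.mono_left nhdsWithin_le_nhds).congr'
      (h2.mono fun u h => h.symm)⟩

/-- Subtracting a multiple of an elliptic function with the same pole order lowers the order. -/
lemma Ell.sub_mul (hf : Ell L f (M + 1)) (hg : Ell L g (M + 1)) {d : ℂ} (hd : d ≠ 0)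
    (h : Tendsto (fun u => u ^ (M + 1) * g u) (𝓝[≠] 0) (𝓝 d)) :
    ∃ c, Ell L (fun u => f u + c * g u) M := by
  obtain ⟨b, hb⟩ := hf.tendsto_pole
  refine ⟨-b / d, lower (hf.add (hg.const_mul _)) ?_⟩
  have := hb.add (h.const_mul (-b / d))
  rw [div_mul_cancel₀ _ hd, add_neg_cancel] at this
  exact this.congr fun u => by ring

lemma Ell.of_two (hf : Ell L f 2) : ∃ a b, GermEq f fun u => a + b * ℘[L] u := by
  obtain ⟨c, hc⟩ := hf.sub_mul (M := 1) (Ell.wp L) one_ne_zero tendsto_wp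
  obtain ⟨a, ha⟩ := hc.const_of_one
  refine ⟨a, -c, fun z => ?_⟩
  filter_upwards [ha z] with u hu
  rw [← hu]; ring

open Polynomial in
/-- An elliptic function with poles only at the lattice points is a polynomial in `℘` and `℘'`: the
pole order `M ≥ 2` is lowered by subtracting a multiple of a power of `℘`, times `℘'` if `M` is
odd. -/
lemma Ell.exists_poly (hf : Ell L f M) :
    ∃ P Q : ℂ[X], GermEq f fun u => P.eval (℘[L] u) + Q.eval (℘[L] u) * ℘'[L] u := by
  induction M using Nat.strong_induction_on generalizing f with
  | _ M ih =>
    have simple : (∃ c, GermEq f fun _ => c) →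
        ∃ P Q : ℂ[X], GermEq f fun u => P.eval (℘[L] u) + Q.eval (℘[L] u) * ℘'[L] u := by
      rintro ⟨c, hc⟩
      exact ⟨C c, 0, by simpa using hc⟩
    match M, hf, ih with
    | 0, hf, _ => exact simple hf.const_of_zero
    | 1, hf, _ => exact simple hf.const_of_one
    | M + 2, hf, ih =>
      rcases Nat.even_or_odd' M with ⟨i, rfl | rfl⟩
      · obtain ⟨c, hc⟩ := hf.sub_mul (M := 2 * i + 1) (g := fun u => ℘[L] u ^ (i + 1))
          (Ell.wp_pow L (i + 1)) one_ne_zero (by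
            have := (tendsto_wp (L := L)).pow (i + 1)
            rw [one_pow] at this
            exact this.congr fun u => by ring)
        obtain ⟨P, Q, h⟩ := ih _ (by omega) hc
        refine ⟨P - C c * X ^ (i + 1), Q, fun z => ?_⟩
        filter_upwards [h z] with u hu
        simp only [eval_sub, eval_mul, eval_C, eval_pow, eval_X]
        linear_combination hu
      · obtain ⟨c, hc⟩ := hf.sub_mul (M := 2 * i + 2) (g := fun u => ℘[L] u ^ i * ℘'[L] u)
          ((Ell.wp_pow L i).mul (Ell.wp' L)) (d := -2) (by norm_num) (by
            have := ((tendsto_wp (L := L)).pow i).mul (tendsto_wp' (L := L))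
            rw [one_pow, one_mul] at this
            exact this.congr fun u => by ring)
        obtain ⟨P, Q, h⟩ := ih _ (by omega) hc
        refine ⟨P, Q - C c * X ^ i, fun z => ?_⟩
        filter_upwards [h z] with u hu
        simp only [eval_sub, eval_mul, eval_C, eval_pow, eval_X]
        linear_combination hu

end SemiElliptic

/-! ### Factorization of differences of values of `℘` -/

namespace SemiElliptic
open Filter Topology Set
open scoped PeriodPair

variable {L : PeriodPair}

lemma sigma_eq (z : ℂ) : sigma L z = z * sigmaQuot L z := wSigma_eq L z

/-- `℘(w) - ℘(v)` is proportional to `σ(w + v) σ(w - v) / σ(w)²`, as a function of `w`. -/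
lemma exists_sigma_mul_sigma {v : ℂ} (hv : v ∉ L.lattice) :
    ∃ b : ℂ, b ≠ 0 ∧ ∀ w, w ∉ L.lattice →
      sigma L (w + v) * sigma L (w - v) = b * sigma L w ^ 2 * (℘[L] w - ℘[L] v) := by
  let Ψ : ℂ → ℂ := fun w => sigma L (w + v) * sigma L (w - v) / sigma L w ^ 2
  have hs := differentiable_sigma L
  have han : ∀ z, z ∉ L.lattice → AnalyticAt ℂ Ψ z := by
    intro z hz
    have : sigma L z ^ 2 ≠ 0 := pow_ne_zero _ (sigma_ne_zero L hz)
    refine AnalyticAt.fun_div ?_ ?_ this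
    · exact Differentiable.analyticAt (by fun_prop) z
    · exact Differentiable.analyticAt (by fun_prop) z
  have hE : Ell L Ψ 2 := by
    refine ⟨fun w hw z => ?_, fun z hz => ⟨Ψ, han z hz, .refl _ _⟩, ?_⟩
    · filter_upwards [notMem_near L z] with x hx
      obtain ⟨C, hC, hs⟩ := sigma_add L hw
      have e1 : x + w + v = x + v + w := by ring
      have e2 : x + w - v = x - v + w := by ring
      simp only [Ψ]
      rw [e1, e2, hs, hs, hs, mul_add, mul_sub, exp_add, exp_sub]
      have := exp_ne_zero (eta L w * x)
      have := exp_ne_zero (eta L w * v)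
      have := sigma_ne_zero L hx
      field_simp
    · have hq := differentiable_sigmaQuot L
      refine ⟨fun w => sigma L (w + v) * sigma L (w - v) / sigmaQuot L w ^ 2,
        AnalyticAt.fun_div ?_ ?_ (pow_ne_zero _ (sigmaQuot_ne_zero L (.inr rfl))), ?_⟩
      · exact Differentiable.analyticAt (by fun_prop) _
      · exact Differentiable.analyticAt (by fun_prop) _
      · filter_upwards [self_mem_nhdsWithin, notMem_near_zero L] with x hx hx2
        have hx : x ≠ 0 := hx
        have := sigmaQuot_ne_zero L (.inl hx2)
        simp only [Ψ]
        rw [sigma_eq x]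
        field_simp
  obtain ⟨a, b, hab⟩ := hE.of_two
  have key : ∀ z, z ∉ L.lattice → Ψ z = a + b * ℘[L] z := fun z hz =>
    eq_of_germ (g := fun z => a + b * ℘[L] z) (han z hz).continuousAt
      (continuousAt_const.add (continuousAt_const.mul (analyticAt_wp L hz).continuousAt)) (hab z)
  have h1 := key v hv
  simp only [Ψ, sub_self, sigma_eq_zero L (zero_mem _), mul_zero, zero_div] at h1
  have hform : ∀ w, w ∉ L.lattice →
      sigma L (w + v) * sigma L (w - v) = b * sigma L w ^ 2 * (℘[L] w - ℘[L] v) := by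
    intro w hw
    have h2 := key w hw
    have hs := sigma_ne_zero L hw
    simp only [Ψ] at h2
    rw [div_eq_iff (pow_ne_zero _ hs)] at h2
    linear_combination h2 - sigma L w ^ 2 * h1
  refine ⟨b, ?_, hform⟩
  rintro rfl
  have e1 : ∀ᶠ w in 𝓝[≠] (0 : ℂ), w + v ∉ L.lattice :=
    (tendsto_add_right 0 v).eventually ((notMem_near L _))
  have e2 : ∀ᶠ w in 𝓝[≠] (0 : ℂ), w - v ∉ L.lattice := by
    simpa only [← sub_eq_add_neg] using (tendsto_add_right 0 (-v)).eventually (notMem_near L _)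
  obtain ⟨w, h1, h2, h3⟩ := (e1.and (e2.and (notMem_near_zero L))).exists
  have := hform w h3
  rw [zero_mul, zero_mul] at this
  exact mul_ne_zero (sigma_ne_zero L h1) (sigma_ne_zero L h2) this

/-- `℘` takes equal values only at points that agree up to sign modulo the lattice. -/
lemma wp_inj {u v : ℂ} (hu : u ∉ L.lattice) (hv : v ∉ L.lattice) (h : ℘[L] u = ℘[L] v) :
    u + v ∈ L.lattice ∨ u - v ∈ L.lattice := by
  obtain ⟨b, -, hb⟩ := exists_sigma_mul_sigma hv
  have := hb u hu
  rw [h, sub_self, mul_zero] at this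
  by_contra! hcon
  exact mul_ne_zero (sigma_ne_zero L hcon.1) (sigma_ne_zero L hcon.2) this

end SemiElliptic

/-! ### Addition and duplication formulas -/

namespace SemiElliptic
open Filter Topology Set
open scoped PeriodPair

variable {L : PeriodPair}

/-- Logarithmic derivative of the factorization of `℘(w) - ℘(v)`, at `w = u`. -/
lemma zeta_add_zeta_sub {u v : ℂ} (hu : u ∉ L.lattice) (hv : v ∉ L.lattice)
    (h1 : u + v ∉ L.lattice) (h2 : u - v ∉ L.lattice) :
    (zeta L (u + v) + zeta L (u - v) - 2 * zeta L u) * (℘[L] u - ℘[L] v) = ℘'[L] u := by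
  obtain ⟨b, hb, hf⟩ := exists_sigma_mul_sigma hv
  have d1 := ((hasDerivAt_sigma L h1).comp_add_const u v).fun_mul
    ((hasDerivAt_sigma L h2).comp_sub_const u v)
  have d2 := (((hasDerivAt_sigma L hu).fun_pow 2).const_mul b).fun_mul
    ((hasDerivAt_wp L hu).sub_const (℘[L] v))
  have heq : (fun w => sigma L (w + v) * sigma L (w - v)) =ᶠ[𝓝 u]
      fun w => b * sigma L w ^ 2 * (℘[L] w - ℘[L] v) := by
    filter_upwards [compl_mem_nhds L hu] with w hw using hf w hw
  have e := d1.unique (d2.congr_of_eventuallyEq heq)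
  have e0 := hf u hu
  have hs := sigma_ne_zero L hu
  have : b * sigma L u ^ 2 * ((zeta L (u + v) + zeta L (u - v) - 2 * zeta L u) *
      (℘[L] u - ℘[L] v) - ℘'[L] u) = 0 := by
    simp only [Nat.cast_ofNat, Nat.add_one_sub_one, pow_one] at e
    linear_combination e - (zeta L (u + v) + zeta L (u - v)) * e0
  have := (mul_eq_zero.1 this).resolve_left (mul_ne_zero hb (pow_ne_zero _ hs))
  linear_combination this

lemma wp_ne {u v : ℂ} (hu : u ∉ L.lattice) (hv : v ∉ L.lattice)
    (h1 : u + v ∉ L.lattice) (h2 : u - v ∉ L.lattice) : ℘[L] u - ℘[L] v ≠ 0 := fun h =>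
  (wp_inj hu hv (sub_eq_zero.1 h)).elim h1 h2

/-- The addition theorem of the Weierstrass zeta function. -/
lemma zeta_addition {u v : ℂ} (hu : u ∉ L.lattice) (hv : v ∉ L.lattice)
    (h1 : u + v ∉ L.lattice) (h2 : u - v ∉ L.lattice) :
    zeta L (u + v) =
      zeta L u + zeta L v + (℘'[L] u - ℘'[L] v) / (℘[L] u - ℘[L] v) / 2 := by
  have e1 := zeta_add_zeta_sub hu hv h1 h2
  have e2 := zeta_add_zeta_sub hv hu (by rwa [add_comm]) (by rwa [← neg_sub, neg_mem_iff])
  rw [add_comm v u, ← neg_sub u v, zeta_neg L h2] at e2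
  have := wp_ne hu hv h1 h2
  field_simp
  linear_combination e1 - e2

lemma deriv_sigma_zero : HasDerivAt (sigma L) (sigmaQuot L 0) 0 := by
  have h := (hasDerivAt_id (0 : ℂ)).fun_mul ((differentiable_sigmaQuot L) 0).hasDerivAt
  have e : sigma L = fun z => id z * sigmaQuot L z := funext sigma_eq
  rw [e]
  simpa using h

lemma wp'_ne_zero {v : ℂ} (hv : v ∉ L.lattice) (h2 : v + v ∉ L.lattice) : ℘'[L] v ≠ 0 := by
  intro h0
  obtain ⟨b, hb, hf⟩ := exists_sigma_mul_sigma hv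
  have d0 : HasDerivAt (fun w => sigma L (w - v)) (sigmaQuot L 0) v :=
    HasDerivAt.comp_sub_const v v (by simpa using! (deriv_sigma_zero (L := L)))
  have d1 := ((hasDerivAt_sigma L h2).comp_add_const v v).fun_mul d0
  have d2 := (((hasDerivAt_sigma L hv).fun_pow 2).const_mul b).fun_mul
    ((hasDerivAt_wp L hv).sub_const (℘[L] v))
  have heq : (fun w => sigma L (w + v) * sigma L (w - v)) =ᶠ[𝓝 v]
      fun w => b * sigma L w ^ 2 * (℘[L] w - ℘[L] v) := by
    filter_upwards [compl_mem_nhds L hv] with w hw using hf w hw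
  have e := d1.unique (d2.congr_of_eventuallyEq heq)
  simp only [sub_self, h0, sigma_eq_zero L (zero_mem _), mul_zero, add_zero, zero_add] at e
  exact mul_ne_zero (sigma_ne_zero L h2) (sigmaQuot_ne_zero L (.inr rfl)) e

lemma two_third_notMem : (L.ω₁ + L.ω₂) / 3 + (L.ω₁ + L.ω₂) / 3 ∉ L.lattice := fun h =>
  third_notMem L (by
    have := sub_mem (add_mem L.ω₁_mem_lattice L.ω₂_mem_lattice) h
    rwa [show (L.ω₁ + L.ω₂) - ((L.ω₁ + L.ω₂) / 3 + (L.ω₁ + L.ω₂) / 3) = (L.ω₁ + L.ω₂) / 3 by ring]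
      at this)

/-- The second-order differential equation `℘'' = 6℘² - g₂/2`. -/
lemma hasDerivAt_wp' {z : ℂ} (hz : z ∉ L.lattice) :
    HasDerivAt ℘'[L] (6 * ℘[L] z ^ 2 - L.g₂ / 2) z := by
  have hEq : ∀ u, u ∉ L.lattice → ℘'[L] u ≠ 0 →
      deriv ℘'[L] u = 6 * ℘[L] u ^ 2 - L.g₂ / 2 := by
    intro u hu h0
    have d1 := (analyticAt_wp' L hu).differentiableAt.hasDerivAt.fun_pow 2
    have hw := hasDerivAt_wp L hu
    have d2 := (((hw.fun_pow 3).const_mul 4).fun_sub (hw.const_mul L.g₂)).sub_const L.g₃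
    have heq : (fun w => ℘'[L] w ^ 2) =ᶠ[𝓝 u]
        fun w => 4 * ℘[L] w ^ 3 - L.g₂ * ℘[L] w - L.g₃ := by
      filter_upwards [compl_mem_nhds L hu] with w hw using L.derivWeierstrassP_sq w hw
    have e := d1.unique (d2.congr_of_eventuallyEq heq)
    simp only [Nat.cast_ofNat, Nat.add_one_sub_one, pow_one] at e
    have : 2 * ℘'[L] u * (deriv ℘'[L] u - (6 * ℘[L] u ^ 2 - L.g₂ / 2)) = 0 := by
      linear_combination e
    have := (mul_eq_zero.1 this).resolve_left (by simpa using h0)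
    linear_combination this
  have h3 := third_notMem L
  have hE := AnalyticOnNhd.eqOn_of_preconnected_of_eventuallyEq (𝕜 := ℂ)
    (f := deriv ℘'[L]) (g := fun u => 6 * ℘[L] u ^ 2 - L.g₂ / 2)
    (U := {z | z ∉ L.lattice}) (z₀ := (L.ω₁ + L.ω₂) / 3)
    (fun u hu => (analyticAt_wp' L hu).deriv)
    (fun u hu => by have := analyticAt_wp L hu; fun_prop)
    (isPreconnected_compl_lattice L) h3 (by
      have hc := (analyticAt_wp' L h3).continuousAt.eventually_ne
        (wp'_ne_zero h3 two_third_notMem)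
      filter_upwards [hc, compl_mem_nhds L h3] with u h1 h2 using hEq u h2 h1)
  have := (analyticAt_wp' L hz).differentiableAt.hasDerivAt
  rwa [hE hz] at this

/-- Addition theorem for `℘`, in the form obtained by differentiating that of `ζ`. -/
lemma wp_addition {u v : ℂ} (hu : u ∉ L.lattice) (hv : v ∉ L.lattice)
    (h1 : u + v ∉ L.lattice) (h2 : u - v ∉ L.lattice) :
    ℘[L] (u + v) = ℘[L] u - ((6 * ℘[L] u ^ 2 - L.g₂ / 2) * (℘[L] u - ℘[L] v) -
      (℘'[L] u - ℘'[L] v) * ℘'[L] u) / (℘[L] u - ℘[L] v) ^ 2 / 2 := by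
  have d1 := (hasDerivAt_zeta L h1).comp_add_const u v
  have d2 := ((hasDerivAt_zeta L hu).add_const (zeta L v)).fun_add
    ((((hasDerivAt_wp' hu).sub_const (℘'[L] v)).fun_div
      ((hasDerivAt_wp L hu).sub_const (℘[L] v)) (wp_ne hu hv h1 h2)).div_const 2)
  have heq : (fun w => zeta L (w + v)) =ᶠ[𝓝 u] fun w => zeta L w + zeta L v +
      (℘'[L] w - ℘'[L] v) / (℘[L] w - ℘[L] v) / 2 := by
    have c1 : ∀ᶠ w in 𝓝 u, w + v ∉ L.lattice :=
      (by fun_prop : Continuous fun w => w + v).continuousAt.eventually (compl_mem_nhds L h1)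
    have c2 : ∀ᶠ w in 𝓝 u, w - v ∉ L.lattice :=
      (by fun_prop : Continuous fun w => w - v).continuousAt.eventually (compl_mem_nhds L h2)
    filter_upwards [c1, c2, compl_mem_nhds L hu] with w h1 h2 h3 using zeta_addition h3 hv h1 h2
  have e := d1.unique (d2.congr_of_eventuallyEq heq)
  linear_combination -e

/-- The duplication theorem of `ζ`, the limit of the addition theorem as `v → u`. -/
lemma zeta_dup {u : ℂ} (hu : u ∉ L.lattice) (h2 : u + u ∉ L.lattice) :
    zeta L (u + u) = 2 * zeta L u + (6 * ℘[L] u ^ 2 - L.g₂ / 2) / ℘'[L] u / 2 := by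
  have s1 := (hasDerivAt_iff_tendsto_slope.1 (hasDerivAt_wp' hu))
  have s2 := (hasDerivAt_iff_tendsto_slope.1 (hasDerivAt_wp L hu))
  have s3 := (s1.div s2 (wp'_ne_zero hu h2)).div_const 2
  have c1 : Tendsto (fun v => zeta L (u + v) - zeta L u - zeta L v) (𝓝[≠] u)
      (𝓝 (zeta L (u + u) - zeta L u - zeta L u)) := by
    have a1 := (analyticAt_zeta L h2).continuousAt
    have a2 := (analyticAt_zeta L hu).continuousAt
    have a3 : ContinuousAt (fun v => zeta L (u + v)) u :=
      ContinuousAt.comp (f := fun v => u + v) a1 (by fun_prop)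
    exact ((a3.sub continuousAt_const).sub a2).tendsto.mono_left nhdsWithin_le_nhds
  have := tendsto_nhds_unique (c1.congr' ?_) s3
  · linear_combination this
  · have c1 : ∀ᶠ w in 𝓝 u, u + w ∉ L.lattice :=
      (by fun_prop : Continuous fun w => u + w).continuousAt.eventually (compl_mem_nhds L h2)
    have c2 : ∀ᶠ w in 𝓝[≠] u, w - u ∉ L.lattice := by
      simpa only [← sub_eq_add_neg] using (tendsto_add_right u (-u)).eventually (notMem_near L _)
    filter_upwards [mem_nhdsWithin_of_mem_nhds c1, c2, self_mem_nhdsWithin,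
      mem_nhdsWithin_of_mem_nhds (compl_mem_nhds L hu)] with w h1 h2 h3 h4
    have hwu : w - u ≠ 0 := sub_ne_zero.2 h3
    have h2' : u - w ∉ L.lattice := by rwa [← neg_sub, neg_mem_iff]
    have hne := wp_ne hu h4 h1 h2'
    have hne2 : ℘[L] w - ℘[L] u ≠ 0 := by rwa [← neg_sub, neg_ne_zero]
    rw [zeta_addition hu h4 h1 h2']
    simp only [Pi.div_apply, slope_def_field]
    field_simp
    ring

/-- The duplication theorem of `℘`. -/
lemma wp_dup {u : ℂ} (hu : u ∉ L.lattice) (h2 : u + u ∉ L.lattice) :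
    ℘[L] (u + u) = ℘[L] u - (12 * ℘[L] u * ℘'[L] u ^ 2 -
      (6 * ℘[L] u ^ 2 - L.g₂ / 2) ^ 2) / ℘'[L] u ^ 2 / 4 := by
  have d1 : HasDerivAt (fun w => zeta L (w + w)) (-℘[L] (u + u) * (1 + 1)) u :=
    HasDerivAt.comp u (hasDerivAt_zeta L h2) ((hasDerivAt_id u).fun_add (hasDerivAt_id u))
  have d2 := ((hasDerivAt_zeta L hu).const_mul 2).fun_add
    ((((((hasDerivAt_wp L hu).fun_pow 2).const_mul 6).sub_const (L.g₂ / 2)).fun_div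
      (hasDerivAt_wp' hu) (wp'_ne_zero hu h2)).div_const 2)
  have heq : (fun w => zeta L (w + w)) =ᶠ[𝓝 u] fun w => 2 * zeta L w +
      (6 * ℘[L] w ^ 2 - L.g₂ / 2) / ℘'[L] w / 2 := by
    have c1 : ∀ᶠ w in 𝓝 u, w + w ∉ L.lattice :=
      (by fun_prop : Continuous fun w : ℂ => w + w).continuousAt.eventually (compl_mem_nhds L h2)
    filter_upwards [c1, compl_mem_nhds L hu] with w h1 h3 using zeta_dup h3 h1
  have e := d1.unique (d2.congr_of_eventuallyEq heq)
  simp only [Nat.cast_ofNat, Nat.add_one_sub_one, pow_one] at e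
  rw [show 6 * (2 * ℘[L] u * ℘'[L] u) * ℘'[L] u = 12 * ℘[L] u * ℘'[L] u ^ 2 by ring,
    show (6 * ℘[L] u ^ 2 - L.g₂ / 2) * (6 * ℘[L] u ^ 2 - L.g₂ / 2) =
      (6 * ℘[L] u ^ 2 - L.g₂ / 2) ^ 2 by ring] at e
  linear_combination -e / 2

end SemiElliptic

/-! ### Laurent coefficients in a field containing the invariants -/

namespace SemiElliptic
open Filter Topology Set
open scoped PeriodPair

variable {L : PeriodPair}

/-- Analytic functions at the origin all of whose Taylor coefficients lie in the field `F`. -/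
def AF (F : Subfield ℂ) (φ : ℂ → ℂ) : Prop :=
  AnalyticAt ℂ φ 0 ∧ ∀ n, iteratedDeriv n φ 0 ∈ F

/-- Meromorphic functions at the origin all of whose Laurent coefficients lie in `F`; the value at
the origin is ignored. -/
def MF (F : Subfield ℂ) (g : ℂ → ℂ) : Prop :=
  ∃ (M : ℕ) (φ : ℂ → ℂ), AF F φ ∧ ∀ᶠ u in 𝓝[≠] 0, u ^ M * g u = φ u

variable {F : Subfield ℂ} {φ ψ f g : ℂ → ℂ}

namespace AF

lemma add (hφ : AF F φ) (hψ : AF F ψ) : AF F (fun u => φ u + ψ u) := by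
  refine ⟨hφ.1.fun_add hψ.1, fun n => ?_⟩
  rw [iteratedDeriv_fun_add hφ.1.contDiffAt hψ.1.contDiffAt]
  exact add_mem (hφ.2 n) (hψ.2 n)

lemma mul (hφ : AF F φ) (hψ : AF F ψ) : AF F (fun u => φ u * ψ u) := by
  refine ⟨hφ.1.fun_mul hψ.1, fun n => ?_⟩
  rw [iteratedDeriv_fun_mul hφ.1.contDiffAt hψ.1.contDiffAt]
  exact sum_mem fun i _ => mul_mem (mul_mem (natCast_mem _ _) (hφ.2 i)) (hψ.2 _)

lemma const {c : ℂ} (hc : c ∈ F) : AF F (fun _ => c) := by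
  refine ⟨analyticAt_const, fun n => ?_⟩
  rw [iteratedDeriv_const]
  split_ifs
  exacts [hc, zero_mem F]

lemma pow (m : ℕ) : AF F (fun u => u ^ m) := by
  refine ⟨by fun_prop, fun n => ?_⟩
  rw [iteratedDeriv_fun_pow_zero]
  exact natCast_mem F _

end AF

lemma iteratedDeriv_comp_mul (α : ℂ) (φ : ℂ → ℂ) (n : ℕ) :
    iteratedDeriv n (fun u => φ (α * u)) 0 = α ^ n * iteratedDeriv n φ 0 := by
  induction n generalizing φ with
  | zero => simp
  | succ n ih =>
    have : deriv (fun u => φ (α * u)) = fun u => α * deriv φ (α * u) := by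
      ext u; simpa using deriv_comp_mul_left α φ u
    rw [iteratedDeriv_succ', iteratedDeriv_succ', this, iteratedDeriv_const_mul_field, ih]
    ring

lemma AF.comp_mul (hφ : AF F φ) {α : ℂ} (hα : α ∈ F) : AF F (fun u => φ (α * u)) := by
  refine ⟨AnalyticAt.fun_comp (f := fun u => α * u) (by simpa using hφ.1) (by fun_prop), fun n => ?_⟩
  rw [iteratedDeriv_comp_mul]
  exact mul_mem (pow_mem hα n) (hφ.2 n)

lemma iteratedDeriv_sq_mul (hφ : AnalyticAt ℂ φ 0) (n : ℕ) :
    iteratedDeriv n (fun u => u ^ 2 * φ u) 0 = n * (n - 1) * iteratedDeriv (n - 2) φ 0 := by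
  rw [iteratedDeriv_fun_mul (by fun_prop) hφ.contDiffAt]
  simp only [iteratedDeriv_fun_pow_zero]
  rcases lt_or_ge n 2 with h | h
  · rw [Finset.sum_eq_zero]
    · interval_cases n <;> simp
    · intro i hi
      have : i ≠ 2 := by have := Finset.mem_range.1 hi; omega
      simp [this]
  · rw [Finset.sum_eq_single 2]
    · have := Nat.cast_choose_two ℂ n
      rw [this]; simp
    · intro i _ hi; simp [hi]
    · intro h'; exact absurd (Finset.mem_range.2 (by omega)) h'

/-- The second-order differential equation of `℘`, in terms of its regular part at the origin. -/
lemma wpExcept_ode : (fun u => u ^ 2 * iteratedDeriv 2 (L.weierstrassPExcept 0) u) =ᶠ[𝓝 0]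
    fun u => 12 * L.weierstrassPExcept 0 u +
      6 * (u ^ 2 * (L.weierstrassPExcept 0 u * L.weierstrassPExcept 0 u)) +
      (-(L.g₂ / 2)) * u ^ 2 := by
  have hp : AnalyticAt ℂ (L.weierstrassPExcept 0) 0 := by fun_prop
  have hp2 : AnalyticAt ℂ (iteratedDeriv 2 (L.weierstrassPExcept 0)) 0 := by
    rw [iteratedDeriv_succ, iteratedDeriv_one]; exact hp.deriv.deriv
  refine (AnalyticAt.frequently_eq_iff_eventually_eq (by fun_prop) (by fun_prop)).1
    (Eventually.frequently ?_)
  filter_upwards [notMem_near_zero L, self_mem_nhdsWithin] with u hu h0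
  have h0 : u ≠ 0 := h0
  have hn : ∀ᶠ w in 𝓝 u, w ∉ L.lattice := compl_mem_nhds L hu
  have hn0 : ∀ᶠ w in 𝓝 u, w ≠ 0 := hn.mono fun w hw => ne_zero_of_notMem L hw
  have e1 : L.weierstrassPExcept 0 =ᶠ[𝓝 u] fun w => ℘[L] w - 1 / w ^ 2 :=
    .of_forall fun w => by simp only [wp_eq_except]; ring
  have e2 : deriv (L.weierstrassPExcept 0) =ᶠ[𝓝 u] fun w => ℘'[L] w + 2 / w ^ 3 := by
    refine (eventually_eventually_nhds.2 e1 |>.and (hn.and hn0)).mono fun w hw => ?_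
    have hw' : w ≠ 0 := hw.2.2
    rw [Filter.EventuallyEq.deriv_eq hw.1]
    have d := (hasDerivAt_wp L hw.2.1).fun_sub ((hasDerivAt_const w 1).fun_div
      ((hasDerivAt_id w).fun_pow 2) (pow_ne_zero 2 hw'))
    have d' := d.deriv
    simp only [id] at d'
    rw [d']
    field_simp
    ring
  rw [iteratedDeriv_succ, iteratedDeriv_one, e2.deriv_eq]
  have d := (hasDerivAt_wp' hu).fun_add ((hasDerivAt_const u 2).fun_div
      ((hasDerivAt_id u).fun_pow 3) (pow_ne_zero 3 h0))
  have d' := d.deriv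
  simp only [id] at d'
  rw [d']
  simp only [wp_eq_except]
  field_simp
  ring

section Coeffs

/-- The Taylor coefficients of `℘(u) - u⁻²` lie in any field containing `g₂` and `g₃`. -/
lemma AF.wpExcept (h2 : L.g₂ ∈ F) (h3 : L.g₃ ∈ F) : AF F (L.weierstrassPExcept 0) := by
  have hp : AnalyticAt ℂ (L.weierstrassPExcept 0) 0 := by fun_prop
  have hp2 : AnalyticAt ℂ (iteratedDeriv 2 (L.weierstrassPExcept 0)) 0 := by
    rw [iteratedDeriv_succ, iteratedDeriv_one]; exact hp.deriv.deriv
  refine ⟨hp, fun n => ?_⟩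
  induction n using Nat.strong_induction_on with
  | _ n ih =>
    by_cases h4 : n = 4
    · subst h4
      have := L.iteratedDeriv_weierstrassPExcept_self 0 (n := 4)
      rw [this, if_neg (by norm_num), PeriodPair.sumInvPow_zero]
      have : L.G 6 = L.g₃ / 140 := by rw [PeriodPair.g₃]; ring
      rw [show 4 + 2 = 6 from rfl, this]
      exact mul_mem (natCast_mem _ _) (div_mem h3 (by exact_mod_cast natCast_mem F 140))
    have e := (wpExcept_ode (L := L)).iteratedDeriv_eq n
    rw [iteratedDeriv_sq_mul hp2, iteratedDeriv_fun_add
      (AnalyticAt.contDiffAt (by fun_prop)) (AnalyticAt.contDiffAt (by fun_prop)),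
      iteratedDeriv_fun_add (AnalyticAt.contDiffAt (by fun_prop))
      (AnalyticAt.contDiffAt (by fun_prop)), iteratedDeriv_const_mul_field,
      iteratedDeriv_const_mul_field, iteratedDeriv_const_mul_field, iteratedDeriv_sq_mul
      (by fun_prop), iteratedDeriv_fun_pow_zero] at e
    have hs : iteratedDeriv (n - 2) (iteratedDeriv 2 (L.weierstrassPExcept 0)) 0 * (n * (n - 1)) =
        iteratedDeriv n (L.weierstrassPExcept 0) 0 * (n * (n - 1)) := by
      rcases lt_or_ge n 2 with h | h
      · interval_cases n <;> simp
      · obtain ⟨k, rfl⟩ := Nat.exists_eq_add_of_le' h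
        simp only [iteratedDeriv_eq_iterate, Nat.add_sub_cancel, Function.iterate_add_apply]
    have hm : (n : ℂ) * (n - 1) * iteratedDeriv (n - 2)
        (fun u => L.weierstrassPExcept 0 u * L.weierstrassPExcept 0 u) 0 ∈ F := by
      rcases lt_or_ge n 2 with h | h
      · interval_cases n <;> simp
      · refine mul_mem (mul_mem (natCast_mem _ _) (sub_mem (natCast_mem _ _) (one_mem _))) ?_
        rw [iteratedDeriv_fun_mul hp.contDiffAt hp.contDiffAt]
        refine sum_mem fun i hi => mul_mem (mul_mem (natCast_mem _ _) (ih _ ?_)) (ih _ ?_)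
        · have := Finset.mem_range.1 hi; omega
        · omega
    have hk : ((n : ℂ) - 4) * (n + 3) ≠ 0 := by
      refine mul_ne_zero (sub_ne_zero.2 (by exact_mod_cast h4)) (by exact_mod_cast Nat.succ_ne_zero (n + 2))
    have hkF : ((n : ℂ) - 4) * (n + 3) ∈ F :=
      mul_mem (sub_mem (natCast_mem _ _) (ofNat_mem F 4))
        (add_mem (natCast_mem _ _) (ofNat_mem F 3))
    have : iteratedDeriv n (L.weierstrassPExcept 0) 0 =
        (6 * (n * (n - 1) * iteratedDeriv (n - 2)
          (fun u => L.weierstrassPExcept 0 u * L.weierstrassPExcept 0 u) 0) +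
          (-(L.g₂ / 2)) * ((if n = 2 then Nat.factorial 2 else 0 : ℕ) : ℂ)) /
            (((n : ℂ) - 4) * (n + 3)) := by
      rw [eq_div_iff hk]
      linear_combination e - hs
    rw [this]
    refine div_mem (add_mem (mul_mem (ofNat_mem F 6) hm) (mul_mem (neg_mem (div_mem h2
      (ofNat_mem F 2))) (natCast_mem _ _))) hkF

lemma AF.wp'Except (h2 : L.g₂ ∈ F) (h3 : L.g₃ ∈ F) : AF F (L.derivWeierstrassPExcept 0) := by
  refine ⟨by fun_prop, fun n => ?_⟩
  have e1 := L.iteratedDeriv_derivWeierstrassPExcept_self 0 (n := n)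
  have e2 := L.iteratedDeriv_weierstrassPExcept_self 0 (n := n + 1)
  rw [if_neg (Nat.succ_ne_zero n)] at e2
  have := (AF.wpExcept h2 h3).2 (n + 1)
  rw [e2] at this
  rw [e1]
  exact this

lemma AF.zetaReg (h2 : L.g₂ ∈ F) (h3 : L.g₃ ∈ F) : AF F (zetaReg L) := by
  refine ⟨analyticAt_zetaReg L (by simp), fun n => ?_⟩
  cases n with
  | zero => simp [zetaReg_zero, zero_mem]
  | succ n =>
    rw [iteratedDeriv_succ']
    have : deriv (SemiElliptic.zetaReg L) =ᶠ[𝓝 0] fun z => -L.weierstrassPExcept 0 z := by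
      filter_upwards [(isOpen_compl_lattice' L).mem_nhds (by simp)] with z hz
      exact deriv_zetaReg L hz
    rw [this.iteratedDeriv_eq, iteratedDeriv_fun_neg]
    exact neg_mem ((AF.wpExcept h2 h3).2 n)

lemma MF.wp (h2 : L.g₂ ∈ F) (h3 : L.g₃ ∈ F) : MF F ℘[L] := by
  refine ⟨2, _, ((AF.pow 2).mul (AF.wpExcept h2 h3)).add (AF.const (one_mem F)), ?_⟩
  filter_upwards [self_mem_nhdsWithin] with u hu
  have hu : u ≠ 0 := hu
  rw [wp_eq_except]; field_simp

lemma MF.wp' (h2 : L.g₂ ∈ F) (h3 : L.g₃ ∈ F) : MF F ℘'[L] := by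
  refine ⟨3, _, ((AF.pow 3).mul (AF.wp'Except h2 h3)).add
    (AF.const (neg_mem (ofNat_mem F 2))), ?_⟩
  filter_upwards [self_mem_nhdsWithin] with u hu
  have hu : u ≠ 0 := hu
  rw [wp'_eq_except]; field_simp; ring

lemma MF.zeta_mul (h2 : L.g₂ ∈ F) (h3 : L.g₃ ∈ F)
    {α : ℂ} (hα : α ∈ F) (h0 : α ≠ 0) : MF F (fun u => zeta L (α * u)) := by
  refine ⟨1, _, ((AF.pow 1).mul ((AF.zetaReg h2 h3).comp_mul hα)).add
    (AF.const (inv_mem hα)), ?_⟩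
  have ht : Tendsto (fun u => α * u) (𝓝[≠] 0) (𝓝[≠] 0) := by
    refine tendsto_nhdsWithin_of_tendsto_nhds_of_eventually_within _
      (Continuous.tendsto' (by fun_prop) _ _ (by simp) |>.mono_left nhdsWithin_le_nhds) ?_
    filter_upwards [self_mem_nhdsWithin] with u hu
    exact mul_ne_zero h0 hu
  filter_upwards [self_mem_nhdsWithin, ht.eventually (notMem_near_zero L)] with u hu h
  have hu : u ≠ 0 := hu
  rw [zeta_eq L h]; field_simp; ring

end Coeffs

namespace MF

lemma mul (hf : MF F f) (hg : MF F g) : MF F (fun u => f u * g u) := by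
  obtain ⟨M, φ, h1, h2⟩ := hf
  obtain ⟨N, ψ, h3, h4⟩ := hg
  refine ⟨M + N, _, h1.mul h3, ?_⟩
  filter_upwards [h2, h4] with u h2 h4
  rw [← h2, ← h4]; ring

lemma id : MF F (fun u => u) :=
  ⟨0, _, AF.pow 1, .of_forall fun u => by simp⟩

lemma const {c : ℂ} (hc : c ∈ F) : MF F (fun _ => c) :=
  ⟨0, _, AF.const hc, .of_forall fun u => by simp⟩

lemma pow (hf : MF F f) (n : ℕ) : MF F (fun u => f u ^ n) := by
  induction n with
  | zero => simpa using const (one_mem F)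
  | succ n ih => simpa [pow_succ] using ih.mul hf

end MF

/-- Applying an `F`-linear functional to the coefficients of a linear relation between functions
with Laurent coefficients in `F` yields another linear relation. -/
lemma MF.apply_linear {ι : Type*} (s : Finset ι) (c : ι → ℂ) (g : ι → ℂ → ℂ)
    (hg : ∀ i ∈ s, MF F (g i)) (π : ℂ →ₗ[F] ℂ)
    (h : ∀ᶠ u in 𝓝[≠] 0, ∑ i ∈ s, c i * g i u = 0) :
    ∀ᶠ u in 𝓝[≠] 0, ∑ i ∈ s, π (c i) * g i u = 0 := by
  have hg' : ∀ i, ∃ (M : ℕ) (φ : ℂ → ℂ), i ∈ s → AF F φ ∧ ∀ᶠ u in 𝓝[≠] 0, u ^ M * g i u = φ u := by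
    intro i
    by_cases hi : i ∈ s
    · obtain ⟨M, φ, h⟩ := hg i hi
      exact ⟨M, φ, fun _ => h⟩
    · exact ⟨0, 0, fun h => absurd h hi⟩
  choose M φ hφ using hg'
  set N := ∑ i ∈ s, M i
  let ψ : ι → ℂ → ℂ := fun i u => u ^ (N - M i) * φ i u
  have hψ : ∀ i ∈ s, AF F (ψ i) := fun i hi => (AF.pow _).mul (hφ i hi).1
  have hev : ∀ᶠ u in 𝓝[≠] (0 : ℂ), ∀ i ∈ s, u ^ N * g i u = ψ i u := by
    rw [Filter.eventually_all_finset]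
    intro i hi
    filter_upwards [(hφ i hi).2] with u hu
    simp only [ψ]
    rw [← hu, ← mul_assoc, ← pow_add,
      Nat.sub_add_cancel (Finset.single_le_sum (fun _ _ => Nat.zero_le _) hi)]
  have hsum : ∀ c : ι → ℂ, AnalyticAt ℂ (fun u => ∑ i ∈ s, c i * ψ i u) 0 := fun c =>
    Finset.analyticAt_fun_sum s fun i hi => analyticAt_const.mul (hψ i hi).1
  have hder : ∀ (c : ι → ℂ) n, iteratedDeriv n (fun u => ∑ i ∈ s, c i * ψ i u) 0 =
      ∑ i ∈ s, c i * iteratedDeriv n (ψ i) 0 := fun c n => by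
    rw [iteratedDeriv_fun_sum fun i hi => (analyticAt_const.fun_mul (hψ i hi).1).contDiffAt]
    simp only [iteratedDeriv_const_mul_field]
  have hz : ∀ᶠ u in 𝓝 (0 : ℂ), ∑ i ∈ s, c i * ψ i u = 0 := by
    have := (hsum c).frequently_eq_iff_eventually_eq (analyticAt_const (v := (0 : ℂ)))
    refine this.1 (Eventually.frequently ?_)
    filter_upwards [h, hev] with u h1 h2
    rw [Finset.sum_congr rfl fun i hi => by rw [← h2 i hi]]
    have : ∑ i ∈ s, c i * (u ^ N * g i u) = u ^ N * ∑ i ∈ s, c i * g i u := by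
      rw [Finset.mul_sum]; exact Finset.sum_congr rfl fun i _ => by ring
    rw [this, h1, mul_zero]
  have hz' : ∀ᶠ u in 𝓝 (0 : ℂ), ∑ i ∈ s, π (c i) * ψ i u = 0 := by
    rw [← analyticOrderAt_eq_top, ENat.eq_top_iff_forall_ge]
    intro n
    rw [natCast_le_analyticOrderAt_iff_iteratedDeriv_eq_zero (hsum _)]
    intro m _
    have e : ∑ i ∈ s, c i * iteratedDeriv m (ψ i) 0 = 0 := by
      rw [← hder]
      have : (fun u => ∑ i ∈ s, c i * ψ i u) =ᶠ[𝓝 0] fun _ => 0 := hz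
      rw [this.iteratedDeriv_eq]; simp
    rw [hder]
    have e2 := congrArg π e
    rw [map_sum, map_zero] at e2
    refine Eq.trans (Finset.sum_congr rfl fun i hi => ?_) e2
    have := π.map_smul ⟨_, (hψ i hi).2 m⟩ (c i)
    simp only [Subfield.smul_def, smul_eq_mul] at this
    rw [mul_comm (c i), this, mul_comm]
  filter_upwards [mem_nhdsWithin_of_mem_nhds hz', hev, self_mem_nhdsWithin] with u h1 h2 h3
  have h3 : u ≠ 0 := h3
  have : ∑ i ∈ s, π (c i) * ψ i u = u ^ N * ∑ i ∈ s, π (c i) * g i u := by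
    rw [Finset.mul_sum]
    exact Finset.sum_congr rfl fun i hi => by rw [← h2 i hi]; ring
  rw [this] at h1
  exact (mul_eq_zero.1 h1).resolve_left (pow_ne_zero _ h3)

end SemiElliptic

/-! ### Multipliers of the lattice and descent of polynomial relations -/

namespace SemiElliptic
open Filter Topology Set
open scoped PeriodPair

variable {L : PeriodPair} {F : Subfield ℂ} {f g : ℂ → ℂ}

/-- `F` is algebraically closed in `ℂ`. -/
def AC (F : Subfield ℂ) : Prop := ∀ x : ℂ, IsAlgebraic F x → x ∈ F

open Polynomial in
lemma AC.of_sq (hF : AC F) {x : ℂ} (h : x ^ 2 ∈ F) : x ∈ F := by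
  refine hF x ⟨X ^ 2 - C ⟨_, h⟩, X_pow_sub_C_ne_zero two_pos _, ?_⟩
  simp only [map_sub, map_pow, aeval_X, aeval_C]
  exact sub_self _

lemma wp'_mem (hF : AC F) (h2 : L.g₂ ∈ F) (h3 : L.g₃ ∈ F) {z : ℂ} (hz : z ∉ L.lattice)
    (h : ℘[L] z ∈ F) : ℘'[L] z ∈ F := by
  refine hF.of_sq ?_
  rw [L.derivWeierstrassP_sq z hz]
  exact sub_mem (sub_mem (mul_mem (ofNat_mem F 4) (pow_mem h 3)) (mul_mem h2 h)) h3

/-- A multiplier `α ∉ ℤ` of the lattice is a quadratic integer, and its conjugate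
`T - α` governs its action on quasi-periods up to a term proportional to the period. -/
lemma cm_data {α : ℂ} (hα : ∀ w ∈ L.lattice, α * w ∈ L.lattice) (hZ : ∀ m : ℤ, α ≠ m) :
    ∃ (T N : ℤ) (κ : ℂ), N ≠ 0 ∧ α ^ 2 - T * α + N = 0 ∧
      (∀ w ∈ L.lattice, (T - α) * w ∈ L.lattice) ∧
      ∀ w ∈ L.lattice, eta L (α * w) = (T - α) * eta L w + κ * w := by
  obtain ⟨a, b, h1⟩ := PeriodPair.mem_lattice.1 (hα _ L.ω₁_mem_lattice)
  obtain ⟨c, d, h2⟩ := PeriodPair.mem_lattice.1 (hα _ L.ω₂_mem_lattice)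
  have w1 := omega1_ne_zero L
  have w2 := omega2_ne_zero L
  have hq : α ^ 2 - (a + d : ℤ) * α + (a * d - b * c : ℤ) = 0 := by
    have : L.ω₁ * L.ω₂ * (α ^ 2 - (a + d : ℤ) * α + (a * d - b * c : ℤ)) = 0 := by
      push_cast
      linear_combination (-(α * L.ω₂ - d * L.ω₂)) * h1 - b * L.ω₂ * h2
    exact (mul_eq_zero.1 this).resolve_left (mul_ne_zero w1 w2)
  have hη1 : eta L (α * L.ω₁) = a * eta L L.ω₁ + b * eta L L.ω₂ := by rw [← h1, eta_comb]
  have hη2 : eta L (α * L.ω₂) = c * eta L L.ω₁ + d * eta L L.ω₂ := by rw [← h2, eta_comb]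
  refine ⟨a + d, a * d - b * c, ((α - d) * eta L L.ω₁ + b * eta L L.ω₂) / L.ω₁, fun h0 => ?_, hq,
    fun w hw => ?_, fun w hw => ?_⟩
  · rw [h0] at hq
    have : α * (α - (a + d : ℤ)) = 0 := by push_cast at hq ⊢; linear_combination hq
    rcases mul_eq_zero.1 this with h | h
    · exact hZ 0 (by simpa using h)
    · exact hZ _ (sub_eq_zero.1 h)
  · rw [sub_mul]
    exact sub_mem (int_mul_mem L _ hw) (hα w hw)
  · obtain ⟨m, n, rfl⟩ := PeriodPair.mem_lattice.1 hw
    have e : α * (m * L.ω₁ + n * L.ω₂) = m * (α * L.ω₁) + n * (α * L.ω₂) := by ring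
    rw [e, eta_add L (int_mul_mem L m (hα _ L.ω₁_mem_lattice))
      (int_mul_mem L n (hα _ L.ω₂_mem_lattice)), eta_int_mul L m (hα _ L.ω₁_mem_lattice),
      eta_int_mul L n (hα _ L.ω₂_mem_lattice), hη1, hη2, eta_comb]
    field_simp
    push_cast
    linear_combination (n * eta L L.ω₁) * h2 - (n * eta L L.ω₂) * h1

lemma quadratic_mem (hF : AC F) {α : ℂ} {T N : ℤ} (h : α ^ 2 - T * α + N = 0) : α ∈ F := by
  have : 2 * α - T ∈ F := hF.of_sq (by
    have : (2 * α - T) ^ 2 = (T ^ 2 - 4 * N : ℤ) := by push_cast; linear_combination 4 * h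
    rw [this]; exact intCast_mem F _)
  have := div_mem (add_mem this (intCast_mem F T)) (ofNat_mem F 2)
  simpa using this

open Polynomial

/-- The polynomial obtained by applying a linear map to all coefficients. -/
def mapPi (π : ℂ →ₗ[F] ℂ) (P : ℂ[X]) : ℂ[X] :=
  ∑ i ∈ Finset.range (P.natDegree + 1), C (π (P.coeff i)) * X ^ i

/-- The polynomial `P` has coefficients in `F`. -/
def PF (F : Subfield ℂ) (P : ℂ[X]) : Prop := ∀ n, P.coeff n ∈ F

lemma PF.eval {P : ℂ[X]} (hP : PF F P) {x : ℂ} (hx : x ∈ F) : P.eval x ∈ F := by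
  rw [eval_eq_sum_range]
  exact sum_mem fun i _ => mul_mem (hP i) (pow_mem hx i)

lemma PF.derivative {P : ℂ[X]} (hP : PF F P) : PF F (derivative P) := fun n => by
  rw [coeff_derivative]
  exact mul_mem (hP _) (add_mem (natCast_mem _ _) (one_mem _))

lemma mapPi_PF {π : ℂ →ₗ[F] ℂ} (hπ : ∀ x, π x ∈ F) (P : ℂ[X]) : PF F (mapPi π P) := fun n => by
  rw [mapPi, finsetSum_coeff]
  refine sum_mem fun i _ => ?_
  rw [coeff_C_mul_X_pow]
  split_ifs
  exacts [hπ _, zero_mem F]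

lemma linear_mul (π : ℂ →ₗ[F] ℂ) {x : ℂ} (hx : x ∈ F) (c : ℂ) : π (c * x) = π c * x := by
  have := π.map_smul ⟨x, hx⟩ c
  simp only [Subfield.smul_def, smul_eq_mul] at this
  rw [mul_comm, this, mul_comm]

lemma mapPi_eval (π : ℂ →ₗ[F] ℂ) (P : ℂ[X]) {x : ℂ} (hx : x ∈ F) :
    (mapPi π P).eval x = π (P.eval x) := by
  rw [mapPi, eval_finsetSum, eval_eq_sum_range, map_sum]
  refine Finset.sum_congr rfl fun i _ => ?_
  rw [linear_mul π (pow_mem hx i)]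
  simp

lemma mapPi_neg (π : ℂ →ₗ[F] ℂ) (P : ℂ[X]) : mapPi π (-P) = - mapPi π P := by
  simp [mapPi]

lemma exists_retraction (F : Subfield ℂ) :
    ∃ π : ℂ →ₗ[F] ℂ, (∀ x, π x ∈ F) ∧ ∀ x ∈ F, π x = x := by
  obtain ⟨g, hg⟩ := LinearMap.exists_leftInverse_of_injective (Algebra.linearMap F ℂ)
    (LinearMap.ker_eq_bot.2 (algebraMap F ℂ).injective)
  refine ⟨(Algebra.linearMap F ℂ).comp g, fun x => (g x).2, fun x hx => ?_⟩
  have := LinearMap.congr_fun hg ⟨x, hx⟩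
  exact congrArg (algebraMap F ℂ) this

/-- An `F`-linear functional may be applied to the coefficients of a linear relation whose
coefficients are polynomials in `℘`. -/
lemma apply_linear_poly (h2 : L.g₂ ∈ F) (h3 : L.g₃ ∈ F) (π : ℂ →ₗ[F] ℂ) {n : ℕ}
    (P : Fin n → ℂ[X]) (h : Fin n → ℂ → ℂ) (hh : ∀ j, MF F (h j))
    (hz : ∀ᶠ u in 𝓝[≠] 0, ∑ j, (P j).eval (℘[L] u) * h j u = 0) :
    ∀ᶠ u in 𝓝[≠] 0, ∑ j, (mapPi π (P j)).eval (℘[L] u) * h j u = 0 := by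
  have key := MF.apply_linear (F := F)
    (Finset.univ.sigma fun j : Fin n => Finset.range ((P j).natDegree + 1))
    (fun x => (P x.1).coeff x.2) (fun x u => ℘[L] u ^ x.2 * h x.1 u)
    (fun x _ => ((MF.wp h2 h3).pow _).mul (hh _)) π (hz.mono fun u hu => by
      rw [Finset.sum_sigma, ← hu]
      refine Finset.sum_congr rfl fun j _ => ?_
      rw [eval_eq_sum_range, Finset.sum_mul]
      exact Finset.sum_congr rfl fun i _ => by ring)
  refine key.mono fun u hu => ?_
  rw [Finset.sum_sigma] at hu
  rw [← hu]
  refine Finset.sum_congr rfl fun j _ => ?_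
  rw [mapPi, eval_finsetSum, Finset.sum_mul]
  refine Finset.sum_congr rfl fun i _ => ?_
  simp; ring

lemma MF.add (hf : MF F f) (hg : MF F g) : MF F (fun u => f u + g u) := by
  obtain ⟨M, φ, h1, h2⟩ := hf
  obtain ⟨N, ψ, h3, h4⟩ := hg
  refine ⟨M + N, _, ((AF.pow N).mul h1).add ((AF.pow M).mul h3), ?_⟩
  filter_upwards [h2, h4] with u h2 h4
  rw [← h2, ← h4]; ring

lemma Ell.poly (P : ℂ[X]) : ∃ M, Ell L (fun u => P.eval (℘[L] u)) M := by
  induction P using Polynomial.induction_on' with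
  | add p q hp hq =>
    obtain ⟨M, hM⟩ := hp
    obtain ⟨N, hN⟩ := hq
    refine ⟨M + N, ?_⟩
    simpa using (hM.mono (Nat.le_add_right M N)).add (hN.mono (Nat.le_add_left N M))
  | monomial n a =>
    exact ⟨_, by simpa using Ell.const_mul a (Ell.wp_pow L n)⟩

lemma exists_notMem_near {S : Set ℂ} (hS0 : ∀ᶠ u in 𝓝[≠] 0, u ∉ S) {p : ℂ → Prop}
    (hp : ∀ᶠ u in 𝓝[≠] 0, p u) : ∃ u, u ∉ S ∧ ∀ᶠ v in 𝓝 u, p v := by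
  have h1 := eventually_eventually_nhdsWithin.2 hp
  obtain ⟨u, h1, h2, h3⟩ := (h1.and (hS0.and self_mem_nhdsWithin)).exists
  refine ⟨u, h2, ?_⟩
  rwa [isOpen_compl_singleton.nhdsWithin_eq h3] at h1

/-- The identity theorem on the complement of a countable set that accumulates nowhere at `0`. -/
lemma eqOn_compl {S : Set ℂ} (hS : S.Countable) (hS0 : ∀ᶠ u in 𝓝[≠] 0, u ∉ S)
    (hf : ∀ z ∉ S, AnalyticAt ℂ f z) (hg : ∀ z ∉ S, AnalyticAt ℂ g z) (h : f =ᶠ[𝓝[≠] 0] g) {z : ℂ}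
    (hz : z ∉ S) : f z = g z := by
  obtain ⟨u, hu, h⟩ := exists_notMem_near hS0 h
  exact AnalyticOnNhd.eqOn_of_preconnected_of_eventuallyEq (𝕜 := ℂ) (U := Sᶜ) hf hg
    (isPreconnected_compl_countable hS) hu h hz

lemma tendsto_wp_cobounded : Tendsto (fun u => ‖℘[L] u‖) (𝓝[≠] 0) atTop := by
  have h1 := (tendsto_wp (L := L)).norm
  have h2 : Tendsto (fun u : ℂ => ‖u ^ 2‖⁻¹) (𝓝[≠] 0) atTop := by
    refine tendsto_inv_nhdsGT_zero.comp (tendsto_nhdsWithin_of_tendsto_nhds_of_eventually_within _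
      (Continuous.tendsto' (by fun_prop) _ _ (by simp) |>.mono_left nhdsWithin_le_nhds) ?_)
    filter_upwards [self_mem_nhdsWithin] with u hu
    have hu : u ≠ 0 := hu
    exact norm_pos_iff.2 (pow_ne_zero 2 hu)
  refine (h1.pos_mul_atTop (by simp) h2).congr' ?_
  filter_upwards [self_mem_nhdsWithin] with u hu
  have hu : u ≠ 0 := hu
  rw [norm_mul]
  field_simp

/-- `℘` is transcendental over the constants. -/
lemma poly_eq_zero {P : ℂ[X]} (h : ∀ᶠ u in 𝓝[≠] 0, P.eval (℘[L] u) = 0) : P = 0 := by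
  by_contra hP
  obtain ⟨B, hB⟩ := (P.roots.toFinset.finite_toSet.image norm).bddAbove
  obtain ⟨u, h1, h2⟩ := (h.and (tendsto_wp_cobounded.eventually_gt_atTop B)).exists
  exact absurd (hB ⟨_, by simpa [hP] using h1, rfl⟩) (not_le.2 h2)

end SemiElliptic

/-! ### Complex multiplication formulas -/

namespace SemiElliptic
open Filter Topology Set
open scoped PeriodPair

variable {L : PeriodPair} {F : Subfield ℂ} {f g : ℂ → ℂ}

open Polynomial

section CM

variable {α : ℂ} {T N : ℤ} {κ : ℂ}

lemma tendsto_mul_left (h0 : α ≠ 0) (z : ℂ) :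
    Tendsto (fun u => α * u) (𝓝[≠] z) (𝓝[≠] (α * z)) := by
  refine tendsto_nhdsWithin_of_tendsto_nhds_of_eventually_within _
    (Continuous.tendsto (by fun_prop) _ |>.mono_left nhdsWithin_le_nhds) ?_
  filter_upwards [self_mem_nhdsWithin] with u hu
  exact fun h => hu (mul_left_cancel₀ h0 h)

lemma mul_notMem_near (h0 : α ≠ 0) (z : ℂ) : ∀ᶠ u in 𝓝[≠] z, α * u ∉ L.lattice :=
  (tendsto_mul_left h0 z).eventually (notMem_near L _)

/-- The values of `℘` at the nonzero `α`-torsion points form a finite set: these points are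
`N`-torsion, where `N` is the norm of `α`. -/
lemma finite_torsion_values (hN : N ≠ 0) (hq : α ^ 2 - T * α + N = 0)
    (hα' : ∀ w ∈ L.lattice, (T - α) * w ∈ L.lattice) :
    {x | ∃ u, u ∉ L.lattice ∧ α * u ∈ L.lattice ∧ ℘[L] u = x}.Finite := by
  refine (((finite_Ico (0 : ℤ) |N|).prod (finite_Ico (0 : ℤ) |N|)).image
    (fun p : ℤ × ℤ => ℘[L] ((p.1 * L.ω₁ + p.2 * L.ω₂) / N))).subset ?_
  rintro _ ⟨u, hu, hau, rfl⟩
  have hNu : N * u ∈ L.lattice := by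
    have := hα' _ hau
    rwa [show (T - α) * (α * u) = N * u by linear_combination (-u) * hq] at this
  obtain ⟨m, n, hmn⟩ := PeriodPair.mem_lattice.1 hNu
  have hN' : (N : ℂ) ≠ 0 := by exact_mod_cast hN
  refine ⟨(m % N, n % N), ⟨⟨Int.emod_nonneg _ hN, Int.emod_lt_abs _ hN⟩,
    ⟨Int.emod_nonneg _ hN, Int.emod_lt_abs _ hN⟩⟩, ?_⟩
  have hw : ((m / N : ℤ) : ℂ) * L.ω₁ + ((n / N : ℤ) : ℂ) * L.ω₂ ∈ L.lattice :=
    PeriodPair.mem_lattice.2 ⟨_, _, rfl⟩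
  have e1 : (m : ℂ) = N * (m / N : ℤ) + (m % N : ℤ) := by exact_mod_cast (Int.mul_ediv_add_emod m N).symm
  have e2 : (n : ℂ) = N * (n / N : ℤ) + (n % N : ℤ) := by exact_mod_cast (Int.mul_ediv_add_emod n N).symm
  simp only
  rw [← wp_add L hw]
  congr 1
  field_simp
  rw [← hmn, e1, e2]
  ring

/-- The function `ζ(αu) - (T - α)ζ(u) - κu` becomes elliptic without poles off the lattice once
multiplied by a polynomial in `℘` that vanishes at its other poles. -/
lemma ell_of_cm (h0 : α ≠ 0) (hα : ∀ w ∈ L.lattice, α * w ∈ L.lattice)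
    (hη : ∀ w ∈ L.lattice, eta L (α * w) = (T - α) * eta L w + κ * w) {D : ℂ[X]}
    (hD : ∀ u, u ∉ L.lattice → α * u ∈ L.lattice → D.eval (℘[L] u) = 0) :
    ∃ M, Ell L (fun u => D.eval (℘[L] u) *
      (zeta L (α * u) - (T - α) * zeta L u - κ * u)) M := by
  obtain ⟨M, hM⟩ := Ell.poly (L := L) D
  refine ⟨M + 1, fun w hw z => ?_, fun z hz => ?_, ?_⟩
  · filter_upwards [notMem_near L z, mul_notMem_near h0 z] with u h1 h2
    rw [wp_add L hw, mul_add, zeta_add L h2 (hα w hw), zeta_add L h1 hw, hη w hw]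
    ring
  · have hDa : AnalyticAt ℂ (fun u => D.eval (℘[L] u)) z :=
      AnalyticAt.aeval_polynomial (analyticAt_wp L hz) D
    have hζ := analyticAt_zeta L hz
    by_cases haz : α * z ∈ L.lattice
    · obtain ⟨p, hp⟩ := id hDa
      have hd : AnalyticAt ℂ (dslope (fun u => D.eval (℘[L] u)) z) z :=
        ⟨_, hp.has_fpower_series_dslope_fslope⟩
      have hr : AnalyticAt ℂ (fun u => zetaReg L (α * (u - z))) z :=
        AnalyticAt.fun_comp (f := fun u => α * (u - z))
          (analyticAt_zetaReg L (by simp)) (by fun_prop)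
      refine ⟨fun u => dslope (fun u => D.eval (℘[L] u)) z u / α + D.eval (℘[L] u) *
        (zetaReg L (α * (u - z)) + eta L (α * z) - (T - α) * zeta L u - κ * u), ?_, ?_⟩
      · exact (hd.div_const).fun_add (hDa.fun_mul (by fun_prop))
      · filter_upwards [self_mem_nhdsWithin, mul_notMem_near h0 z] with u hu h1
        have hu : u ≠ z := hu
        have huz : u - z ≠ 0 := sub_ne_zero.2 hu
        have h2 : α * (u - z) ∉ L.lattice := fun h => h1 (by
          have := add_mem h haz
          rwa [show α * (u - z) + α * z = α * u by ring] at this)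
        have h3 := zeta_add L h2 haz
        rw [show α * (u - z) + α * z = α * u by ring] at h3
        rw [h3, zeta_eq L h2, dslope_of_ne _ hu, slope_def_field, hD z hz haz]
        field_simp
        ring
    · have : AnalyticAt ℂ (fun u => zeta L (α * u)) z :=
        AnalyticAt.fun_comp (f := fun u => α * u) (analyticAt_zeta L haz) (by fun_prop)
      exact ⟨_, hDa.fun_mul (by fun_prop), .refl _ _⟩
  · obtain ⟨φ, h1, h2⟩ := hM.pole
    have hr : AnalyticAt ℂ (fun u => zetaReg L (α * u)) 0 :=
      AnalyticAt.fun_comp (f := fun u => α * u)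
        (analyticAt_zetaReg L (by simp)) (by fun_prop)
    have hr0 := analyticAt_zetaReg L (z := 0) (by simp)
    refine ⟨fun u => φ u * (α⁻¹ + u * zetaReg L (α * u) - (T - α) * (1 + u * zetaReg L u) -
      κ * u ^ 2), by fun_prop, ?_⟩
    filter_upwards [h2, notMem_near_zero L, mul_notMem_near h0 0, self_mem_nhdsWithin]
      with u h2 h3 h4 hu
    have hu : u ≠ 0 := hu
    rw [← h2, zeta_eq L h3, zeta_eq L h4]
    field_simp
    ring

/-- Complex multiplication formula with coefficients in `F`. The polynomials come from the
representation of an elliptic function by `℘` and `℘'` over `ℂ`, by applying an `F`-linear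
retraction `ℂ → F` to all coefficients. -/
lemma cm_formula (hF : AC F) (h2 : L.g₂ ∈ F) (h3 : L.g₃ ∈ F) (h0 : α ≠ 0) (hN : N ≠ 0)
    (hq : α ^ 2 - T * α + N = 0) (hα : ∀ w ∈ L.lattice, α * w ∈ L.lattice)
    (hα' : ∀ w ∈ L.lattice, (T - α) * w ∈ L.lattice)
    (hη : ∀ w ∈ L.lattice, eta L (α * w) = (T - α) * eta L w + κ * w) {x₀ : ℂ} (hx₀ : x₀ ∈ F)
    (hx : ∀ u, u ∉ L.lattice → α * u ∈ L.lattice → ℘[L] u ≠ x₀) :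
    ∃ D B P Q : ℂ[X], PF F D ∧ PF F B ∧ PF F P ∧ PF F Q ∧ D.eval x₀ = 1 ∧
      ∀ z, α * z ∉ L.lattice → D.eval (℘[L] z) * (zeta L (α * z) + (α - T) * zeta L z) =
        B.eval (℘[L] z) * z + P.eval (℘[L] z) + Q.eval (℘[L] z) * ℘'[L] z := by
  have hαF := quadratic_mem hF hq
  have hfin := finite_torsion_values hN hq hα'
  let D₁ : ℂ[X] := ∏ c ∈ hfin.toFinset, (X - C c)
  have hD₁ : D₁.eval x₀ ≠ 0 := by
    simp only [D₁, eval_prod, eval_sub, eval_X, eval_C]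
    refine Finset.prod_ne_zero_iff.2 fun c hc => sub_ne_zero.2 ?_
    obtain ⟨u, hu, hau, rfl⟩ := hfin.mem_toFinset.1 hc
    exact (hx u hu hau).symm
  let D₀ : ℂ[X] := C (D₁.eval x₀)⁻¹ * D₁
  have hD₀ : D₀.eval x₀ = 1 := by simp [D₀, hD₁]
  obtain ⟨M, hM⟩ := ell_of_cm (D := D₀) h0 hα hη (fun u hu hau => by
    have : ℘[L] u ∈ hfin.toFinset := hfin.mem_toFinset.2 ⟨u, hu, hau, rfl⟩
    simp only [D₀, D₁, eval_mul, eval_prod, eval_sub, eval_X, eval_C]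
    rw [Finset.prod_eq_zero this (sub_self _), mul_zero])
  obtain ⟨P₀, Q₀, hPQ⟩ := hM.exists_poly
  obtain ⟨π, hπ, hπF⟩ := exists_retraction F
  have hζ : MF F (fun u => zeta L u) := by
    simpa using MF.zeta_mul h2 h3 (one_mem F) one_ne_zero
  have key := apply_linear_poly h2 h3 π ![D₀, -(C κ * D₀), -P₀, -Q₀]
    ![fun u => zeta L (α * u) + (α - T) * zeta L u, fun u => u, fun _ => 1, ℘'[L]] (by
      intro j
      fin_cases j
      · exact (MF.zeta_mul h2 h3 hαF h0).add
          ((MF.const (sub_mem hαF (intCast_mem F T))).mul hζ)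
      · exact MF.id
      · exact MF.const (one_mem F)
      · exact MF.wp' h2 h3) (by
    filter_upwards [hPQ 0] with u hu
    simp only [Fin.sum_univ_four, Matrix.cons_val, eval_neg, eval_mul, eval_C]
    linear_combination hu)
  refine ⟨mapPi π D₀, mapPi π (C κ * D₀), mapPi π P₀, mapPi π Q₀, mapPi_PF hπ _, mapPi_PF hπ _,
    mapPi_PF hπ _, mapPi_PF hπ _, by rw [mapPi_eval π _ hx₀, hD₀, hπF 1 (one_mem F)], ?_⟩
  intro z hz
  have hsub : ∀ z, α * z ∉ L.lattice → z ∉ L.lattice := fun z hz h => hz (hα z h)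
  refine eqOn_compl (S := {z | α * z ∈ L.lattice})
    (f := fun z => (mapPi π D₀).eval (℘[L] z) * (zeta L (α * z) + (α - T) * zeta L z))
    (g := fun z => (mapPi π (C κ * D₀)).eval (℘[L] z) * z + (mapPi π P₀).eval (℘[L] z) +
      (mapPi π Q₀).eval (℘[L] z) * ℘'[L] z) ?_ (by simpa using mul_notMem_near h0 0) ?_ ?_ ?_ hz
  · exact (countable_lattice L).preimage_of_injOn (f := fun z => α * z)
      (fun a _ b _ h => mul_left_cancel₀ h0 h)
  · intro z hz
    have hζ := analyticAt_zeta L (hsub z hz)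
    have : AnalyticAt ℂ (fun u => zeta L (α * u)) z :=
      AnalyticAt.fun_comp (f := fun u => α * u) (analyticAt_zeta L hz) (by fun_prop)
    exact (AnalyticAt.aeval_polynomial (analyticAt_wp L (hsub z hz)) _).fun_mul (by fun_prop)
  · intro z hz
    have hp := analyticAt_wp L (hsub z hz)
    exact (((AnalyticAt.aeval_polynomial hp _).fun_mul analyticAt_id).fun_add
      (AnalyticAt.aeval_polynomial hp _)).fun_add
      ((AnalyticAt.aeval_polynomial hp _).fun_mul (analyticAt_wp' L (hsub z hz)))
  · filter_upwards [key] with u hu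
    simp only [Fin.sum_univ_four, Matrix.cons_val, mapPi_neg, eval_neg] at hu
    linear_combination hu

end CM

section

/-- In the situation of `cm_data`, the coefficient `κ` lies in every algebraically closed field
containing the invariants. -/
lemma cm_kappa_mem (hF : AC F) (h2 : L.g₂ ∈ F) (h3 : L.g₃ ∈ F)
    {α : ℂ} (hα : ∀ w ∈ L.lattice, α * w ∈ L.lattice) (hZ : ∀ m : ℤ, α ≠ m)
    {T N : ℤ} {κ : ℂ} (hN : N ≠ 0) (hq : α ^ 2 - T * α + N = 0)
    (hα' : ∀ w ∈ L.lattice, (T - α) * w ∈ L.lattice)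
    (hη : ∀ w ∈ L.lattice, eta L (α * w) = (T - α) * eta L w + κ * w) : κ ∈ F := by
  have h0 : α ≠ 0 := by simpa using hZ 0
  have hfin := finite_torsion_values hN hq hα'
  obtain ⟨x₀, ⟨n, rfl⟩, hn⟩ :=
    (infinite_range_of_injective (Nat.cast_injective (R := ℂ))).exists_notMem_finite hfin
  have hx₀ : (n : ℂ) ∈ F := natCast_mem F n
  obtain ⟨D, B, P, Q, hD, hB, -, -, hD1, h⟩ := cm_formula hF h2 h3 h0 hN hq hα hα' hη hx₀
    (fun u hu hau e => hn ⟨u, hu, hau, e⟩)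
  have hz : C κ * D - B = 0 := by
    refine poly_eq_zero (L := L) ?_
    filter_upwards [notMem_near_zero L, (by simpa using mul_notMem_near (L := L) h0 0 :
      ∀ᶠ u in 𝓝[≠] 0, α * u ∉ L.lattice)] with u hu hau
    have hw := L.ω₁_mem_lattice
    have haw := hα _ hw
    have e1 := h u hau
    have e2 := h (u + L.ω₁) (by rw [mul_add]; exact add_notMem L hau haw)
    rw [wp_add L hw, wp'_add L hw, mul_add α u L.ω₁, zeta_add L hau haw, zeta_add L hu hw, hη _ hw] at e2
    have : L.ω₁ * ((C κ * D - B).eval (℘[L] u)) = 0 := by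
      simp only [eval_sub, eval_mul, eval_C]
      linear_combination e2 - e1
    exact (mul_eq_zero.1 this).resolve_left (omega1_ne_zero L)
  have := congrArg (eval (n : ℂ)) hz
  simp only [eval_sub, eval_mul, eval_C, hD1, eval_zero, mul_one] at this
  rw [sub_eq_zero.1 this]
  exact hB.eval hx₀

/-- Values of `ζ` and `℘` at `αz`, for a multiplier `α` of the lattice. -/
lemma cm_value (hF : AC F) (h2 : L.g₂ ∈ F) (h3 : L.g₃ ∈ F)
    {α : ℂ} (hα : ∀ w ∈ L.lattice, α * w ∈ L.lattice) (hZ : ∀ m : ℤ, α ≠ m)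
    {z : ℂ} (haz : α * z ∉ L.lattice) (hzF : z ∈ F) (hζ : zeta L z ∈ F) (hp : ℘[L] z ∈ F) :
    zeta L (α * z) ∈ F ∧ ℘[L] (α * z) ∈ F := by
  obtain ⟨T, N, κ, hN, hq, hα', hη⟩ := cm_data hα hZ
  have h0 : α ≠ 0 := by simpa using hZ 0
  have hz : z ∉ L.lattice := fun h => haz (hα z h)
  have hαF := quadratic_mem hF hq
  have hp' := wp'_mem hF h2 h3 hz hp
  have hTF := sub_mem hαF (intCast_mem F T)
  obtain ⟨D, B, P, Q, hD, hB, hP, hQ, hD1, h⟩ := cm_formula hF h2 h3 h0 hN hq hα hα' hη hp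
    (fun u hu hau e => by
      rcases wp_inj hz hu e.symm with h | h
      · have := sub_mem (hα _ h) hau
        rw [mul_add, add_sub_cancel_right] at this
        exact haz this
      · have := add_mem (hα _ h) hau
        rw [mul_sub, sub_add_cancel] at this
        exact haz this)
  have hζα : zeta L (α * z) ∈ F := by
    have e := h z haz
    rw [hD1, one_mul] at e
    rw [eq_sub_of_add_eq e]
    exact sub_mem (add_mem (add_mem (mul_mem (hB.eval hp) hzF) (hP.eval hp))
      (mul_mem (hQ.eval hp) hp')) (mul_mem hTF hζ)
  refine ⟨hζα, ?_⟩
  have dp := hasDerivAt_wp L hz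
  have dpoly : ∀ R : ℂ[X], HasDerivAt (fun u => R.eval (℘[L] u))
      ((derivative R).eval (℘[L] z) * ℘'[L] z) z := fun R => (R.hasDerivAt _).comp z dp
  have dζα : HasDerivAt (fun u => zeta L (α * u)) (-℘[L] (α * z) * (α * 1)) z :=
    HasDerivAt.comp z (hasDerivAt_zeta L haz) ((hasDerivAt_id z).const_mul α)
  have d1 := (dpoly D).fun_mul (dζα.fun_add ((hasDerivAt_zeta L hz).const_mul (α - T)))
  have d2 := (((dpoly B).fun_mul (hasDerivAt_id z)).fun_add (dpoly P)).fun_add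
    ((dpoly Q).fun_mul (hasDerivAt_wp' hz))
  have heq : (fun u => D.eval (℘[L] u) * (zeta L (α * u) + (α - T) * zeta L u)) =ᶠ[𝓝 z]
      fun u => B.eval (℘[L] u) * id u + P.eval (℘[L] u) + Q.eval (℘[L] u) * ℘'[L] u := by
    have c1 : ∀ᶠ w in 𝓝 z, α * w ∉ L.lattice :=
      (by fun_prop : Continuous fun w => α * w).continuousAt.eventually (compl_mem_nhds L haz)
    filter_upwards [c1] with u hu using h u hu
  have e := d1.unique (d2.congr_of_eventuallyEq heq)
  rw [hD1] at e
  simp only [id] at e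
  have : ℘[L] (α * z) = ((derivative D).eval (℘[L] z) * ℘'[L] z *
      (zeta L (α * z) + (α - T) * zeta L z) + (α - T) * -℘[L] z -
      (((derivative B).eval (℘[L] z) * ℘'[L] z) * z + B.eval (℘[L] z) +
        (derivative P).eval (℘[L] z) * ℘'[L] z +
        ((derivative Q).eval (℘[L] z) * ℘'[L] z * ℘'[L] z +
          Q.eval (℘[L] z) * (6 * ℘[L] z ^ 2 - L.g₂ / 2)))) / α := by
    rw [eq_div_iff h0]
    linear_combination -e
  rw [this]
  have m := fun R (hR : PF F R) => mul_mem (hR.derivative.eval hp) hp'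
  have hpp : 6 * ℘[L] z ^ 2 - L.g₂ / 2 ∈ F :=
    sub_mem (mul_mem (ofNat_mem F 6) (pow_mem hp 2)) (div_mem h2 (ofNat_mem F 2))
  exact div_mem (sub_mem (add_mem (mul_mem (m D hD) (add_mem hζα (mul_mem hTF hζ)))
    (mul_mem hTF (neg_mem hp))) (add_mem (add_mem (add_mem (mul_mem (m B hB) hzF) (hB.eval hp))
    (m P hP)) (add_mem (mul_mem (m Q hQ) hp') (mul_mem (hQ.eval hp) hpp)))) hαF

end

end SemiElliptic

/-! ### The group of good points over an algebraically closed field -/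

namespace SemiElliptic
open Filter Topology Set
open scoped PeriodPair

variable {L : PeriodPair} {F : Subfield ℂ}

/-- `z` is good over `F`: both `z` and the value at `z` of `ζ` and `℘` lie in `F`; when `z` is a
pole, the quasi-period of `z` takes the place of these values. Geometrically, the image of `z`
under the exponential map of `𝔾_a` times the universal vectorial extension of the elliptic curve is
an `F`-rational point. With this convention at the poles, for `F` algebraically closed and
containing the invariants, the good points form a group. -/
def GF (L : PeriodPair) (F : Subfield ℂ) (z : ℂ) : Prop :=
  z ∈ F ∧ (z ∉ L.lattice → zeta L z ∈ F ∧ ℘[L] z ∈ F) ∧ (z ∈ L.lattice → eta L z ∈ F)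

lemma GF.zero : GF L F 0 :=
  ⟨zero_mem F, fun h => absurd (zero_mem _) h, fun _ => by
    have := eta_int_mul L 0 L.ω₁_mem_lattice
    simp only [Int.cast_zero, zero_mul] at this
    rw [this]; exact zero_mem F⟩

lemma GF.neg {z : ℂ} (h : GF L F z) : GF L F (-z) := by
  refine ⟨neg_mem h.1, fun hz => ?_, fun hz => ?_⟩
  · have hz : z ∉ L.lattice := by simpa using hz
    rw [zeta_neg L hz, L.weierstrassP_neg]
    exact ⟨neg_mem (h.2.1 hz).1, (h.2.1 hz).2⟩
  · have hz : z ∈ L.lattice := by simpa using hz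
    rw [eta_neg L hz]
    exact neg_mem (h.2.2 hz)

lemma GF.add_lattice {z w : ℂ} (h : GF L F z) (h' : GF L F w) (hw : w ∈ L.lattice) :
    GF L F (z + w) := by
  refine ⟨add_mem h.1 h'.1, fun hz => ?_, fun hz => ?_⟩
  · have hz : z ∉ L.lattice := by rwa [add_mem_cancel_right hw] at hz
    rw [zeta_add L hz hw, wp_add L hw]
    exact ⟨add_mem (h.2.1 hz).1 (h'.2.2 hw), (h.2.1 hz).2⟩
  · have hz : z ∈ L.lattice := by rwa [add_mem_cancel_right hw] at hz
    rw [eta_add L hz hw]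
    exact add_mem (h.2.2 hz) (h'.2.2 hw)

lemma GF.add (hF : AC F) (h2 : L.g₂ ∈ F) (h3 : L.g₃ ∈ F)
    {u v : ℂ} (h : GF L F u) (h' : GF L F v) : GF L F (u + v) := by
  by_cases hv : v ∈ L.lattice
  · exact h.add_lattice h' hv
  by_cases hu : u ∈ L.lattice
  · rw [add_comm]; exact h'.add_lattice h hu
  obtain ⟨hu1, hu2⟩ := h.2.1 hu
  obtain ⟨hv1, hv2⟩ := h'.2.1 hv
  have hu3 := wp'_mem hF h2 h3 hu hu2
  have hv3 := wp'_mem hF h2 h3 hv hv2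
  refine ⟨add_mem h.1 h'.1, fun huv => ?_, fun huv => ?_⟩
  · by_cases hd : u - v ∈ L.lattice
    · have hη : eta L (u - v) ∈ F := by
        have := zeta_add L hv hd
        rw [add_sub_cancel] at this
        rw [show eta L (u - v) = zeta L u - zeta L v by rw [this]; ring]
        exact sub_mem hu1 hv1
      have huu : u + u ∉ L.lattice := fun h => huv (by simpa using! sub_mem h hd)
      have gd : GF L F (u - v) :=
        ⟨sub_mem h.1 h'.1, fun h => absurd hd h, fun _ => hη⟩
      have guu : GF L F (u + u) := by
        refine ⟨add_mem h.1 h.1, fun _ => ?_, fun h => absurd h huu⟩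
        rw [zeta_dup hu huu, wp_dup hu huu]
        have hs := sub_mem (mul_mem (ofNat_mem F 6) (pow_mem hu2 2)) (div_mem h2 (ofNat_mem F 2))
        refine ⟨add_mem (mul_mem (ofNat_mem F 2) hu1)
          (div_mem (div_mem hs hu3) (ofNat_mem F 2)), sub_mem hu2 (div_mem (div_mem (sub_mem
            (mul_mem (mul_mem (ofNat_mem F 12) hu2) (pow_mem hu3 2)) (pow_mem hs 2))
            (pow_mem hu3 2)) (ofNat_mem F 4))⟩
      have := guu.add_lattice gd.neg (neg_mem hd)
      rw [show u + u + -(u - v) = u + v by ring] at this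
      exact this.2.1 huv
    · rw [zeta_addition hu hv huv hd, wp_addition hu hv huv hd]
      have hs := sub_mem (mul_mem (ofNat_mem F 6) (pow_mem hu2 2)) (div_mem h2 (ofNat_mem F 2))
      have hp := sub_mem hu2 hv2
      have hp' := sub_mem hu3 hv3
      exact ⟨add_mem (add_mem hu1 hv1) (div_mem (div_mem hp' hp) (ofNat_mem F 2)),
        sub_mem hu2 (div_mem (div_mem (sub_mem (mul_mem hs hp) (mul_mem hp' hu3))
          (pow_mem hp 2)) (ofNat_mem F 2))⟩
  · have := zeta_add L (z := -u) (by simpa using hu) huv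
    rw [show -u + (u + v) = v by ring, zeta_neg L hu] at this
    rw [show eta L (u + v) = zeta L v + zeta L u by rw [this]; ring]
    exact add_mem hv1 hu1

lemma GF.int_mul (hF : AC F) (h2 : L.g₂ ∈ F) (h3 : L.g₃ ∈ F)
    {z : ℂ} (h : GF L F z) (m : ℤ) : GF L F (m * z) := by
  have hnat : ∀ n : ℕ, GF L F (n * z) := fun n => by
    induction n with
    | zero => simpa using! GF.zero
    | succ n ih =>
      rw [show ((n + 1 : ℕ) : ℂ) * z = n * z + z by push_cast; ring]
      exact ih.add hF h2 h3 h
  obtain ⟨n, rfl | rfl⟩ := m.eq_nat_or_neg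
  · exact_mod_cast hnat n
  · have := (hnat n).neg
    rw [show -((n : ℂ) * z) = ((-(n : ℤ) : ℤ) : ℂ) * z by push_cast; ring] at this
    exact this

/-- Multipliers of the lattice preserve goodness: by the addition formulas for integers, and by
the complex multiplication formulas otherwise. -/
lemma GF.mul (hF : AC F) (h2 : L.g₂ ∈ F) (h3 : L.g₃ ∈ F)
    {z α : ℂ} (h : GF L F z) (hα : ∀ w ∈ L.lattice, α * w ∈ L.lattice) :
    GF L F (α * z) := by
  by_cases hZ : ∃ m : ℤ, α = m
  · obtain ⟨m, rfl⟩ := hZ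
    exact h.int_mul hF h2 h3 m
  push Not at hZ
  have hreg : ∀ β : ℂ, (∀ w ∈ L.lattice, β * w ∈ L.lattice) → (∀ m : ℤ, β ≠ m) →
      β * z ∉ L.lattice → GF L F (β * z) := fun β hβ hβZ hz => by
    have hz' : z ∉ L.lattice := fun h => hz (hβ z h)
    obtain ⟨T, N, κ, hN, hq, -, -⟩ := cm_data hβ hβZ
    exact ⟨mul_mem (quadratic_mem hF hq) h.1, fun _ => cm_value hF h2 h3 hβ hβZ hz h.1
      (h.2.1 hz').1 (h.2.1 hz').2, fun h => absurd h hz⟩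
  by_cases haz : α * z ∈ L.lattice
  · by_cases hz : z ∈ L.lattice
    · obtain ⟨T, N, κ, hN, hq, hα', hη⟩ := cm_data hα hZ
      have hκ := cm_kappa_mem hF h2 h3 hα hZ hN hq hα' hη
      have hαF := quadratic_mem hF hq
      refine ⟨mul_mem hαF h.1, fun h => absurd haz h, fun _ => ?_⟩
      rw [hη z hz]
      exact add_mem (mul_mem (sub_mem (intCast_mem F T) hαF) (h.2.2 hz)) (mul_mem hκ h.1)
    · have h1 := hreg (α + 1) (fun w hw => by rw [add_mul, one_mul]; exact add_mem (hα w hw) hw)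
        (fun m hm => hZ (m - 1) (by push_cast; rw [← hm]; ring))
        (by rwa [add_mul, one_mul, add_mem_cancel_left haz])
      have := h1.add hF h2 h3 h.neg
      rwa [show (α + 1) * z + -z = α * z by ring] at this
  · exact hreg α hα hZ haz

lemma GF.sum (hF : AC F) (h2 : L.g₂ ∈ F) (h3 : L.g₃ ∈ F)
    {n : ℕ} {p c : Fin n → ℂ} (h : ∀ i, GF L F (p i))
    (hc : ∀ i, ∀ w ∈ L.lattice, c i * w ∈ L.lattice) : GF L F (∑ i, c i * p i) := by
  have : ∀ s : Finset (Fin n), GF L F (∑ i ∈ s, c i * p i) := fun s => by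
    induction s using Finset.induction_on with
    | empty => simpa using! GF.zero
    | insert i s hi ih =>
      rw [Finset.sum_insert hi]
      exact ((h i).mul hF h2 h3 (hc i)).add hF h2 h3 ih
  exact this _

/-- Half periods: their `℘`-values are roots of a polynomial over `ℚ(g₂, g₃)`. -/
lemma GF.half (hF : AC F) (h2 : L.g₂ ∈ F) (h3 : L.g₃ ∈ F)
    {w : ℂ} (hw : w ∈ L.lattice) (hwF : w ∈ F) (hη : eta L w ∈ F)
    (h : w / 2 ∉ L.lattice) : GF L F (w / 2) := by
  refine ⟨div_mem hwF (ofNat_mem F 2), fun _ => ⟨?_, ?_⟩, fun h' => absurd h' h⟩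
  · have : zeta L (w / 2) = eta L w / 2 := by rw [two_mul_zeta_half L hw h]; ring
    rw [this]
    exact div_mem hη (ofNat_mem F 2)
  · have h0 : ℘'[L] (w / 2) = 0 := by
      have e := wp'_add L hw (-(w / 2))
      rw [show -(w / 2) + w = w / 2 by ring, L.derivWeierstrassP_neg] at e
      linear_combination e / 2
    have e := L.derivWeierstrassP_sq _ h
    rw [h0] at e
    refine hF _ ⟨Polynomial.C 4 * Polynomial.X ^ 3 - Polynomial.C ⟨_, h2⟩ * Polynomial.X -
      Polynomial.C ⟨_, h3⟩, fun h => ?_, ?_⟩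
    · have := congrArg (fun q => Polynomial.coeff q 3) h
      simp at this
    · simp only [map_sub, map_mul, map_pow, Polynomial.aeval_X, Polynomial.aeval_C, map_ofNat]
      change (4 : ℂ) * _ - L.g₂ * _ - L.g₃ = 0
      linear_combination -e

end SemiElliptic

/-! ### Transcendence degree as a matroid rank -/

namespace SemiElliptic
open Filter Topology Set
open scoped PeriodPair

/-- The algebraic closure in `ℂ` of the field generated by `S`. -/
def acl (S : Set ℂ) : Subfield ℂ :=
  (algebraicClosure (IntermediateField.adjoin ℚ S) ℂ).toSubfield

/-- The matroid on `ℂ` of algebraic independence over `ℚ`; its rank function is the transcendence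
degree. -/
abbrev trMat : Matroid ℂ := AlgebraicIndependent.matroid ℚ ℂ

lemma acl_eq_closure (S : Set ℂ) : (acl S : Set ℂ) = trMat.closure S := by
  rw [AlgebraicIndependent.matroid_closure_eq]
  ext x
  change x ∈ algebraicClosure (IntermediateField.adjoin ℚ S) ℂ ↔
    IsAlgebraic (Algebra.adjoin ℚ S) x
  rw [mem_algebraicClosure_iff, IntermediateField.isAlgebraic_adjoin_iff]

lemma subset_acl (S : Set ℂ) : S ⊆ acl S := by
  rw [acl_eq_closure]
  exact trMat.subset_closure S (subset_univ _)

lemma AC_acl (S : Set ℂ) : AC (acl S) := fun x hx => by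
  refine mem_algebraicClosure_iff.2 (not_not.1 fun h => ?_)
  exact Transcendental.algebraicClosure (F := IntermediateField.adjoin ℚ S) h hx

lemma acl_le {S T : Set ℂ} (h : S ⊆ acl T) : acl S ≤ acl T := by
  rw [acl_eq_closure] at h
  have : (acl S : Set ℂ) ⊆ acl T := by
    rw [acl_eq_closure, acl_eq_closure]
    exact trMat.closure_subset_closure_of_subset_closure h
  exact this

lemma acl_mono {S T : Set ℂ} (h : S ⊆ T) : acl S ≤ acl T := acl_le (h.trans (subset_acl T))

lemma adjoin_le_acl (S : Set ℂ) {x : ℂ} (h : x ∈ IntermediateField.adjoin ℚ S) : x ∈ acl S :=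
  mem_algebraicClosure_iff.2 (isAlgebraic_algebraMap (⟨x, h⟩ : IntermediateField.adjoin ℚ S))

lemma trdegGe_iff {S : Set ℂ} {d : ℕ} : trdegGe S d ↔ (d : ℕ∞) ≤ trMat.eRk S := by
  constructor
  · rintro ⟨x, hx, hi⟩
    have h1 : trMat.Indep (range x) := by
      rw [AlgebraicIndependent.matroid_indep_iff]
      exact AlgebraicIndependent.to_subtype_range hi
    have h2 : range x ⊆ trMat.closure S := by
      rw [← acl_eq_closure]
      rintro _ ⟨i, rfl⟩
      exact adjoin_le_acl S (hx i)
    have h3 := trMat.eRk_mono h2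
    rw [trMat.eRk_closure_eq, h1.eRk_eq_encard] at h3
    rw [← image_univ, hi.injective.encard_image] at h3
    simpa using h3
  · intro h
    obtain ⟨I, hI, hi, hd⟩ := Matroid.le_eRk_iff.1 h
    have hf : I.Finite := finite_of_encard_eq_coe hd
    have : Finite I := hf
    have hc : Nat.card I = d := by
      rw [Nat.card_coe_set_eq, ncard, hd]; rfl
    let e := (Finite.equivFinOfCardEq hc).symm
    refine ⟨fun i => e i, fun i => IntermediateField.subset_adjoin ℚ S (hI (e i).2), ?_⟩
    exact (AlgebraicIndependent.matroid_indep_iff.1 hi).comp e e.injective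

/-- If `T` is algebraic over the field generated by `S` and `e` further numbers, the transcendence
degree of `S` is at least that of `T` minus `e`. -/
lemma trdegGe.transfer {S T E : Set ℂ} {d e : ℕ} (h : trdegGe T (d + e)) (hE : E.encard ≤ e)
    (hT : T ⊆ acl (S ∪ E)) : trdegGe S d := by
  rw [trdegGe_iff] at h ⊢
  rw [acl_eq_closure] at hT
  have h1 := trMat.eRk_mono hT
  rw [trMat.eRk_closure_eq] at h1
  have h2 := trMat.eRk_union_le_eRk_add_encard S E
  have h3 : ((d + e : ℕ) : ℕ∞) ≤ trMat.eRk S + e :=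
    (h.trans h1).trans (h2.trans (by gcongr))
  push_cast at h3
  exact (ENat.add_le_add_iff_right (ENat.natCast_ne_top e)).1 h3

lemma trdegGe.mono {S : Set ℂ} {d e : ℕ} (h : trdegGe S d) (he : e ≤ d) : trdegGe S e := by
  rw [trdegGe_iff] at h ⊢
  exact le_trans (by exact_mod_cast he) h

end SemiElliptic

/-! ### Linear algebra over the field of endomorphisms -/

namespace SemiElliptic
open Filter Topology Set
open scoped PeriodPair

variable (L : PeriodPair)

lemma mem_endQ {α : ℂ} : α ∈ endQ L.ω₁ L.ω₂ ↔
    ∃ m : ℤ, m ≠ 0 ∧ ∀ w ∈ L.lattice, (m : ℂ) * α * w ∈ L.lattice := by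
  rw [endQ, latticePts_eq]; rfl

/-- The field of endomorphisms of the lattice, as a subfield of `ℂ`. -/
def kF : Subfield ℂ where
  carrier := endQ L.ω₁ L.ω₂
  mul_mem' {a b} ha hb := by
    obtain ⟨m, hm, h⟩ := (mem_endQ L).1 ha
    obtain ⟨n, hn, h'⟩ := (mem_endQ L).1 hb
    refine (mem_endQ L).2 ⟨m * n, mul_ne_zero hm hn, fun w hw => ?_⟩
    have := h _ (h' w hw)
    convert this using 1
    push_cast; ring
  one_mem' := (mem_endQ L).2 ⟨1, one_ne_zero, fun w hw => by simpa using hw⟩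
  add_mem' {a b} ha hb := by
    obtain ⟨m, hm, h⟩ := (mem_endQ L).1 ha
    obtain ⟨n, hn, h'⟩ := (mem_endQ L).1 hb
    refine (mem_endQ L).2 ⟨m * n, mul_ne_zero hm hn, fun w hw => ?_⟩
    have := add_mem (int_mul_mem L n (h _ hw)) (int_mul_mem L m (h' w hw))
    convert this using 1
    push_cast; ring
  zero_mem' := (mem_endQ L).2 ⟨1, one_ne_zero, fun w hw => by simp⟩
  neg_mem' {a} ha := by
    obtain ⟨m, hm, h⟩ := (mem_endQ L).1 ha
    refine (mem_endQ L).2 ⟨m, hm, fun w hw => ?_⟩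
    have := neg_mem (h w hw)
    convert this using 1
    ring
  inv_mem' a ha := by
    obtain ⟨m, hm, h⟩ := (mem_endQ L).1 ha
    have hm' : (m : ℂ) ≠ 0 := by exact_mod_cast hm
    by_cases ha0 : a = 0
    · rw [ha0, inv_zero]
      exact (mem_endQ L).2 ⟨1, one_ne_zero, fun w hw => by simp⟩
    by_cases hZ : ∃ r : ℤ, (m : ℂ) * a = r
    · obtain ⟨r, hr⟩ := hZ
      have hr' : (r : ℂ) ≠ 0 := by rw [← hr]; exact mul_ne_zero hm' ha0
      refine (mem_endQ L).2 ⟨r, by exact_mod_cast hr', fun w hw => ?_⟩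
      rw [← hr, mul_inv_cancel_right₀ ha0]
      exact int_mul_mem L m hw
    · push Not at hZ
      -- the inverse of a quadratic integer is its conjugate divided by its norm
      obtain ⟨T, N, κ, hN, hq, hα', -⟩ := cm_data h hZ
      refine (mem_endQ L).2 ⟨N, hN, fun w hw => ?_⟩
      have := int_mul_mem L m (hα' w hw)
      convert this using 1
      field_simp
      linear_combination w * hq

variable {L}

lemma mem_kF {α : ℂ} : α ∈ kF L ↔ α ∈ endQ L.ω₁ L.ω₂ := Iff.rfl

/-- The subspace `ℚω₁ + ℚω₂`, described as the set of points with a nonzero integral multiple in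
the lattice; it is stable under the field of endomorphisms. -/
def WQ (L : PeriodPair) : Submodule (kF L) ℂ where
  carrier := {x | ∃ m : ℤ, m ≠ 0 ∧ (m : ℂ) * x ∈ L.lattice}
  add_mem' {a b} := by
    rintro ⟨m, hm, h⟩ ⟨n, hn, h'⟩
    refine ⟨m * n, mul_ne_zero hm hn, ?_⟩
    have := add_mem (int_mul_mem L n h) (int_mul_mem L m h')
    convert this using 1
    push_cast; ring
  zero_mem' := ⟨1, one_ne_zero, by simp⟩
  smul_mem' c x := by
    rintro ⟨m, hm, h⟩
    obtain ⟨n, hn, h'⟩ := (mem_endQ L).1 c.2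
    refine ⟨n * m, mul_ne_zero hn hm, ?_⟩
    have := h' _ h
    convert this using 1
    rw [Subfield.smul_def, smul_eq_mul]
    push_cast; ring

lemma mem_WQ {x : ℂ} : x ∈ WQ L ↔ ∃ m : ℤ, m ≠ 0 ∧ (m : ℂ) * x ∈ L.lattice := Iff.rfl

lemma lattice_le_WQ {x : ℂ} (h : x ∈ L.lattice) : x ∈ WQ L := ⟨1, one_ne_zero, by simpa using h⟩

lemma mem_WQ_iff {x : ℂ} : x ∈ WQ L ↔ ∃ a b : ℚ, x = (a : ℂ) * L.ω₁ + (b : ℂ) * L.ω₂ := by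
  constructor
  · rintro ⟨m, hm, h⟩
    obtain ⟨a, b, h⟩ := PeriodPair.mem_lattice.1 h
    have hm' : (m : ℂ) ≠ 0 := by exact_mod_cast hm
    refine ⟨a / m, b / m, ?_⟩
    push_cast
    field_simp
    linear_combination -h
  · rintro ⟨a, b, rfl⟩
    refine ⟨a.den * b.den, by simp, PeriodPair.mem_lattice.2
      ⟨a.num * b.den, b.num * a.den, ?_⟩⟩
    have ha : (a : ℂ) = a.num / a.den := by exact_mod_cast (Rat.num_div_den a).symm
    have hb : (b : ℂ) = b.num / b.den := by exact_mod_cast (Rat.num_div_den b).symm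
    have ha0 : (a.den : ℂ) ≠ 0 := by simp
    have hb0 : (b.den : ℂ) ≠ 0 := by simp
    rw [ha, hb]
    push_cast
    field_simp

lemma rat_mem_kF (a : ℚ) : (a : ℂ) ∈ kF L := SubfieldClass.ratCast_mem (kF L) a

lemma clear_denominators {n : ℕ} {c : Fin n → ℂ} (hc : ∀ i, c i ∈ kF L) :
    ∃ m : ℤ, m ≠ 0 ∧ ∀ i, ∀ w ∈ L.lattice, (m : ℂ) * c i * w ∈ L.lattice := by
  choose m hm h using fun i => (mem_endQ L).1 (hc i)
  refine ⟨∏ i, m i, Finset.prod_ne_zero_iff.2 fun i _ => hm i, fun i w hw => ?_⟩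
  obtain ⟨r, hr⟩ := Finset.dvd_prod_of_mem m (Finset.mem_univ i)
  rw [hr]
  have := int_mul_mem L r (h i w hw)
  convert this using 1
  push_cast; ring

lemma kLinInd_iff {n : ℕ} {p : Fin n → ℂ} :
    kLinInd L.ω₁ L.ω₂ p ↔ LinearIndependent (kF L) p := by
  rw [Fintype.linearIndependent_iff]
  constructor
  · intro h g hg i
    exact Subtype.ext (h (fun i => g i) (fun i => (g i).2) (by simpa [Subfield.smul_def] using hg) i)
  · intro h c hc hs i
    have := h (fun i => ⟨c i, hc i⟩) (by simpa [Subfield.smul_def] using hs) i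
    exact congrArg Subtype.val this

lemma mem_span_iff {n : ℕ} {p : Fin n → ℂ} {x : ℂ} :
    x ∈ Submodule.span (kF L) (range p) ↔
      ∃ c : Fin n → ℂ, (∀ i, c i ∈ endQ L.ω₁ L.ω₂) ∧ x = ∑ i, c i * p i := by
  rw [Submodule.mem_span_range_iff_exists_fun]
  constructor
  · rintro ⟨c, rfl⟩
    exact ⟨fun i => c i, fun i => (c i).2, by simp [Subfield.smul_def]⟩
  · rintro ⟨c, hc, rfl⟩
    exact ⟨fun i => ⟨c i, hc i⟩, by simp [Subfield.smul_def]⟩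

/-- Rank-nullity for the image of a subspace `V` in the quotient by `W`. -/
lemma finrank_map_mkQ {K E : Type*} [Field K] [AddCommGroup E] [Module K E] (V W : Submodule K E)
    [FiniteDimensional K V] :
    Module.finrank K (V.map W.mkQ) + Module.finrank K (V ⊓ W : Submodule K E) =
      Module.finrank K V := by
  have h := LinearMap.finrank_range_add_finrank_ker (W.mkQ.domRestrict V)
  rw [LinearMap.range_domRestrict] at h
  have e : (W.mkQ.domRestrict V).ker = W.comap V.subtype := by
    ext x; simp
  rw [e] at h
  rw [← h]
  congr 1
  have := (Submodule.equivSubtypeMap V (W.comap V.subtype)).finrank_eq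
  rw [this, Submodule.map_comap_subtype]

/-- The dimension modulo `ℚω₁ + ℚω₂` exists and is the dimension of the image in the quotient. -/
lemma iskDimMod_finrank {n : ℕ} (p : Fin n → ℂ) :
    IskDimMod L.ω₁ L.ω₂ p
      (Module.finrank (kF L) ((Submodule.span (kF L) (range p)).map (WQ L).mkQ)) := by
  set V := Submodule.span (kF L) (range p) with hV
  have : FiniteDimensional (kF L) V := FiniteDimensional.span_of_finite _ (finite_range p)
  set b := Module.finBasis (kF L) (V.map (WQ L).mkQ)
  have hb : ∀ j, ∃ q ∈ V, (WQ L).mkQ q = b j := fun j => (b j).2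
  choose q hq hqb using hb
  refine ⟨q, fun j => ?_, fun c hc a b' h j => ?_, fun i => ?_⟩
  · obtain ⟨c, hc, h⟩ := mem_span_iff.1 (hq j)
    exact ⟨c, hc, 0, 0, by simpa using h⟩
  · have h1 : ∑ j, (⟨c j, hc j⟩ : kF L) • b j = 0 := by
      refine Subtype.ext ?_
      have h2 : ∑ j, (⟨c j, hc j⟩ : kF L) • q j ∈ WQ L := by
        refine mem_WQ_iff.2 ⟨a, b', ?_⟩
        rw [← h]; simp [Subfield.smul_def]
      have h3 := (Submodule.Quotient.mk_eq_zero (WQ L)).2 h2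
      rw [← Submodule.mkQ_apply, map_sum] at h3
      simpa [hqb] using h3
    have := Fintype.linearIndependent_iff.1 b.linearIndependent _ h1 j
    exact congrArg Subtype.val this
  · have hp : (WQ L).mkQ (p i) ∈ V.map (WQ L).mkQ :=
      Submodule.mem_map_of_mem (Submodule.subset_span ⟨i, rfl⟩)
    set c := b.repr ⟨_, hp⟩
    have h1 := congrArg Subtype.val (b.sum_repr ⟨_, hp⟩)
    have h2 : p i - ∑ j, c j • q j ∈ WQ L := by
      rw [← Submodule.Quotient.mk_eq_zero, ← Submodule.mkQ_apply, map_sub, map_sum, sub_eq_zero]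
      simp only [map_smul, hqb]
      refine h1.symm.trans ?_
      rw [AddSubmonoidClass.coe_finsetSum]
      rfl
    obtain ⟨a, b', h3⟩ := mem_WQ_iff.1 h2
    refine ⟨fun j => c j, fun j => (c j).2, a, b', ?_⟩
    rw [← h3]
    simp [Subfield.smul_def]

section

variable {s : ℕ} {t : Fin s → ℂ}

/-- The line `2πiℚ`. -/
abbrev piLine : Submodule ℚ ℂ := Submodule.span ℚ ({(2 * Real.pi * Complex.I : ℂ)} : Set ℂ)

lemma qdimMod_eq : qdimMod t =
    Module.finrank ℚ ((Submodule.span ℚ (range t)).map (Submodule.mkQ piLine)) := by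
  rw [qdimMod, Submodule.map_span, ← range_comp]; rfl

lemma le_qdimMod_add_one (ht : LinearIndependent ℚ t) : s ≤ qdimMod t + 1 := by
  have : FiniteDimensional ℚ (Submodule.span ℚ (range t)) :=
    FiniteDimensional.span_of_finite _ (finite_range t)
  have h := finrank_map_mkQ (Submodule.span ℚ (range t)) piLine
  rw [← qdimMod_eq, finrank_span_eq_card ht, Fintype.card_fin] at h
  have h1 : Module.finrank ℚ (Submodule.span ℚ (range t) ⊓ piLine : Submodule ℚ ℂ) ≤ 1 :=
    (Submodule.finrank_mono inf_le_right).trans (finrank_span_singleton two_pi_I_ne_zero).le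
  omega

lemma qdimMod_of_notMem (ht : LinearIndependent ℚ t)
    (hπ : (2 * Real.pi * Complex.I : ℂ) ∉ Submodule.span ℚ (range t)) : qdimMod t = s := by
  have : FiniteDimensional ℚ (Submodule.span ℚ (range t)) :=
    FiniteDimensional.span_of_finite _ (finite_range t)
  have h := finrank_map_mkQ (Submodule.span ℚ (range t)) piLine
  rw [← qdimMod_eq, finrank_span_eq_card ht, Fintype.card_fin] at h
  have h1 : Submodule.span ℚ (range t) ⊓ piLine = ⊥ := by
    rw [← disjoint_iff]
    exact (Submodule.disjoint_span_singleton' two_pi_I_ne_zero).2 hπ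
  rw [h1, finrank_bot] at h
  omega

/-- A family of logarithms contains `qdimMod t` members which together with `2πi` are linearly
independent over `ℚ`. -/
lemma exists_cons_linearIndependent (t : Fin s → ℂ) : ∃ σ : Fin (qdimMod t) → Fin s,
    LinearIndependent ℚ (Fin.cons (2 * Real.pi * Complex.I : ℂ) (t ∘ σ) : Fin (qdimMod t + 1) → ℂ) := by
  set f : Fin s → ℂ ⧸ piLine := fun ℓ => Submodule.Quotient.mk (t ℓ) with hf
  obtain ⟨κ, a, ha, hsp, hli⟩ := exists_linearIndependent' ℚ f
  have : Finite κ := Finite.of_injective a ha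
  have := Fintype.ofFinite κ
  have hc : Fintype.card κ = qdimMod t := by
    rw [qdimMod, ← hf, ← hsp, finrank_span_eq_card hli]
  let e := (Fintype.equivFinOfCardEq hc).symm
  have hli' := hli.comp e e.injective
  have hv : LinearIndependent ℚ (t ∘ a ∘ e) := LinearIndependent.of_comp (Submodule.mkQ piLine) hli'
  refine ⟨a ∘ e, hv.finCons fun h => ?_⟩
  obtain ⟨c, hc⟩ := (Submodule.mem_span_range_iff_exists_fun ℚ).1 h
  have h0 : Submodule.mkQ piLine (2 * Real.pi * Complex.I : ℂ) = 0 :=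
    (Submodule.Quotient.mk_eq_zero _).2 (Submodule.mem_span_singleton_self _)
  rw [← hc, map_sum] at h0
  have h1 := Fintype.linearIndependent_iff.1 hli' c (by simpa using! h0)
  simp only [h1, zero_smul, Finset.sum_const_zero] at hc
  exact two_pi_I_ne_zero hc.symm

end

end SemiElliptic

/-! ### Relations between periods and quasi-periods -/

namespace SemiElliptic
open Filter Topology Set
open scoped PeriodPair

variable {L : PeriodPair}

section Periods

variable {F : Subfield ℂ}

lemma lattice_mem {w : ℂ} (h1 : L.ω₁ ∈ F) (h2 : L.ω₂ ∈ F) (hη1 : eta L L.ω₁ ∈ F)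
    (hη2 : eta L L.ω₂ ∈ F) (hw : w ∈ L.lattice) : w ∈ F ∧ eta L w ∈ F := by
  obtain ⟨m, n, rfl⟩ := PeriodPair.mem_lattice.1 hw
  rw [eta_comb]
  exact ⟨add_mem (mul_mem (intCast_mem F m) h1) (mul_mem (intCast_mem F n) h2),
    add_mem (mul_mem (intCast_mem F m) hη1) (mul_mem (intCast_mem F n) hη2)⟩

lemma legendre_mem_iff {x : ℂ} (hx : x = L.ω₂ * eta L L.ω₁ - L.ω₁ * eta L L.ω₂) :
    x ∈ F ↔ (2 * Real.pi * I : ℂ) ∈ F := by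
  obtain ⟨n, hn, h⟩ := legendre (L := L)
  rw [hx, h]
  have hn' : (n : ℂ) ≠ 0 := by exact_mod_cast hn
  refine ⟨fun h => ?_, fun h => mul_mem (intCast_mem F n) h⟩
  have := div_mem h (intCast_mem F n)
  rwa [mul_div_cancel_left₀ _ hn'] at this

/-- Two lattice vectors `ω₁` and `w`, independent over `ℚ`, and their quasi-periods determine all
periods and quasi-periods. -/
lemma periods_of_left {a b : ℤ} (hb : b ≠ 0) (hw : a * L.ω₁ + b * L.ω₂ ∈ F)
    (hηw : a * eta L L.ω₁ + b * eta L L.ω₂ ∈ F) (h1 : L.ω₁ ∈ F) (hη1 : eta L L.ω₁ ∈ F) :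
    L.ω₂ ∈ F ∧ eta L L.ω₂ ∈ F := by
  have hb' : (b : ℂ) ≠ 0 := by exact_mod_cast hb
  have e1 : L.ω₂ = (a * L.ω₁ + b * L.ω₂ - a * L.ω₁) / b := by field_simp; ring
  have e2 : eta L L.ω₂ = (a * eta L L.ω₁ + b * eta L L.ω₂ - a * eta L L.ω₁) / b := by
    field_simp; ring
  constructor
  · rw [e1]; exact div_mem (sub_mem hw (mul_mem (intCast_mem F a) h1)) (intCast_mem F b)
  · rw [e2]; exact div_mem (sub_mem hηw (mul_mem (intCast_mem F a) hη1)) (intCast_mem F b)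

lemma periods_of_right {a b : ℤ} (ha : a ≠ 0) (hw : a * L.ω₁ + b * L.ω₂ ∈ F)
    (hηw : a * eta L L.ω₁ + b * eta L L.ω₂ ∈ F) (h1 : L.ω₂ ∈ F) (hη1 : eta L L.ω₂ ∈ F) :
    L.ω₁ ∈ F ∧ eta L L.ω₁ ∈ F := by
  have ha' : (a : ℂ) ≠ 0 := by exact_mod_cast ha
  have e1 : L.ω₁ = (a * L.ω₁ + b * L.ω₂ - b * L.ω₂) / a := by field_simp; ring
  have e2 : eta L L.ω₁ = (a * eta L L.ω₁ + b * eta L L.ω₂ - b * eta L L.ω₂) / a := by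
    field_simp; ring
  constructor
  · rw [e1]; exact div_mem (sub_mem hw (mul_mem (intCast_mem F b) h1)) (intCast_mem F a)
  · rw [e2]; exact div_mem (sub_mem hηw (mul_mem (intCast_mem F b) hη1)) (intCast_mem F a)

/-- By the Legendre relation `ω₁`, `2πi` and any nonzero period with its quasi-period determine
`η₁`. -/
lemma eta_of_left {a b : ℤ} (hw0 : a * L.ω₁ + b * L.ω₂ ≠ 0) (hw : a * L.ω₁ + b * L.ω₂ ∈ F)
    (hηw : a * eta L L.ω₁ + b * eta L L.ω₂ ∈ F) (h1 : L.ω₁ ∈ F)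
    (hπ : (2 * Real.pi * I : ℂ) ∈ F) : eta L L.ω₁ ∈ F := by
  have hl := (legendre_mem_iff (L := L) rfl).2 hπ
  have e : eta L L.ω₁ = (b * (L.ω₂ * eta L L.ω₁ - L.ω₁ * eta L L.ω₂) +
      L.ω₁ * (a * eta L L.ω₁ + b * eta L L.ω₂)) / (a * L.ω₁ + b * L.ω₂) := by
    rw [eq_div_iff hw0]; ring
  rw [e]
  exact div_mem (add_mem (mul_mem (intCast_mem F b) hl) (mul_mem h1 hηw)) hw

lemma eta_of_right {a b : ℤ} (hw0 : a * L.ω₁ + b * L.ω₂ ≠ 0) (hw : a * L.ω₁ + b * L.ω₂ ∈ F)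
    (hηw : a * eta L L.ω₁ + b * eta L L.ω₂ ∈ F) (h1 : L.ω₂ ∈ F)
    (hπ : (2 * Real.pi * I : ℂ) ∈ F) : eta L L.ω₂ ∈ F := by
  have hl := (legendre_mem_iff (L := L) rfl).2 hπ
  have e : eta L L.ω₂ = (L.ω₂ * (a * eta L L.ω₁ + b * eta L L.ω₂) -
      a * (L.ω₂ * eta L L.ω₁ - L.ω₁ * eta L L.ω₂)) / (a * L.ω₁ + b * L.ω₂) := by
    rw [eq_div_iff hw0]; ring
  rw [e]
  exact div_mem (sub_mem (mul_mem h1 hηw) (mul_mem (intCast_mem F a) hl)) hw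

/-- In the CM case some multiplier `α` satisfies `αω₁ = aω₁ + bω₂` with `b ≠ 0`. -/
lemma exists_cm (hCM : IsCM L.ω₁ L.ω₂) : ∃ (α : ℂ) (a b : ℤ),
    (∀ w ∈ L.lattice, α * w ∈ L.lattice) ∧ (∀ q : ℚ, α ≠ q) ∧ b ≠ 0 ∧
      α * L.ω₁ = a * L.ω₁ + b * L.ω₂ := by
  obtain ⟨α, hα, hr⟩ := hCM
  obtain ⟨m, hm, h⟩ := (mem_endQ L).1 hα
  have hm' : (m : ℂ) ≠ 0 := by exact_mod_cast hm
  obtain ⟨a, b, hab⟩ := PeriodPair.mem_lattice.1 (h _ L.ω₁_mem_lattice)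
  have hq : ∀ q : ℚ, (m : ℂ) * α ≠ q := fun q hq => hr ⟨q / m, by
    push_cast; rw [← hq]; field_simp⟩
  refine ⟨m * α, a, b, h, hq, ?_, hab.symm⟩
  rintro rfl
  refine hq a (mul_right_cancel₀ (omega1_ne_zero L) ?_)
  rw [← hab]; push_cast; ring

lemma cm_periods (hF : AC F) (h2 : L.g₂ ∈ F) (h3 : L.g₃ ∈ F)
    (hCM : IsCM L.ω₁ L.ω₂) (h1 : L.ω₁ ∈ F) (hη1 : eta L L.ω₁ ∈ F) :
    L.ω₂ ∈ F ∧ eta L L.ω₂ ∈ F := by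
  obtain ⟨α, a, b, hα, -, hb, hab⟩ := exists_cm hCM
  have hg : GF L F L.ω₁ := ⟨h1, fun h => absurd L.ω₁_mem_lattice h, fun _ => hη1⟩
  have hg' := hg.mul hF h2 h3 hα
  have := hg'.2.2 (hα _ L.ω₁_mem_lattice)
  rw [hab, eta_comb] at this
  exact periods_of_left hb (hab ▸ hg'.1) this h1 hη1

/-- In the CM case the Legendre relation and the relation between the quasi-periods express `η₁`
through `ω₁` and `2πi`. -/
lemma cm_eta (hF : AC F) (h2 : L.g₂ ∈ F) (h3 : L.g₃ ∈ F)
    (hCM : IsCM L.ω₁ L.ω₂) (h1 : L.ω₁ ∈ F) (hπ : (2 * Real.pi * I : ℂ) ∈ F) :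
    eta L L.ω₁ ∈ F := by
  obtain ⟨α, a, b, hα, hq, hb, hab⟩ := exists_cm hCM
  have hZ : ∀ m : ℤ, α ≠ m := fun m => by simpa using hq m
  obtain ⟨T, N, κ, hN, hqd, hα', hη⟩ := cm_data hα hZ
  have hκ := cm_kappa_mem hF h2 h3 hα hZ hN hqd hα' hη
  have hαF := quadratic_mem hF hqd
  have hl := (legendre_mem_iff (L := L) rfl).2 hπ
  have e := hη _ L.ω₁_mem_lattice
  rw [hab, eta_comb] at e
  have h0 : 2 * α - T ≠ 0 := fun h => hq (T / 2) (by push_cast; linear_combination h / 2)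
  have w0 := omega1_ne_zero L
  have e2 : eta L L.ω₁ = (b * (L.ω₂ * eta L L.ω₁ - L.ω₁ * eta L L.ω₂) + κ * L.ω₁ ^ 2) /
      (L.ω₁ * (2 * α - T)) := by
    rw [eq_div_iff (mul_ne_zero w0 h0)]
    linear_combination eta L L.ω₁ * hab + L.ω₁ * e
  rw [e2]
  exact div_mem (add_mem (mul_mem (intCast_mem F b) hl) (mul_mem hκ (pow_mem h1 2)))
    (mul_mem h1 (sub_mem (mul_mem (ofNat_mem F 2) hαF) (intCast_mem F T)))

end Periods

/-- The number `2 / [k : ℚ]`, which is the dimension of `ℚω₁ + ℚω₂` over `k`. -/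
def halfDeg (L : PeriodPair) : ℕ := open Classical in if IsCM L.ω₁ L.ω₂ then 1 else 2

lemma cm_omega2_mem (hCM : IsCM L.ω₁ L.ω₂) : ∃ c ∈ kF L, L.ω₂ = c * L.ω₁ := by
  obtain ⟨α, a, b, hα, -, hb, hab⟩ := exists_cm hCM
  have hb' : (b : ℂ) ≠ 0 := by exact_mod_cast hb
  refine ⟨(α - a) / b, div_mem (sub_mem ?_ (intCast_mem _ a)) (intCast_mem _ b), ?_⟩
  · exact (mem_endQ L).2 ⟨1, one_ne_zero, by simpa using hα⟩
  · field_simp; linear_combination -hab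

lemma WQ_eq_span : WQ L = Submodule.span (kF L) {L.ω₁, L.ω₂} := by
  refine le_antisymm (fun x hx => ?_) (Submodule.span_le.2 ?_)
  · obtain ⟨a, b, rfl⟩ := mem_WQ_iff.1 hx
    exact Submodule.mem_span_pair.2 ⟨⟨a, rat_mem_kF a⟩, ⟨b, rat_mem_kF b⟩, rfl⟩
  · rintro _ (rfl | rfl)
    · exact lattice_le_WQ L.ω₁_mem_lattice
    · exact lattice_le_WQ L.ω₂_mem_lattice

instance : FiniteDimensional (kF L) (WQ L) := by
  rw [WQ_eq_span]; exact FiniteDimensional.span_of_finite _ (by simp)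

lemma finrank_WQ_le : Module.finrank (kF L) (WQ L) ≤ halfDeg L := by
  classical
  rw [halfDeg]
  split_ifs with h
  · obtain ⟨c, hc, e⟩ := cm_omega2_mem h
    have : WQ L ≤ Submodule.span (kF L) {L.ω₁} := by
      rw [WQ_eq_span, Submodule.span_le]
      rintro _ (rfl | rfl)
      · exact Submodule.mem_span_singleton_self _
      · exact Submodule.mem_span_singleton.2 ⟨⟨c, hc⟩, e.symm⟩
    exact (Submodule.finrank_mono this).trans (finrank_span_singleton (omega1_ne_zero L)).le
  · rw [WQ_eq_span]
    have := finrank_span_finset_le_card (R := kF L) ({L.ω₁, L.ω₂} : Finset ℂ)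
    rw [Set.finrank, Finset.coe_pair] at this
    exact this.trans Finset.card_le_two

section Kgens

variable {s n : ℕ} {t : Fin s → ℂ} {p : Fin n → ℂ}

lemma g2_mem_Kgens : L.g₂ ∈ Kgens L.ω₁ L.ω₂ t p := by
  rw [← g2_eq]; simp [Kgens]

lemma g3_mem_Kgens : L.g₃ ∈ Kgens L.ω₁ L.ω₂ t p := by
  rw [← g3_eq]; simp [Kgens]

lemma Kgens_GF {F : Subfield ℂ} (h : Kgens L.ω₁ L.ω₂ t p ⊆ F) (hp : ∀ i, p i ∉ L.lattice)
    (i : Fin n) : GF L F (p i) := by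
  refine ⟨h (by simp [Kgens]), fun hz => ⟨h ?_, ?_⟩, fun h' => absurd h' (hp i)⟩
  · exact Or.inr ⟨i, rfl⟩
  · rw [← wP_eq L hz]
    exact h (Or.inl (Or.inr ⟨i, rfl⟩))

lemma Kgens_subset {F : Subfield ℂ} (h2 : L.g₂ ∈ F) (h3 : L.g₃ ∈ F)
    (ht : ∀ i, t i ∈ F ∧ Complex.exp (t i) ∈ F) (hp : ∀ i, p i ∉ L.lattice)
    (hg : ∀ i, GF L F (p i)) : Kgens L.ω₁ L.ω₂ t p ⊆ F := by
  rintro x (((((h | h) | h) | h) | h) | h)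
  · rcases h with rfl | rfl
    · rw [g2_eq]; exact h2
    · rw [g3_eq]; exact h3
  · obtain ⟨i, rfl⟩ := h; exact (ht i).1
  · obtain ⟨i, rfl⟩ := h; exact (ht i).2
  · obtain ⟨i, rfl⟩ := h; exact (hg i).1
  · obtain ⟨i, rfl⟩ := h
    change wP L.ω₁ L.ω₂ (p i) ∈ F
    rw [wP_eq L (hp i)]; exact ((hg i).2.1 (hp i)).2
  · obtain ⟨i, rfl⟩ := h; exact ((hg i).2.1 (hp i)).1

end Kgens

end SemiElliptic

/-! ### The two implications -/

namespace SemiElliptic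
open Filter Topology Set
open scoped PeriodPair

variable {L : PeriodPair}

/-- The set consisting of the basic periods and their quasi-periods. -/
abbrev pers (L : PeriodPair) : Set ℂ := {L.ω₁, L.ω₂, wEta L.ω₁ L.ω₂ L.ω₁, wEta L.ω₁ L.ω₂ L.ω₂}

lemma pers_subset {F : Subfield ℂ} (h1 : L.ω₁ ∈ F ∧ eta L L.ω₁ ∈ F)
    (h2 : L.ω₂ ∈ F ∧ eta L L.ω₂ ∈ F) : pers L ⊆ F := by
  rintro _ (rfl | rfl | rfl | rfl)
  exacts [h1.1, h2.1, h1.2, h2.2]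

lemma halfDeg_cm (h : IsCM L.ω₁ L.ω₂) : halfDeg L = 1 := if_pos h

lemma halfDeg_not_cm (h : ¬ IsCM L.ω₁ L.ω₂) : halfDeg L = 2 := if_neg h

/-- The conjecture (B) with the CM and non-CM cases combined, `4 / [k : ℚ]` being
`2 * halfDeg L`. -/
lemma ellipticoToric_iff : EllipticoToricConj L.ω₁ L.ω₂ ↔
    ∀ (s n : ℕ) (t : Fin s → ℂ) (p : Fin n → ℂ), (∀ i, p i ∉ L.lattice) →
      ∀ dp : ℕ, IskDimMod L.ω₁ L.ω₂ p dp →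
        trdegGe (Kgens L.ω₁ L.ω₂ t p ∪ pers L) (qdimMod t + 2 * halfDeg L + 2 * dp) := by
  rw [EllipticoToricConj, latticePts_eq]
  refine forall₄_congr fun s n t p => forall_congr' fun hp => forall₂_congr fun dp hd => ?_
  by_cases h : IsCM L.ω₁ L.ω₂
  · simp [h, halfDeg_cm h]
  · simp [h, halfDeg_not_cm h]

/-- Lattice points in the `k`-span of good points are themselves good. -/
lemma span_good {n : ℕ} {p : Fin n → ℂ} {F : Subfield ℂ} (hF : AC F) (h2 : L.g₂ ∈ F)
    (h3 : L.g₃ ∈ F) (hg : ∀ i, GF L F (p i)) {w : ℂ} (hw : w ∈ L.lattice)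
    (hV : w ∈ Submodule.span (kF L) (range p)) : w ∈ F ∧ eta L w ∈ F := by
  obtain ⟨c, hc, rfl⟩ := mem_span_iff.1 hV
  obtain ⟨m, hm, h⟩ := clear_denominators hc
  have hm' : (m : ℂ) ≠ 0 := by exact_mod_cast hm
  have g := GF.sum hF h2 h3 hg h
  have e : ∑ i, m * c i * p i = m * ∑ i, c i * p i := by
    rw [Finset.mul_sum]; exact Finset.sum_congr rfl fun i _ => by ring
  rw [e] at g
  have g1 := div_mem g.1 (intCast_mem F m)
  have g2 := div_mem (g.2.2 (int_mul_mem L m hw)) (intCast_mem F m)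
  rw [eta_int_mul L m hw, mul_div_cancel_left₀ _ hm'] at g2
  rw [mul_div_cancel_left₀ _ hm'] at g1
  exact ⟨g1, g2⟩

lemma encard_pair_le_two (x y : ℂ) : ({x, y} : Set ℂ).encard ≤ 2 :=
  (Set.encard_insert_le _ _).trans (by rw [Set.encard_singleton]; norm_num)

/-- All periods and quasi-periods are obtained, up to algebraic closure, by adding to `S` at most
`2(h - r)` elements, where `h = 2 / [k : ℚ]` is the dimension of `ℚω₁ + ℚω₂` and `r` that of its
intersection with `V`. When `2πi` is already available and `r < h`, the Legendre relation saves
one element. The hypothesis `hV` says that lattice points in `V` are available with their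
quasi-periods. -/
lemma exists_extra {S : Set ℂ} (h2 : L.g₂ ∈ acl S) (h3 : L.g₃ ∈ acl S)
    (V : Submodule (kF L) ℂ) (hV : ∀ w ∈ L.lattice, w ∈ V → w ∈ acl S ∧ eta L w ∈ acl S) :
    ∃ (E : Set ℂ) (e : ℕ), E.encard ≤ e ∧ pers L ⊆ acl (S ∪ E) ∧
      e + 2 * Module.finrank (kF L) (V ⊓ WQ L : Submodule (kF L) ℂ) ≤ 2 * halfDeg L ∧
      ((2 * Real.pi * I : ℂ) ∈ acl S → ¬ WQ L ≤ V →
        e + 2 * Module.finrank (kF L) (V ⊓ WQ L : Submodule (kF L) ℂ) + 1 ≤ 2 * halfDeg L) := by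
  set r := Module.finrank (kF L) (V ⊓ WQ L : Submodule (kF L) ℂ) with hr
  have hrle : r ≤ halfDeg L := (Submodule.finrank_mono inf_le_right).trans finrank_WQ_le
  have hup : ∀ {E : Set ℂ} {x : ℂ}, x ∈ acl S → x ∈ acl (S ∪ E) := fun h =>
    acl_mono subset_union_left h
  have hE : ∀ {E : Set ℂ} {x : ℂ}, x ∈ E → x ∈ acl (S ∪ E) := fun h =>
    subset_acl _ (Or.inr h)
  by_cases hWV : WQ L ≤ V
  · -- all periods lie in `V`
    refine ⟨∅, 0, by simp, ?_, by omega, fun _ h => absurd hWV h⟩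
    have e1 := hV _ L.ω₁_mem_lattice (hWV (lattice_le_WQ L.ω₁_mem_lattice))
    have e2 := hV _ L.ω₂_mem_lattice (hWV (lattice_le_WQ L.ω₂_mem_lattice))
    exact pers_subset ⟨hup e1.1, hup e1.2⟩ ⟨hup e2.1, hup e2.2⟩
  have hrlt : r < halfDeg L := by
    by_contra hle
    push Not at hle
    have : V ⊓ WQ L = WQ L := Submodule.eq_of_le_of_finrank_le inf_le_right
      (finrank_WQ_le.trans hle)
    exact hWV (inf_eq_right.1 this)
  by_cases hCM : IsCM L.ω₁ L.ω₂
  · rw [halfDeg_cm hCM] at hrlt ⊢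
    have hall : ∀ {E : Set ℂ}, L.ω₁ ∈ acl (S ∪ E) → eta L L.ω₁ ∈ acl (S ∪ E) →
        pers L ⊆ acl (S ∪ E) := fun h h' =>
      pers_subset ⟨h, h'⟩ (cm_periods (AC_acl _) (hup h2) (hup h3) hCM h h')
    by_cases hπ : (2 * Real.pi * I : ℂ) ∈ acl S
    · refine ⟨{L.ω₁}, 1, by simp, hall (hE (by simp)) ?_, by omega, fun _ _ => by omega⟩
      exact cm_eta (AC_acl _) (hup h2) (hup h3) hCM (hE (by simp)) (hup hπ)
    · exact ⟨{L.ω₁, eta L L.ω₁}, 2, encard_pair_le_two _ _, hall (hE (by simp)) (hE (by simp)),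
        by omega, fun h => absurd h hπ⟩
  · rw [halfDeg_not_cm hCM] at hrlt ⊢
    obtain hr0 | hr1 : r = 0 ∨ r = 1 := by omega
    · -- `V` contains no nonzero period
      by_cases hπ : (2 * Real.pi * I : ℂ) ∈ acl S
      · refine ⟨{L.ω₁, L.ω₂, eta L L.ω₁}, 3, ?_, ?_, by omega, fun _ _ => by omega⟩
        · exact (encard_insert_le _ _).trans
            ((add_le_add_left (encard_pair_le_two _ _) 1).trans (by norm_num))
        · have hl := (legendre_mem_iff (L := L) rfl).2
            (hup (E := {L.ω₁, L.ω₂, eta L L.ω₁}) hπ)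
          have m1 : L.ω₁ ∈ acl (S ∪ {L.ω₁, L.ω₂, eta L L.ω₁}) := hE (by simp)
          have m2 : L.ω₂ ∈ acl (S ∪ {L.ω₁, L.ω₂, eta L L.ω₁}) := hE (by simp)
          have m3 : eta L L.ω₁ ∈ acl (S ∪ {L.ω₁, L.ω₂, eta L L.ω₁}) := hE (by simp)
          refine pers_subset ⟨m1, m3⟩ ⟨m2, ?_⟩
          have := div_mem (sub_mem (mul_mem m2 m3) hl) m1
          rwa [sub_sub_cancel, mul_div_cancel_left₀ _ (omega1_ne_zero L)] at this
      · refine ⟨pers L, 4, ?_, fun x hx => hE hx, by omega, fun h => absurd h hπ⟩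
        refine (encard_insert_le _ _).trans ?_
        refine (add_le_add_left (encard_insert_le _ _) 1).trans ?_
        refine (add_le_add_left (add_le_add_left (encard_pair_le_two _ _) 1) 1).trans (by norm_num)
    · -- `V` contains the multiples of a single lattice vector `w`, up to rational scalars
      obtain ⟨w, hw, hwV, hw0⟩ : ∃ w ∈ L.lattice, w ∈ V ∧ w ≠ 0 := by
        have hne : V ⊓ WQ L ≠ ⊥ := fun h => by
          rw [hr, h, finrank_bot] at hr1; omega
        obtain ⟨x, hx, hx0⟩ := Submodule.exists_mem_ne_zero_of_ne_bot hne
        obtain ⟨m, hm, hmx⟩ := hx.2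
        exact ⟨m * x, hmx, V.smul_mem (m : kF L) hx.1,
          mul_ne_zero (by exact_mod_cast hm) hx0⟩
      obtain ⟨gw, gη⟩ := hV w hw hwV
      obtain ⟨a, b, rfl⟩ := PeriodPair.mem_lattice.1 hw
      rw [eta_comb] at gη
      by_cases hb : b = 0
      · have ha : a ≠ 0 := by
          rintro rfl; simp [hb] at hw0
        have hall : ∀ {E : Set ℂ}, L.ω₂ ∈ acl (S ∪ E) → eta L L.ω₂ ∈ acl (S ∪ E) →
            pers L ⊆ acl (S ∪ E) := fun h h' =>
          pers_subset (periods_of_right ha (hup gw) (hup gη) h h') ⟨h, h'⟩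
        by_cases hπ : (2 * Real.pi * I : ℂ) ∈ acl S
        · refine ⟨{L.ω₂}, 1, by simp, hall (hE (by simp)) ?_, by omega, fun _ _ => by omega⟩
          exact eta_of_right hw0 (hup gw) (hup gη) (hE (by simp)) (hup hπ)
        · exact ⟨{L.ω₂, eta L L.ω₂}, 2, encard_pair_le_two _ _, hall (hE (by simp)) (hE (by simp)),
            by omega, fun h => absurd h hπ⟩
      · have hall : ∀ {E : Set ℂ}, L.ω₁ ∈ acl (S ∪ E) → eta L L.ω₁ ∈ acl (S ∪ E) →
            pers L ⊆ acl (S ∪ E) := fun h h' =>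
          pers_subset ⟨h, h'⟩ (periods_of_left hb (hup gw) (hup gη) h h')
        by_cases hπ : (2 * Real.pi * I : ℂ) ∈ acl S
        · refine ⟨{L.ω₁}, 1, by simp, hall (hE (by simp)) ?_, by omega, fun _ _ => by omega⟩
          exact eta_of_left hw0 (hup gw) (hup gη) (hE (by simp)) (hup hπ)
        · exact ⟨{L.ω₁, eta L L.ω₁}, 2, encard_pair_le_two _ _, hall (hE (by simp)) (hE (by simp)),
            by omega, fun h => absurd h hπ⟩

/-- (B) implies (A). By (B) the periods, quasi-periods and the field `K` together have transcendence
degree at least `d_t + 2h + 2d_p`; by `exists_extra` at most `2(h - r)` of it comes from the periods,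
while `d_p = n - r` and `d_t ≥ s - 1`. In the non-exceptional case the missing `1` is recovered
either from `d_t = s` or from the Legendre relation. -/
lemma ellipticoToric_imp (hB : EllipticoToricConj L.ω₁ L.ω₂) :
    SplitSemiEllipticConj L.ω₁ L.ω₂ := by
  rw [ellipticoToric_iff] at hB
  rw [SplitSemiEllipticConj, latticePts_eq]
  intro s n t p ht hp hk
  have hp : ∀ i, p i ∉ L.lattice := hp
  rw [kLinInd_iff] at hk
  set S := Kgens L.ω₁ L.ω₂ t p with hS
  set V := Submodule.span (kF L) (range p) with hVdef
  have : FiniteDimensional (kF L) V := FiniteDimensional.span_of_finite _ (finite_range p)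
  have hSF := subset_acl S
  have h2 : L.g₂ ∈ acl S := hSF g2_mem_Kgens
  have h3 : L.g₃ ∈ acl S := hSF g3_mem_Kgens
  have hg := Kgens_GF hSF hp
  obtain ⟨E, e, hE, hper, he1, he2⟩ := exists_extra h2 h3 V
    (fun w hw hwV => span_good (AC_acl S) h2 h3 hg hw hwV)
  have hdim := finrank_map_mkQ V (WQ L)
  rw [hVdef, finrank_span_eq_card hk, Fintype.card_fin, ← hVdef] at hdim
  have hT := hB s n t p hp _ (iskDimMod_finrank p)
  have hsub : Kgens L.ω₁ L.ω₂ t p ∪ pers L ⊆ acl (S ∪ E) :=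
    union_subset (fun x hx => acl_mono subset_union_left (hSF hx)) hper
  -- `hdim` reads `d_p + r = n`
  have hgoal : ∀ d, d + e ≤ qdimMod t + 2 * halfDeg L + 2 *
      Module.finrank (kF L) (V.map (WQ L).mkQ) → trdegGe S d := fun d hd =>
    trdegGe.transfer (trdegGe.mono hT hd) hE hsub
  have hexc : (2 * Real.pi * I : ℂ) ∈ Submodule.span ℚ (range t) → WQ L ≤ V →
      ExceptionalCase L.ω₁ L.ω₂ t p := fun hπ hW => by
    rw [ExceptionalCase, latticePts_eq]
    exact ⟨hπ, fun w hw => mem_span_iff.1 (hW (lattice_le_WQ hw))⟩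
  have hq := le_qdimMod_add_one ht
  refine ⟨fun hne => hgoal _ ?_, fun _ => hgoal _ ?_⟩
  · by_cases hπ : (2 * Real.pi * I : ℂ) ∈ Submodule.span ℚ (range t)
    · have hπF : (2 * Real.pi * I : ℂ) ∈ acl S := by
        obtain ⟨c, hc⟩ := (Submodule.mem_span_range_iff_exists_fun ℚ).1 hπ
        rw [← hc]
        refine sum_mem fun i _ => ?_
        rw [Rat.smul_def]
        exact mul_mem (SubfieldClass.ratCast_mem _ _) (hSF (by simp [hS, Kgens]))
      have := he2 hπF fun hW => hne (hexc hπ hW)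
      omega
    · have := qdimMod_of_notMem ht hπ
      omega
  · omega

/-- Half periods completing a family to one whose `k`-span contains the lattice: one of them
suffices in the CM case. -/
lemma exists_half : ∃ h : Fin (halfDeg L) → ℂ, LinearIndependent (kF L) h ∧
    ∀ i, h i ∉ L.lattice ∧ h i ∈ WQ L ∧ ∀ F : Subfield ℂ, AC F → L.g₂ ∈ F → L.g₃ ∈ F →
      pers L ⊆ F → GF L F (h i) := by
  have good1 : ∀ F : Subfield ℂ, AC F → L.g₂ ∈ F → L.g₃ ∈ F → pers L ⊆ F →
      GF L F (L.ω₁ / 2) := fun F hF h2 h3 hp =>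
    GF.half hF h2 h3 L.ω₁_mem_lattice (hp (by simp)) (hp (by simp [eta]))
      L.ω₁_div_two_notMem_lattice
  have good2 : ∀ F : Subfield ℂ, AC F → L.g₂ ∈ F → L.g₃ ∈ F → pers L ⊆ F →
      GF L F (L.ω₂ / 2) := fun F hF h2 h3 hp =>
    GF.half hF h2 h3 L.ω₂_mem_lattice (hp (by simp)) (hp (by simp [eta]))
      L.ω₂_div_two_notMem_lattice
  have hW : ∀ w ∈ L.lattice, w / 2 ∈ WQ L := fun w hw =>
    ⟨2, two_ne_zero, by convert hw using 1; push_cast; ring⟩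
  have w1 := hW _ L.ω₁_mem_lattice
  have w2 := hW _ L.ω₂_mem_lattice
  by_cases hCM : IsCM L.ω₁ L.ω₂
  · rw [halfDeg_cm hCM]
    refine ⟨fun _ => L.ω₁ / 2, ?_, fun _ => ⟨L.ω₁_div_two_notMem_lattice, w1, good1⟩⟩
    rw [Fintype.linearIndependent_iff]
    intro g hg i
    rw [Fin.sum_univ_one] at hg
    have := (smul_eq_zero.1 hg).resolve_right (div_ne_zero (omega1_ne_zero L) two_ne_zero)
    rwa [Subsingleton.elim i 0]
  · rw [halfDeg_not_cm hCM]
    refine ⟨![L.ω₁ / 2, L.ω₂ / 2], ?_, fun i => ?_⟩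
    · rw [LinearIndependent.pair_iff]
      intro a b hab
      have hrat : ∀ c : kF L, ∃ q : ℚ, (q : ℂ) = c := fun c => by
        by_contra h
        exact hCM ⟨c, c.2, fun ⟨q, hq⟩ => h ⟨q, hq⟩⟩
      obtain ⟨q, hq⟩ := hrat a
      obtain ⟨q', hq'⟩ := hrat b
      have hind := LinearIndependent.pair_iff.1 L.indep (q : ℝ) (q' : ℝ) (by
        rw [Subfield.smul_def, Subfield.smul_def, ← hq, ← hq'] at hab
        simp only [smul_eq_mul] at hab
        simp only [real_smul, ofReal_ratCast]
        linear_combination 2 * hab)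
      constructor
      · refine Subtype.ext ?_
        rw [← hq]; exact_mod_cast hind.1
      · refine Subtype.ext ?_
        rw [← hq']; exact_mod_cast hind.2
    · fin_cases i
      · exact ⟨L.ω₁_div_two_notMem_lattice, w1, good1⟩
      · exact ⟨L.ω₂_div_two_notMem_lattice, w2, good2⟩

/-- (A) implies (B). Apply (A) to `2πi` and a basis of the `tᵢ` modulo `2πiℚ`, together with a basis
of the `pᵢ` modulo `ℚω₁ + ℚω₂`, scaled by integers, and half periods spanning `ℚω₁ + ℚω₂` over `k`.
All their values are algebraic over `K(ω₁, ω₂, η₁, η₂)`. The number of generators, `1 + d_t` and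
`d_p + h`, makes even the exceptional bound `(1 + d_t) + 2(d_p + h) - 1` sufficient. -/
lemma splitSemiElliptic_imp (hA : SplitSemiEllipticConj L.ω₁ L.ω₂) :
    EllipticoToricConj L.ω₁ L.ω₂ := by
  rw [ellipticoToric_iff]
  rw [SplitSemiEllipticConj, latticePts_eq] at hA
  rintro s n t p hp dp ⟨q, hqp, hqi, -⟩
  set S := Kgens L.ω₁ L.ω₂ t p ∪ pers L with hS
  set F := acl S with hFdef
  have hSF : S ⊆ F := subset_acl S
  have hF : AC F := AC_acl S
  have h2 : L.g₂ ∈ F := hSF (Or.inl g2_mem_Kgens)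
  have h3 : L.g₃ ∈ F := hSF (Or.inl g3_mem_Kgens)
  have hper : pers L ⊆ F := fun x hx => hSF (Or.inr hx)
  have hg := Kgens_GF (fun x hx => hSF (Or.inl hx)) hp
  have e1 : L.ω₁ ∈ F := hper (by simp)
  have e2 : L.ω₂ ∈ F := hper (by simp)
  have e3 : eta L L.ω₁ ∈ F := hper (by simp [eta])
  have e4 : eta L L.ω₂ ∈ F := hper (by simp [eta])
  -- integral multiples of the `q j` are integral combinations of the `p i` and the periods
  have hD : ∀ j, ∃ D : ℤ, D ≠ 0 ∧ GF L F (D * q j) := fun j => by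
    obtain ⟨c, hc, a, b, hj⟩ := hqp j
    obtain ⟨m, hm, h⟩ := clear_denominators hc
    obtain ⟨m', hm', h'⟩ := mem_WQ_iff.2 ⟨a, b, rfl⟩
    refine ⟨m * m', mul_ne_zero hm hm', ?_⟩
    have g1 := (GF.sum hF h2 h3 hg h).int_mul hF h2 h3 m'
    obtain ⟨k1, k2⟩ := lattice_mem e1 e2 e3 e4 h'
    have g2 := (show GF L F _ from ⟨k1, fun h => absurd h' h, fun _ => k2⟩).int_mul hF h2 h3 m
    have := g1.add hF h2 h3 g2
    convert this using 1
    have e : ∑ i, m * c i * p i = m * ∑ i, c i * p i := by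
      rw [Finset.mul_sum]; exact Finset.sum_congr rfl fun i _ => by ring
    rw [hj, e]
    push_cast; ring
  choose D hD0 hDg using hD
  have hqW : ∀ c : Fin dp → ℂ, (∀ j, c j ∈ kF L) → ∑ j, c j * q j ∈ WQ L → ∀ j, c j = 0 :=
    fun c hc hw => by
      obtain ⟨a, b, h⟩ := mem_WQ_iff.1 hw
      exact hqi c hc a b h
  obtain ⟨h, hhi, hh⟩ := exists_half (L := L)
  obtain ⟨σ, hσ⟩ := exists_cons_linearIndependent t
  set p' : Fin (dp + halfDeg L) → ℂ := Fin.append (fun j => D j * q j) h with hp'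
  set t' : Fin (qdimMod t + 1) → ℂ := Fin.cons (2 * Real.pi * I : ℂ) (t ∘ σ) with ht'
  -- a multiple `D j * q j` in the lattice would make `q j` vanish modulo `ℚω₁ + ℚω₂`
  have hp'L : ∀ i, p' i ∉ L.lattice := fun i => by
    refine Fin.addCases (fun j => ?_) (fun j => ?_) i
    · rw [hp', Fin.append_left]
      intro hmem
      have hs : ∑ i, (Pi.single j (1 : ℂ) : Fin dp → ℂ) i * q i = q j := by
        simp [Pi.single_apply]
      have := hqW (Pi.single j 1) (fun i => by
        by_cases hij : i = j
        · subst hij; simpa using one_mem (kF L)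
        · simpa [hij] using zero_mem (kF L)) (by rw [hs]; exact ⟨D j, hD0 j, hmem⟩) j
      simp at this
    · rw [hp', Fin.append_right]
      exact (hh j).1
  have hp'g : ∀ i, GF L F (p' i) := fun i => by
    refine Fin.addCases (fun j => ?_) (fun j => ?_) i
    · rw [hp', Fin.append_left]; exact hDg j
    · rw [hp', Fin.append_right]; exact (hh j).2.2 F hF h2 h3 hper
  have hp'k : kLinInd L.ω₁ L.ω₂ p' := by
    intro c hc hs
    rw [Fin.sum_univ_add] at hs
    simp only [hp', Fin.append_left, Fin.append_right] at hs
    have hw : ∑ j, c (Fin.natAdd dp j) * h j ∈ WQ L := sum_mem fun j _ =>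
      (WQ L).smul_mem (⟨_, hc (Fin.natAdd dp j)⟩ : kF L) (hh j).2.1
    have hl : ∀ j, c (Fin.castAdd _ j) * D j = 0 :=
      hqW _ (fun j => mul_mem (hc _) (intCast_mem _ _)) (by
        have : ∑ j, c (Fin.castAdd _ j) * D j * q j = -∑ j, c (Fin.natAdd dp j) * h j := by
          rw [← eq_neg_iff_add_eq_zero] at hs
          rw [← hs]; exact Finset.sum_congr rfl fun j _ => by ring
        rw [this]; exact neg_mem hw)
    have hl' : ∀ j, c (Fin.castAdd (halfDeg L) j) = 0 := fun j =>
      (mul_eq_zero.1 (hl j)).resolve_right (by exact_mod_cast hD0 j)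
    simp only [hl', zero_mul, Finset.sum_const_zero, zero_add] at hs
    have hr := Fintype.linearIndependent_iff.1 hhi
      (fun j => (⟨_, hc (Fin.natAdd dp j)⟩ : kF L)) hs
    refine fun i => Fin.addCases hl' (fun j => ?_) i
    exact congrArg Subtype.val (hr j)
  have ht'F : ∀ i, t' i ∈ F ∧ Complex.exp (t' i) ∈ F := fun i => by
    refine Fin.cases ?_ (fun j => ?_) i
    · rw [ht', Fin.cons_zero, Complex.exp_two_pi_mul_I]
      exact ⟨(legendre_mem_iff (L := L) rfl).1 (sub_mem (mul_mem e2 e3) (mul_mem e1 e4)),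
        one_mem F⟩
    · rw [ht', Fin.cons_succ]
      exact ⟨hSF (Or.inl (by simp [Kgens])), hSF (Or.inl (by simp [Kgens]))⟩
  have hsub : Kgens L.ω₁ L.ω₂ t' p' ⊆ acl (S ∪ ∅) := by
    rw [union_empty]
    exact Kgens_subset h2 h3 ht'F hp'L hp'g
  have hmain := hA _ _ t' p' hσ hp'L hp'k
  have hge : trdegGe (Kgens L.ω₁ L.ω₂ t' p')
      (qdimMod t + 2 * halfDeg L + 2 * dp + 0) := by
    by_cases hex : ExceptionalCase L.ω₁ L.ω₂ t' p'
    · exact trdegGe.mono (hmain.2 hex) (by omega)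
    · exact trdegGe.mono (hmain.1 hex) (by omega)
  exact trdegGe.transfer hge (by simp) hsub

end SemiElliptic

/-- **Theorem.** The Split Semi-Elliptic Conjecture is equivalent to the Elliptico-Toric
Conjecture. -/
theorem splitSemiElliptic_iff_ellipticoToric (ω₁ ω₂ : ℂ) (hΩ : IsLatticeBasis ω₁ ω₂) :
    SplitSemiEllipticConj ω₁ ω₂ ↔ EllipticoToricConj ω₁ ω₂ :=
  ⟨fun h => SemiElliptic.splitSemiElliptic_imp (L := ⟨ω₁, ω₂, hΩ⟩) h,
    fun h => SemiElliptic.ellipticoToric_imp (L := ⟨ω₁, ω₂, hΩ⟩) h⟩
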